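/- arXiv:2407.19693 — 12 statements merged into one kernel-verified Lean document; each statement's English description precedes it below -/
import Mathlib

section
/- For every integer d ≥ 2 there exists N such that for all n ≥ N the following holds: if F is a family of m ≥ 1 distinct d-element subsets of [n] = {1,…,n}, then F has a transversal of size at most n + 1 − (1/e)·n·m^{−1/d}; that is, T(F) ≤ n + 1 − (1/e)·n·m^{−1/d}. -/
/-- `S` is a transversal of the family `F` of subsets of `[n] = {1,…,n}`:
`S ⊆ [n]` and `S` meets every member of `F`. -/
def IsTransversal (n : ℕ) (F : Finset (Finset ℕ)) (S : Finset ℕ) : Prop :=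
  S ⊆ Finset.Icc 1 n ∧ ∀ e ∈ F, (S ∩ e).Nonempty

/-- The transversal number of `F`: the minimum cardinality of a transversal. -/
noncomputable def transversalNumber (n : ℕ) (F : Finset (Finset ℕ)) : ℕ :=
  sInf {c : ℕ | ∃ S : Finset ℕ, IsTransversal n F S ∧ S.card = c}

/-- The probability that a random subset of `A` contains `e` is `p ^ |e|`. -/
lemma prob_contains (A : Finset ℕ) (p : ℝ) (e : Finset ℕ) (he : e ⊆ A) :
    ∑ t ∈ A.powerset, ((∏ _i ∈ t, p) * ∏ _i ∈ A \ t, (1 - p)) * (if e ⊆ t then 1 else 0)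
      = p ^ e.card := by
  have h := Finset.prod_add (fun _ : ℕ => p) (fun i => if i ∈ e then 0 else 1 - p) A
  have h1 : ∏ i ∈ A, (p + (if i ∈ e then 0 else 1 - p)) = p ^ e.card := by
    have : ∀ i ∈ A, (p + (if i ∈ e then 0 else 1 - p)) = if i ∈ e then p else 1 := by
      intro i _
      split_ifs <;> ring
    rw [Finset.prod_congr rfl this, Finset.prod_ite_mem, Finset.inter_eq_right.2 he,
      Finset.prod_const]
  rw [← h1, h]
  refine Finset.sum_congr rfl fun t _ => ?_
  rw [mul_assoc]
  congr 1
  split_ifs with hs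
  · rw [mul_one]
    refine Finset.prod_congr rfl fun i hi => ?_
    have : i ∉ e := fun hie => (Finset.mem_sdiff.1 hi).2 (hs hie)
    simp [this]
  · obtain ⟨x, hx, hxt⟩ := Finset.not_subset.1 hs
    rw [mul_zero, Finset.prod_eq_zero (Finset.mem_sdiff.2 ⟨he hx, hxt⟩)]
    simp [hx]

/-- First moment method: some subset beats the average. -/
lemma exists_good (A : Finset ℕ) (p : ℝ) (hp0 : 0 ≤ p) (hp1 : p ≤ 1) (d : ℕ)
    (F : Finset (Finset ℕ)) (hF : ∀ e ∈ F, e ⊆ A ∧ e.card = d) :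
    ∃ U ⊆ A, p * A.card - F.card * p ^ d ≤ (U.card : ℝ) - ((F.filter (· ⊆ U)).card : ℝ) := by
  set w : Finset ℕ → ℝ := fun t => (∏ _i ∈ t, p) * ∏ _i ∈ A \ t, (1 - p) with hw
  have hw0 : ∀ t, 0 ≤ w t := fun t =>
    mul_nonneg (Finset.prod_nonneg fun _ _ => hp0) (Finset.prod_nonneg fun _ _ => by linarith)
  have hw1 : ∑ t ∈ A.powerset, w t = 1 := by
    simpa [hw] using prob_contains A p ∅ (by simp)
  have hU : ∑ t ∈ A.powerset, w t * (t.card : ℝ) = p * A.card := by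
    have : ∀ t ∈ A.powerset, w t * (t.card : ℝ)
        = ∑ x ∈ A, w t * (if ({x} : Finset ℕ) ⊆ t then 1 else 0) := by
      intro t ht
      rw [← Finset.mul_sum]
      simp [Finset.inter_eq_right.2 (Finset.mem_powerset.1 ht)]
    rw [Finset.sum_congr rfl this, Finset.sum_comm,
      Finset.sum_congr rfl fun x hx => prob_contains A p {x} (by simpa using hx)]
    simp [mul_comm]
  have hE : ∑ t ∈ A.powerset, w t * ((F.filter (· ⊆ t)).card : ℝ) = F.card * p ^ d := by
    have : ∀ t ∈ A.powerset, w t * ((F.filter (· ⊆ t)).card : ℝ)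
        = ∑ e ∈ F, w t * (if e ⊆ t then 1 else 0) := by
      intro t ht
      rw [← Finset.mul_sum]
      simp
    rw [Finset.sum_congr rfl this, Finset.sum_comm,
      Finset.sum_congr rfl fun e he => prob_contains A p e (hF e he).1,
      Finset.sum_congr rfl fun e he => by rw [(hF e he).2]]
    simp
  by_contra! hcon
  set c := p * A.card - F.card * p ^ d with hc
  have hsum : ∑ t ∈ A.powerset, w t * (c - ((t.card : ℝ) - ((F.filter (· ⊆ t)).card : ℝ))) = 0 := by
    simp only [mul_sub, Finset.sum_sub_distrib, ← Finset.sum_mul]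
    rw [hw1, hU, hE]
    ring
  have hz := (Finset.sum_eq_zero_iff_of_nonneg (fun t ht => mul_nonneg (hw0 t)
    (sub_nonneg.2 (hcon t (Finset.mem_powerset.1 ht)).le))).1 hsum
  have : ∑ t ∈ A.powerset, w t = 0 := by
    refine Finset.sum_eq_zero fun t ht => ?_
    rcases mul_eq_zero.1 (hz t ht) with h | h
    · exact h
    · have := hcon t (Finset.mem_powerset.1 ht)
      linarith
  linarith

theorem stmt_0 (d : ℕ) (hd : 2 ≤ d) :
    ∃ N : ℕ, ∀ n : ℕ, N ≤ n →
      ∀ F : Finset (Finset ℕ), (∀ e ∈ F, e ⊆ Finset.Icc 1 n ∧ e.card = d) →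
        F.Nonempty →
        (transversalNumber n F : ℝ) ≤
          (n : ℝ) + 1 - (1 / Real.exp 1) * (n : ℝ) * (F.card : ℝ) ^ (-(1 / (d : ℝ))) := by
  refine ⟨0, fun n _ F hF hne => ?_⟩
  have hm : (1 : ℝ) ≤ F.card := by exact_mod_cast hne.card_pos
  have hd0 : (d : ℝ) ≠ 0 := by positivity
  set p : ℝ := (F.card : ℝ) ^ (-(1 / (d : ℝ))) with hp
  have hp0 : 0 ≤ p := by positivity
  have hp1 : p ≤ 1 := Real.rpow_le_one_of_one_le_of_nonpos hm (by
    rw [neg_nonpos]; positivity)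
  have hpd : (F.card : ℝ) * p ^ d = 1 := by
    rw [hp, ← Real.rpow_natCast, ← Real.rpow_mul (by linarith)]
    have : -(1 / (d : ℝ)) * d = -1 := by field_simp
    rw [this, Real.rpow_neg_one]
    field_simp
  obtain ⟨U, hUA, hU⟩ := exists_good (Finset.Icc 1 n) p hp0 hp1 d F hF
  rw [hpd, Nat.card_Icc, Nat.add_sub_cancel] at hU
  have hpick : ∀ e : Finset ℕ, ∃ x, e ∈ F → x ∈ e := by
    intro e
    by_cases he : e ∈ F
    · have : e.Nonempty := Finset.card_pos.1 (by rw [(hF e he).2]; omega)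
      exact ⟨this.choose, fun _ => this.choose_spec⟩
    · exact ⟨0, fun h => absurd h he⟩
  choose f hf using hpick
  set S := (Finset.Icc 1 n \ U) ∪ (F.filter (· ⊆ U)).image f with hS
  have hT : IsTransversal n F S := by
    refine ⟨?_, ?_⟩
    · refine Finset.union_subset Finset.sdiff_subset ?_
      intro x hx
      obtain ⟨e, he, rfl⟩ := Finset.mem_image.1 hx
      have he' := (Finset.mem_filter.1 he).1
      exact (hF e he').1 (hf e he')
    · intro e he
      by_cases h : e ⊆ U
      · exact ⟨f e, Finset.mem_inter.2 ⟨Finset.mem_union_right _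
          (Finset.mem_image_of_mem _ (Finset.mem_filter.2 ⟨he, h⟩)), hf e he⟩⟩
      · obtain ⟨x, hx, hxU⟩ := Finset.not_subset.1 h
        exact ⟨x, Finset.mem_inter.2 ⟨Finset.mem_union_left _
          (Finset.mem_sdiff.2 ⟨(hF e he).1 hx, hxU⟩), hx⟩⟩
  have h1 : transversalNumber n F ≤ S.card := Nat.sInf_le ⟨S, hT, rfl⟩
  have h2 : S.card + U.card ≤ n + (F.filter (· ⊆ U)).card := by
    have a := Finset.card_union_le (Finset.Icc 1 n \ U) ((F.filter (· ⊆ U)).image f)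
    have b := Finset.card_image_le (s := F.filter (· ⊆ U)) (f := f)
    have c := Finset.card_sdiff_add_card_eq_card hUA
    rw [Nat.card_Icc, Nat.add_sub_cancel] at c
    rw [← hS] at a
    omega
  have h1' : (transversalNumber n F : ℝ) ≤ S.card := by exact_mod_cast h1
  have h2' : (S.card : ℝ) + U.card ≤ n + ((F.filter (· ⊆ U)).card : ℝ) := by exact_mod_cast h2
  have h3 : (1 / Real.exp 1) * (n : ℝ) * p ≤ p * n := by
    have he : 1 / Real.exp 1 ≤ 1 := by
      rw [div_le_one (Real.exp_pos 1)]
      exact Real.one_le_exp (by norm_num)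
    have : 0 ≤ p * n := by positivity
    nlinarith
  linarith
end

section
/- For every integer d ≥ 2 there exists a constant c_d > 0 such that every pure (d−1)-dimensional Eulerian simplicial complex Δ with n vertices satisfies: T(Δ) ≤ n − c_d·n^{1/2} if d is even, and T(Δ) ≤ n − c_d·n^{(d+1)/(2d)} if d is odd. -/
/-- `F` is a facet (maximal face) of the complex `Δ`. -/
def IsFacetOf (Δ : Finset (Finset ℕ)) (F : Finset ℕ) : Prop :=
  F ∈ Δ ∧ ∀ G ∈ Δ, F ⊆ G → G = F

/-- The link of a face `F` in `Δ`: `{G ∈ Δ : F ∩ G = ∅ and F ∪ G ∈ Δ}`. -/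
def linkOf (Δ : Finset (Finset ℕ)) (F : Finset ℕ) : Finset (Finset ℕ) :=
  Δ.filter fun G => F ∩ G = ∅ ∧ F ∪ G ∈ Δ

/-- Reduced Euler characteristic: `χ̃(Γ) = -1 + ∑_{i ≥ 0} (-1)^i f_i(Γ)`, where `f_i`
counts faces with `i+1` elements. -/
def reducedEuler (Γ : Finset (Finset ℕ)) : ℤ :=
  -1 + ∑ F ∈ Γ.filter (fun F => F.Nonempty), (-1 : ℤ) ^ (F.card - 1)

/-- `Δ` is a pure `(d-1)`-dimensional simplicial complex on vertex set `V`: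
faces lie in `V`, `Δ` is closed under inclusion, every vertex is a face,
and every facet has `d` elements. -/
def IsPureComplex (V : Finset ℕ) (d : ℕ) (Δ : Finset (Finset ℕ)) : Prop :=
  (∀ F ∈ Δ, F ⊆ V) ∧ (∀ F ∈ Δ, ∀ G, G ⊆ F → G ∈ Δ) ∧ (∀ v ∈ V, {v} ∈ Δ) ∧
    (∀ F, IsFacetOf Δ F → F.card = d)

/-- `Δ` is Eulerian: `χ̃(lk(F,Δ)) = (-1)^(d - |F| - 1)` for every face `F ∈ Δ`. -/
def IsEulerian (d : ℕ) (Δ : Finset (Finset ℕ)) : Prop :=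
  ∀ F ∈ Δ, (reducedEuler (linkOf Δ F) : ℚ) = (-1 : ℚ) ^ ((d : ℤ) - (F.card : ℤ) - 1)

/-- The transversal number of the complex `Δ` on vertex set `V`: the minimum size of a
subset of `V` meeting every facet of `Δ`. -/
noncomputable def complexTransversalNumber (V : Finset ℕ) (Δ : Finset (Finset ℕ)) : ℕ :=
  sInf {c : ℕ | ∃ S : Finset ℕ, S ⊆ V ∧
    (∀ F, IsFacetOf Δ F → (S ∩ F).Nonempty) ∧ S.card = c}

open Polynomial in
/-- Symmetric polynomials vanishing to high order at `0` are zero. -/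
theorem aux_inj (d : ℕ) (p : ℝ[X]) (hdeg : p.degree < (d + 1 : ℕ))
    (hs : p.comp (-1 - X) = (-1) ^ d * p)
    (h0 : ∀ i < d / 2 + 1, p.coeff i = 0) : p = 0 := by
  have h1 : (X : ℝ[X]) ^ (d / 2 + 1) ∣ p := X_pow_dvd_iff.2 h0
  have h2 : (-1 - X : ℝ[X]) ^ (d / 2 + 1) ∣ p := by
    obtain ⟨q, hq⟩ := h1
    have h3 : (-1 - X : ℝ[X]) ^ (d / 2 + 1) ∣ (-1) ^ d * p := by
      rw [← hs, hq]
      refine ⟨q.comp (-1 - X), ?_⟩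
      simp
    have h4 : (-1 : ℝ[X]) ^ d * ((-1) ^ d * p) = p := by
      rw [← mul_assoc, ← mul_pow]; simp
    rw [← h4]
    exact Dvd.dvd.mul_left h3 _
  have hco : IsCoprime ((X : ℝ[X]) ^ (d / 2 + 1)) ((-1 - X : ℝ[X]) ^ (d / 2 + 1)) := by
    apply IsCoprime.pow
    exact ⟨-1, -1, by ring⟩
  have h5 := hco.mul_dvd h1 h2
  by_contra hp
  have h6 := degree_le_of_dvd h5 hp
  have h7 : (-1 - X : ℝ[X]) = -(X + C 1) := by simp; ring
  rw [degree_mul, degree_pow, degree_pow, h7, degree_neg, degree_X_add_C, degree_X] at h6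
  have h8 := lt_of_le_of_lt h6 hdeg
  simp only [nsmul_eq_mul, mul_one] at h8
  have h9 : d / 2 + 1 + (d / 2 + 1) < d + 1 := by exact_mod_cast h8
  omega

open Polynomial in
theorem aux_lin (d : ℕ) : ∃ C : ℝ, 1 ≤ C ∧ ∀ p : ℝ[X], p.degree < (d + 1 : ℕ) →
    p.comp (-1 - X) = (-1) ^ d * p → ∀ B : ℝ, (∀ i < d / 2 + 1, |p.coeff i| ≤ B) →
    p.coeff d ≤ C * B := by
  let W : Submodule ℝ ℝ[X] :=
    { carrier := {p | p.degree < (d + 1 : ℕ) ∧ p.comp (-1 - X) = (-1) ^ d * p}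
      add_mem' := by
        rintro a b ⟨ha, ha'⟩ ⟨hb, hb'⟩
        refine ⟨lt_of_le_of_lt (degree_add_le a b) (max_lt ha hb), ?_⟩
        rw [add_comp, ha', hb', mul_add]
      zero_mem' := by
        refine ⟨?_, by simp⟩
        rw [degree_zero]; exact WithBot.bot_lt_coe _
      smul_mem' := by
        rintro c a ⟨ha, ha'⟩
        refine ⟨lt_of_le_of_lt (degree_smul_le c a) ha, ?_⟩
        rw [smul_comp, ha', mul_smul_comm] }
  let φ : W →ₗ[ℝ] (Fin (d / 2 + 1) → ℝ) :=
    LinearMap.pi fun i => (lcoeff ℝ (i : ℕ)).comp W.subtype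
  have hφ : LinearMap.ker φ = ⊥ := by
    rw [LinearMap.ker_eq_bot']
    rintro ⟨p, hp, hp'⟩ h
    apply Subtype.ext
    refine aux_inj d p hp hp' ?_
    intro i hi
    exact congrFun h ⟨i, hi⟩
  obtain ⟨g, hg⟩ := LinearMap.exists_leftInverse_of_injective φ hφ
  let L : (Fin (d / 2 + 1) → ℝ) →ₗ[ℝ] ℝ := (lcoeff ℝ d).comp (W.subtype.comp g)
  refine ⟨1 + ∑ i, |L (Pi.single i 1)|, ?_, ?_⟩
  · have : 0 ≤ ∑ i, |L (Pi.single i 1)| := Finset.sum_nonneg fun i _ => abs_nonneg _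
    linarith
  · intro p hp hp' B hB
    have hB0 : 0 ≤ B := (abs_nonneg _).trans (hB 0 (by omega))
    have h1 : p.coeff d = L (φ ⟨p, hp, hp'⟩) := by
      have := LinearMap.congr_fun hg ⟨p, hp, hp'⟩
      simp only [LinearMap.comp_apply, LinearMap.id_apply] at this
      simp [L, this]
    rw [h1, LinearMap.pi_apply_eq_sum_univ L, add_mul, Finset.sum_mul]
    have h2 : ∑ i, φ ⟨p, hp, hp'⟩ i • L (fun j => if i = j then 1 else 0)
        ≤ ∑ i, |L (Pi.single i 1)| * B := by
      apply Finset.sum_le_sum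
      intro i _
      have h3 : (fun j => if i = j then (1 : ℝ) else 0) = Pi.single i 1 := by
        ext j; simp [Pi.single_apply, eq_comm]
      rw [h3, smul_eq_mul]
      have h4 : |φ ⟨p, hp, hp'⟩ i| ≤ B := hB i i.2
      calc _ ≤ |φ ⟨p, hp, hp'⟩ i * L (Pi.single i 1)| := le_abs_self _
        _ = |L (Pi.single i 1)| * |φ ⟨p, hp, hp'⟩ i| := by rw [abs_mul, mul_comm]
        _ ≤ _ := by gcongr
    linarith

theorem aux_euler (V : Finset ℕ) (d : ℕ) (Δ : Finset (Finset ℕ)) (h : IsPureComplex V d Δ)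
    (hE : IsEulerian d Δ) (F : Finset ℕ) (hF : F ∈ Δ) :
    ∑ G ∈ Δ with F ⊆ G, (-1 : ℚ) ^ G.card = (-1) ^ d := by
  obtain ⟨-, hdown, -, -⟩ := h
  have h0 : ∅ ∈ linkOf Δ F := by
    simp [linkOf, hF, hdown F hF ∅ (Finset.empty_subset _)]
  have h1 : (reducedEuler (linkOf Δ F) : ℚ) = - ∑ G ∈ linkOf Δ F, (-1 : ℚ) ^ G.card := by
    unfold reducedEuler
    rw [← Finset.sum_filter_add_sum_filter_not (linkOf Δ F) (fun G => G.Nonempty)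
      (fun G => (-1 : ℚ) ^ G.card)]
    have h2 : (linkOf Δ F).filter (fun G => ¬ G.Nonempty) = {∅} := by
      ext G
      simp only [Finset.mem_filter, Finset.not_nonempty_iff_eq_empty, Finset.mem_singleton]
      constructor
      · exact fun h => h.2
      · rintro rfl; exact ⟨h0, rfl⟩
    rw [h2]
    push_cast
    rw [neg_add, ← Finset.sum_neg_distrib]
    simp only [Finset.sum_singleton, Finset.card_empty, pow_zero]
    rw [add_comm]
    congr 1
    apply Finset.sum_congr rfl
    intro G hG
    have : 0 < G.card := Finset.card_pos.2 (Finset.mem_filter.1 hG).2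
    obtain ⟨m, hm⟩ := Nat.exists_eq_succ_of_ne_zero this.ne'
    rw [hm]; simp [pow_succ]
  have h3 : ∑ G ∈ Δ with F ⊆ G, (-1 : ℚ) ^ G.card
      = ∑ G ∈ linkOf Δ F, (-1 : ℚ) ^ (F.card + G.card) := by
    symm
    refine Finset.sum_bij' (fun G _ => F ∪ G) (fun G _ => G \ F) ?_ ?_ ?_ ?_ ?_
    · intro G hG
      simp only [linkOf, Finset.mem_filter] at hG ⊢
      exact ⟨hG.2.2, Finset.subset_union_left⟩
    · intro G hG
      simp only [linkOf, Finset.mem_filter] at hG ⊢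
      refine ⟨hdown G hG.1 _ Finset.sdiff_subset, by simp, ?_⟩
      rw [Finset.union_sdiff_of_subset hG.2]; exact hG.1
    · intro G hG
      simp only [linkOf, Finset.mem_filter] at hG
      have : Disjoint F G := Finset.disjoint_iff_inter_eq_empty.2 hG.2.1
      exact Finset.union_sdiff_cancel_left this
    · intro G hG
      simp only [Finset.mem_filter] at hG
      exact Finset.union_sdiff_of_subset hG.2
    · intro G hG
      simp only [linkOf, Finset.mem_filter] at hG
      have : Disjoint F G := Finset.disjoint_iff_inter_eq_empty.2 hG.2.1
      rw [Finset.card_union_of_disjoint this]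
  rw [h3]
  simp only [pow_add, ← Finset.mul_sum]
  have h4 := hE F hF
  rw [h1] at h4
  have h5 : ∑ G ∈ linkOf Δ F, (-1 : ℚ) ^ G.card
      = -(-1 : ℚ) ^ ((d : ℤ) - (F.card : ℤ) - 1) := by linarith
  have h6 : (-1 : ℚ) ^ d = (-1 : ℚ) ^ ((d : ℤ) - (F.card : ℤ) - 1) * (-1) * (-1) ^ F.card := by
    rw [← zpow_natCast (-1 : ℚ) F.card, ← zpow_natCast (-1 : ℚ) d,
      ← zpow_add_one₀ (by norm_num), ← zpow_add₀ (by norm_num)]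
    congr 1
    ring
  rw [h5, h6]
  ring

/-- Every face has at most `d` elements. -/
theorem aux_facet (V : Finset ℕ) (d : ℕ) (Δ : Finset (Finset ℕ)) (h : IsPureComplex V d Δ)
    (F : Finset ℕ) (hF : F ∈ Δ) : ∃ G ∈ Δ, F ⊆ G ∧ G.card = d := by
  obtain ⟨G, hFG, hG⟩ := Finset.exists_le_maximal Δ hF
  refine ⟨G, hG.prop, hFG, h.2.2.2 G ⟨hG.prop, fun K hK hGK => ?_⟩⟩
  exact (hG.eq_of_le hK hGK).symm

open Polynomial in
theorem aux_count (d : ℕ) : ∃ C : ℝ, 1 ≤ C ∧ ∀ (V : Finset ℕ) (Δ : Finset (Finset ℕ)),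
    IsPureComplex V d Δ → IsEulerian d Δ → 1 ≤ V.card →
    ((Δ.filter fun F => F.card = d).card : ℝ) ≤ C * (V.card : ℝ) ^ (d / 2) := by
  obtain ⟨C, hC, H⟩ := aux_lin d
  refine ⟨C, hC, ?_⟩
  intro V Δ h hE hV
  let p : ℝ[X] := ∑ F ∈ Δ, X ^ F.card
  have hco : ∀ i, p.coeff i = ((Δ.filter fun F => F.card = i).card : ℝ) := by
    intro i
    simp only [p, finsetSum_coeff, coeff_X_pow, Finset.sum_boole, eq_comm]
  rw [← hco]
  refine H p ?_ ?_ _ ?_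
  · rw [degree_lt_iff_coeff_zero]
    intro m hm
    rw [hco, Nat.cast_eq_zero, Finset.card_eq_zero, Finset.filter_eq_empty_iff]
    intro F hF hFm
    obtain ⟨G, -, hG, hGd⟩ := aux_facet V d Δ h F hF
    have := Finset.card_le_card hG
    omega
  · have h1 : ∀ G : Finset ℕ, ((-1 - X : ℝ[X])) ^ G.card
        = ∑ F ∈ G.powerset, (-1) ^ G.card * X ^ F.card := by
      intro G
      have := Finset.sum_pow_mul_eq_add_pow (X : ℝ[X]) 1 G
      simp only [one_pow, mul_one] at this
      rw [← Finset.mul_sum, this, ← mul_pow]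
      ring
    have h2 : p.comp (-1 - X) = ∑ G ∈ Δ, ∑ F ∈ G.powerset, (-1 : ℝ[X]) ^ G.card * X ^ F.card := by
      simp only [p, Polynomial.comp, eval₂_finsetSum, eval₂_X_pow]
      exact Finset.sum_congr rfl fun G _ => h1 G
    rw [h2, Finset.sum_comm' (t' := Δ) (s' := fun F => Δ.filter fun G => F ⊆ G)]
    · simp only [p, Finset.mul_sum]
      apply Finset.sum_congr rfl
      intro F hF
      rw [← Finset.sum_mul]
      congr 1
      have h3 := congrArg (algebraMap ℚ ℝ[X]) (aux_euler V d Δ h hE F hF)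
      simpa using h3
    · intro G F
      simp only [Finset.mem_powerset, Finset.mem_filter]
      constructor
      · rintro ⟨a, b⟩; exact ⟨⟨a, b⟩, h.2.1 G a F b⟩
      · rintro ⟨⟨a, b⟩, _⟩; exact ⟨a, b⟩
  · intro i hi
    rw [hco, Nat.abs_cast]
    have h1 : (Δ.filter fun F => F.card = i) ⊆ Finset.powersetCard i V := by
      intro F hF
      rw [Finset.mem_filter] at hF
      exact Finset.mem_powersetCard.2 ⟨h.1 F hF.1, hF.2⟩
    have h2 := Finset.card_le_card h1
    rw [Finset.card_powersetCard] at h2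
    have h3 := Nat.choose_le_pow V.card i
    have h4 : V.card ^ i ≤ V.card ^ (d / 2) := Nat.pow_le_pow_right hV (by omega)
    exact_mod_cast (h2.trans h3).trans h4

/-- Averaging over `k`-subsets. -/
theorem aux_avg (V : Finset ℕ) (d k : ℕ) (A : Finset (Finset ℕ))
    (hA : ∀ F ∈ A, F ⊆ V ∧ F.card = d) (hk : k ≤ V.card)
    (hlt : A.card * k.choose d < V.card.choose d) :
    ∃ K ⊆ V, K.card = k ∧ ∀ F ∈ A, ¬ F ⊆ K := by
  by_contra! hcon
  have hcov : Finset.powersetCard k V ⊆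
      A.biUnion fun F => (Finset.powersetCard k V).filter fun K => F ⊆ K := by
    intro K hK
    obtain ⟨h1, h2⟩ := Finset.mem_powersetCard.1 hK
    obtain ⟨F, hF, hFK⟩ := hcon K h1 h2
    exact Finset.mem_biUnion.2 ⟨F, hF, Finset.mem_filter.2 ⟨hK, hFK⟩⟩
  rcases lt_or_ge k d with hkd | hkd
  · obtain ⟨K, hK, hKk⟩ := Finset.exists_subset_card_eq hk
    obtain ⟨F, hF, hFK⟩ := hcon K hK hKk
    have := Finset.card_le_card hFK
    rw [(hA F hF).2] at this
    omega
  have h1 := (Finset.card_le_card hcov).trans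
    (Finset.card_biUnion_le_card_mul A _ ((V.card - d).choose (k - d)) ?_)
  · rw [Finset.card_powersetCard] at h1
    have h2 := Nat.choose_mul (n := V.card) (k := k) (s := d) hkd
    have h3 : 0 < (V.card - d).choose (k - d) := Nat.choose_pos (by omega)
    have h4 := Nat.mul_le_mul_right (k.choose d) h1
    rw [h2] at h4
    have h5 := Nat.mul_lt_mul_of_pos_right hlt h3
    nlinarith
  · intro F hF
    obtain ⟨hFV, hFd⟩ := hA F hF
    have h2 : ((Finset.powersetCard k V).filter fun K => F ⊆ K) ⊆
        (Finset.powersetCard (k - d) (V \ F)).image fun K => F ∪ K := by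
      intro K hK
      rw [Finset.mem_filter, Finset.mem_powersetCard] at hK
      refine Finset.mem_image.2 ⟨K \ F, Finset.mem_powersetCard.2
        ⟨Finset.sdiff_subset_sdiff hK.1.1 (subset_refl _), ?_⟩,
        Finset.union_sdiff_of_subset hK.2⟩
      rw [Finset.card_sdiff_of_subset hK.2, hK.1.2, hFd]
    refine (Finset.card_le_card h2).trans (Finset.card_image_le.trans ?_)
    rw [Finset.card_powersetCard, Finset.card_sdiff_of_subset hFV, hFd]

theorem aux_main (d : ℕ) (hd : 2 ≤ d) :
    ∃ c : ℝ, 0 < c ∧ ∀ (V : Finset ℕ) (Δ : Finset (Finset ℕ)),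
      IsPureComplex V d Δ → IsEulerian d Δ → ∀ a : ℝ, 0 < a → a ≤ 1 →
      a * d = d - (d / 2 : ℕ) →
      (complexTransversalNumber V Δ : ℝ) ≤ (V.card : ℝ) - c * (V.card : ℝ) ^ a := by
  obtain ⟨C, hC, H⟩ := aux_count d
  have hd0 : (0 : ℝ) < d := by positivity
  refine ⟨1 / (2 * C * d), by positivity, ?_⟩
  intro V Δ h hE a ha0 ha1 had
  set c : ℝ := 1 / (2 * C * d) with hc
  have hcpos : 0 < c := by positivity
  -- reduction to an independent set
  suffices hK : ∃ K ⊆ V, c * (V.card : ℝ) ^ a ≤ K.card ∧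
      ∀ F ∈ Δ.filter (fun F => F.card = d), ¬ F ⊆ K by
    obtain ⟨K, hKV, hKc, hKF⟩ := hK
    have h1 : complexTransversalNumber V Δ ≤ (V \ K).card := by
      apply Nat.sInf_le
      refine ⟨V \ K, Finset.sdiff_subset, ?_, rfl⟩
      intro F hF
      have h2 := hKF F (Finset.mem_filter.2 ⟨hF.1, h.2.2.2 F hF⟩)
      obtain ⟨x, hx, hxK⟩ := Finset.not_subset.1 h2
      exact ⟨x, by simp [hx, hxK, h.1 F hF.1 hx]⟩
    have h2 := Finset.card_sdiff_add_card_eq_card hKV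
    have h3 : (complexTransversalNumber V Δ : ℝ) ≤ ((V \ K).card : ℝ) := by exact_mod_cast h1
    have h4 : ((V \ K).card : ℝ) + K.card = V.card := by exact_mod_cast h2
    linarith
  rcases Nat.eq_zero_or_pos V.card with hV | hV
  · refine ⟨∅, Finset.empty_subset _, ?_, ?_⟩
    · simp [hV, Real.zero_rpow ha0.ne']
    · intro F hF hFe
      rw [Finset.subset_empty] at hFe
      rw [Finset.mem_filter, hFe] at hF
      simp at hF
      omega
  obtain ⟨v, hv⟩ := Finset.card_pos.1 hV
  have hdn : d ≤ V.card := by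
    obtain ⟨G, hG, -, hGd⟩ := aux_facet V d Δ h {v} (h.2.2.1 v hv)
    rw [← hGd]; exact Finset.card_le_card (h.1 G hG)
  set n := V.card with hn
  have hm := H V Δ h hE hV
  set A := Δ.filter (fun F => F.card = d) with hA
  have hn1 : (1 : ℝ) ≤ n := by exact_mod_cast hV
  have hna : (1 : ℝ) ≤ (n : ℝ) ^ a := Real.one_le_rpow hn1 ha0.le
  set x : ℝ := c * (n : ℝ) ^ a with hx
  have hx0 : 0 < x := by positivity
  have key : ⌈x⌉₊ ≤ n ∧ A.card * ⌈x⌉₊.choose d < n.choose d := by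
    rcases le_or_gt x 1 with hx1 | hx1
    · have h1 : ⌈x⌉₊ ≤ 1 := Nat.ceil_le.2 (by simpa using hx1)
      refine ⟨by omega, ?_⟩
      rw [Nat.choose_eq_zero_of_lt (by omega), mul_zero]
      exact Nat.choose_pos hdn
    · have h2 : (⌈x⌉₊ : ℝ) < (n : ℝ) ^ a / (C * d) := by
        have h3 := Nat.ceil_lt_add_one hx0.le
        have h4 : (n : ℝ) ^ a / (C * d) = 2 * x := by
          rw [hx, hc]; field_simp
        rw [h4]; linarith
      have hCd : 1 ≤ C * d := by
        have : (2 : ℝ) ≤ d := by exact_mod_cast hd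
        nlinarith
      refine ⟨?_, ?_⟩
      · have h3 : (n : ℝ) ^ a / (C * d) ≤ n := by
          refine (div_le_self (by positivity) hCd).trans ?_
          calc (n : ℝ) ^ a ≤ (n : ℝ) ^ (1 : ℝ) := Real.rpow_le_rpow_of_exponent_le hn1 ha1
            _ = n := Real.rpow_one _
        exact_mod_cast (h2.trans_le h3).le
      · set k := ⌈x⌉₊ with hk
        have h3 : (k : ℝ) ^ d < ((n : ℝ) ^ a / (C * d)) ^ d :=
          pow_lt_pow_left₀ h2 (by positivity) (by omega)
        have h4 : ((n : ℝ) ^ a) ^ d * (n : ℝ) ^ (d / 2) = (n : ℝ) ^ d := by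
          rw [← Real.rpow_natCast, ← Real.rpow_mul (by positivity), had, ← Real.rpow_natCast,
            ← Real.rpow_add (by linarith), sub_add_cancel, Real.rpow_natCast]
        have h5 : C ≤ C ^ d := le_self_pow₀ hC (by omega)
        have h6 : (A.card : ℝ) * (k : ℝ) ^ d < ((n : ℝ) / d) ^ d := by
          calc (A.card : ℝ) * (k : ℝ) ^ d ≤ (C * (n : ℝ) ^ (d / 2)) * (k : ℝ) ^ d := by gcongr
            _ < (C * (n : ℝ) ^ (d / 2)) * ((n : ℝ) ^ a / (C * d)) ^ d := by
              apply mul_lt_mul_of_pos_left h3; positivity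
            _ = (C / C ^ d) * ((n : ℝ) / d) ^ d := by
              rw [div_pow, mul_pow, div_pow, ← h4]; field_simp
            _ ≤ 1 * ((n : ℝ) / d) ^ d := by
              gcongr
              exact (div_le_one (by positivity)).2 h5
            _ = _ := one_mul _
        have h7 : (n : ℝ) / d ≤ ((n + 1 - d : ℕ) : ℝ) := by
          rw [Nat.cast_sub (by omega), div_le_iff₀ hd0]
          have : (2 : ℝ) ≤ d := by exact_mod_cast hd
          have : (d : ℝ) ≤ n := by exact_mod_cast hdn
          push_cast
          nlinarith
        have h8 : ((n + 1 - d : ℕ) : ℝ) ^ d ≤ d.factorial * n.choose d := by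
          have := Nat.pow_sub_le_descFactorial n d
          rw [Nat.descFactorial_eq_factorial_mul_choose] at this
          exact_mod_cast this
        have h9 : (d.factorial : ℝ) * k.choose d ≤ (k : ℝ) ^ d := by
          have := Nat.descFactorial_le_pow k d
          rw [Nat.descFactorial_eq_factorial_mul_choose] at this
          exact_mod_cast this
        have h10 : (d.factorial : ℝ) * (A.card * k.choose d) < d.factorial * n.choose d := by
          calc (d.factorial : ℝ) * (A.card * k.choose d)
              = A.card * (d.factorial * k.choose d) := by ring
            _ ≤ A.card * (k : ℝ) ^ d := by gcongr
            _ < ((n : ℝ) / d) ^ d := h6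
            _ ≤ ((n + 1 - d : ℕ) : ℝ) ^ d := by gcongr
            _ ≤ _ := h8
        have h11 := lt_of_mul_lt_mul_left h10 (by positivity)
        exact_mod_cast h11
  obtain ⟨K, hKV, hKk, hKF⟩ := aux_avg V d ⌈x⌉₊ A (fun F hF => by
    rw [hA, Finset.mem_filter] at hF
    exact ⟨h.1 F hF.1, hF.2⟩) key.1 key.2
  exact ⟨K, hKV, by rw [hKk]; exact Nat.le_ceil x, hKF⟩

theorem stmt_1 (d : ℕ) (hd : 2 ≤ d) :
    ∃ c : ℝ, 0 < c ∧ ∀ (V : Finset ℕ) (Δ : Finset (Finset ℕ)),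
      IsPureComplex V d Δ → IsEulerian d Δ →
      ((Even d → (complexTransversalNumber V Δ : ℝ) ≤
          (V.card : ℝ) - c * (V.card : ℝ) ^ ((1 : ℝ) / 2)) ∧
       (Odd d → (complexTransversalNumber V Δ : ℝ) ≤
          (V.card : ℝ) - c * (V.card : ℝ) ^ (((d : ℝ) + 1) / (2 * (d : ℝ))))) := by
  obtain ⟨c, hc, H⟩ := aux_main d hd
  have hd2 : (2 : ℝ) ≤ d := by exact_mod_cast hd
  refine ⟨c, hc, fun V Δ h hE => ⟨fun hev => ?_, fun hodd => ?_⟩⟩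
  · refine H V Δ h hE _ (by norm_num) (by norm_num) ?_
    obtain ⟨m, rfl⟩ := hev
    have : (m + m) / 2 = m := by omega
    rw [this]; push_cast; ring
  · refine H V Δ h hE _ (by positivity) ?_ ?_
    · rw [div_le_one (by positivity)]; linarith
    · obtain ⟨m, rfl⟩ := hodd
      have : (2 * m + 1) / 2 = m := by omega
      rw [this]
      push_cast at hd2 ⊢
      have : (2 * (m : ℝ) + 1) ≠ 0 := by positivity
      field_simp
      ring
end

section
/- Let d ≥ 4 and let Δ be a pure (d−1)-dimensional simplicial complex with n vertices and ℓ one-dimensional faces (edges). Then T(Δ) ≤ n − n²/(2ℓ + n). -/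
/-- Caro-Wei bound for a reflexive symmetric relation. -/
theorem caroWei_aux (R : ℕ → ℕ → Prop) [DecidableRel R] (hs : ∀ a b, R a b → R b a) :
    ∀ (k : ℕ) (s : Finset ℕ), s.card ≤ k → (∀ a ∈ s, R a a) →
      ∃ I ⊆ s, (∀ a ∈ I, ∀ b ∈ I, R a b → a = b) ∧
        ∑ v ∈ s, (1 : ℝ) / ((s.filter (R v)).card : ℝ) ≤ (I.card : ℝ) := by
  intro k
  induction k with
  | zero =>
    intro s h _
    have : s = ∅ := by simpa using h
    subst this
    exact ⟨∅, by simp, by simp, by simp⟩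
  | succ k ih =>
    intro s h hr
    rcases s.eq_empty_or_nonempty with rfl | hne
    · exact ⟨∅, by simp, by simp, by simp⟩
    obtain ⟨v, hv, hmin⟩ := Finset.exists_min_image s (fun v => (s.filter (R v)).card) hne
    have hlt : (s.filter (fun w => ¬ R v w)).card < s.card := by
      apply Finset.card_lt_card
      rw [Finset.filter_ssubset]
      exact ⟨v, hv, by simpa using hr v hv⟩
    obtain ⟨I, hI, hind, hsum⟩ := ih (s.filter (fun w => ¬ R v w)) (by omega)
      (fun a ha => hr a (Finset.mem_filter.1 ha).1)
    have hIv : ∀ a ∈ I, ¬ R v a := fun a ha => (Finset.mem_filter.1 (hI ha)).2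
    have hvI : v ∉ I := fun hh => hIv v hh (hr v hv)
    refine ⟨insert v I, ?_, ?_, ?_⟩
    · intro a ha
      rcases Finset.mem_insert.1 ha with rfl | ha
      · exact hv
      · exact (Finset.mem_filter.1 (hI ha)).1
    · intro a ha b hb hab
      rcases Finset.mem_insert.1 ha with hax | hax <;>
        rcases Finset.mem_insert.1 hb with hbx | hbx
      · rw [hax, hbx]
      · rw [hax] at hab
        exact absurd hab (hIv b hbx)
      · rw [hbx] at hab
        exact absurd (hs _ _ hab) (hIv a hax)
      · exact hind a hax b hbx hab
    · rw [Finset.card_insert_of_notMem hvI, ← Finset.sum_filter_add_sum_filter_not s (R v)]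
      have hpos : 0 < (s.filter (R v)).card :=
        Finset.card_pos.2 ⟨v, Finset.mem_filter.2 ⟨hv, hr v hv⟩⟩
      have h1 : ∑ w ∈ s.filter (R v), (1 : ℝ) / ((s.filter (R w)).card : ℝ) ≤ 1 := by
        calc _ ≤ ∑ w ∈ s.filter (R v), (1 : ℝ) / ((s.filter (R v)).card : ℝ) := by
              apply Finset.sum_le_sum
              intro w hw
              apply one_div_le_one_div_of_le (by exact_mod_cast hpos)
              exact_mod_cast hmin w (Finset.mem_filter.1 hw).1
          _ = 1 := by
              rw [Finset.sum_const, nsmul_eq_mul]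
              have : ((s.filter (R v)).card : ℝ) ≠ 0 := by exact_mod_cast hpos.ne'
              field_simp
      have h2 : ∑ w ∈ s.filter (fun w => ¬ R v w), (1 : ℝ) / ((s.filter (R w)).card : ℝ) ≤
          ∑ w ∈ s.filter (fun w => ¬ R v w),
            (1 : ℝ) / (((s.filter (fun w => ¬ R v w)).filter (R w)).card : ℝ) := by
        apply Finset.sum_le_sum
        intro w hw
        apply one_div_le_one_div_of_le
        · have : 0 < ((s.filter (fun w => ¬ R v w)).filter (R w)).card :=
            Finset.card_pos.2 ⟨w, Finset.mem_filter.2 ⟨hw, hr w (Finset.mem_filter.1 hw).1⟩⟩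
          exact_mod_cast this
        · exact_mod_cast Finset.card_le_card
            (Finset.filter_subset_filter _ (Finset.filter_subset _ _))
      push_cast
      linarith

theorem stmt_2 (d : ℕ) (hd : 4 ≤ d) (V : Finset ℕ) (Δ : Finset (Finset ℕ))
    (hΔ : IsPureComplex V d Δ) :
    (complexTransversalNumber V Δ : ℝ) ≤
      (V.card : ℝ) - (V.card : ℝ) ^ 2 /
        (2 * ((Δ.filter fun F => F.card = 2).card : ℝ) + (V.card : ℝ)) := by
  obtain ⟨hV, hdown, hvert, hpure⟩ := hΔ
  obtain ⟨I, hI, hind, hsum⟩ := caroWei_aux (fun a b => ({a, b} : Finset ℕ) ∈ Δ)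
    (fun a b h => by rwa [Finset.pair_comm]) V.card V le_rfl
    (fun a ha => by simpa using hvert a ha)
  have hT : complexTransversalNumber V Δ ≤ (V \ I).card := by
    apply Nat.sInf_le
    refine ⟨V \ I, Finset.sdiff_subset, ?_, rfl⟩
    intro F hF
    by_contra hcon
    rw [Finset.not_nonempty_iff_eq_empty] at hcon
    have hFI : F ⊆ I := by
      intro a ha
      by_contra haI
      have : a ∈ (V \ I) ∩ F :=
        Finset.mem_inter.2 ⟨Finset.mem_sdiff.2 ⟨hV F hF.1 ha, haI⟩, ha⟩
      rw [hcon] at this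
      simp at this
    obtain ⟨a, ha, b, hb, hab⟩ := Finset.one_lt_card.1 (show 1 < F.card by
      rw [hpure F hF]; omega)
    apply hab
    apply hind a (hFI ha) b (hFI hb)
    apply hdown F hF.1
    intro x hx
    rcases Finset.mem_insert.1 hx with rfl | hx
    · exact ha
    · rw [Finset.mem_singleton.1 hx]; exact hb
  have hcard : (V \ I).card + I.card = V.card := Finset.card_sdiff_add_card_eq_card hI
  -- degree sum
  have hdeg : ∀ v ∈ V, (V.filter (fun b => ({v, b} : Finset ℕ) ∈ Δ)).card ≤
      ((Δ.filter fun F => F.card = 2).filter (fun F => v ∈ F)).card + 1 := by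
    intro v hv
    have hmem : v ∈ V.filter (fun b => ({v, b} : Finset ℕ) ∈ Δ) :=
      Finset.mem_filter.2 ⟨hv, by simpa using hvert v hv⟩
    rw [← Finset.card_erase_add_one hmem]
    apply Nat.add_le_add_right
    apply Finset.card_le_card_of_injOn (fun w => ({v, w} : Finset ℕ))
    · intro w hw
      have hw := Finset.mem_erase.1 (Finset.mem_coe.1 hw)
      refine Finset.mem_coe.2 (Finset.mem_filter.2 ⟨Finset.mem_filter.2
        ⟨(Finset.mem_filter.1 hw.2).2, Finset.card_pair hw.1.symm⟩, by simp⟩)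
    · intro w hw x hx hwx
      have hw := Finset.mem_erase.1 (Finset.mem_coe.1 hw)
      have h1 : w ∈ ({v, x} : Finset ℕ) := by
        have h0 : w ∈ ({v, w} : Finset ℕ) := by simp
        exact (show ({v, w} : Finset ℕ) = {v, x} from hwx) ▸ h0
      simpa [hw.1] using h1
  have hdc : ∑ v ∈ V, ((Δ.filter fun F => F.card = 2).filter (fun F => v ∈ F)).card =
      2 * (Δ.filter fun F => F.card = 2).card := by
    have := Finset.sum_card_bipartiteAbove_eq_sum_card_bipartiteBelow
      (s := V) (t := Δ.filter fun F => F.card = 2) (fun v F => v ∈ F)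
    simp only [Finset.bipartiteAbove, Finset.bipartiteBelow] at this
    rw [this, mul_comm, ← smul_eq_mul, ← Finset.sum_const]
    apply Finset.sum_congr rfl
    intro F hF
    have hF := Finset.mem_filter.1 hF
    rw [Finset.filter_mem_eq_inter, Finset.inter_eq_right.2 (hV F hF.1), hF.2]
  have htot : ∑ v ∈ V, (V.filter (fun b => ({v, b} : Finset ℕ) ∈ Δ)).card ≤
      2 * (Δ.filter fun F => F.card = 2).card + V.card := by
    refine (Finset.sum_le_sum hdeg).trans ?_
    rw [Finset.sum_add_distrib, hdc]
    simp
  have hposd : ∀ v ∈ V, (0 : ℝ) < ((V.filter (fun b => ({v, b} : Finset ℕ) ∈ Δ)).card : ℝ) := by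
    intro v hv
    have : 0 < (V.filter (fun b => ({v, b} : Finset ℕ) ∈ Δ)).card :=
      Finset.card_pos.2 ⟨v, Finset.mem_filter.2 ⟨hv, by simpa using hvert v hv⟩⟩
    exact_mod_cast this
  have key : (V.card : ℝ) ^ 2 /
      (2 * ((Δ.filter fun F => F.card = 2).card : ℝ) + (V.card : ℝ)) ≤ I.card := by
    rcases V.eq_empty_or_nonempty with rfl | hne
    · simp
    have hsp := Finset.sum_pos hposd hne
    have hcs := Finset.sq_sum_div_le_sum_sq_div V (fun _ => (1 : ℝ)) hposd
    simp only [Finset.sum_const, nsmul_eq_mul, mul_one, one_pow] at hcs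
    refine le_trans ?_ (hcs.trans hsum)
    apply div_le_div_of_nonneg_left (by positivity) hsp
    exact_mod_cast htot
  have hTr : (complexTransversalNumber V Δ : ℝ) ≤ ((V \ I).card : ℝ) := by exact_mod_cast hT
  have hcardr : ((V \ I).card : ℝ) + I.card = V.card := by exact_mod_cast hcard
  linarith
end

section
/- Let k ≥ 1 and s ≥ 1 be integers and let n be a positive integer. Then every transversal of the family F^{n,2k}_s has size at least n·(1 − 1/(s+1)) − k·s. -/
/-- Membership in the family `F^{n,2k}_s`: `e = {i_1 < … < i_{2k}} ⊆ [n]` and there is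
`1 ≤ ℓ ≤ s` with `i_{2j} - i_{2j-1} = ℓ` for all `1 ≤ j ≤ k`. (Indices are 0-based.) -/
def FamEven (n k s : ℕ) (e : Finset ℕ) : Prop :=
  ∃ i : Fin (2 * k) → ℕ, StrictMono i ∧ (∀ j, i j ∈ Finset.Icc 1 n) ∧
    e = Finset.image i Finset.univ ∧
    ∃ ℓ, 1 ≤ ℓ ∧ ℓ ≤ s ∧
      ∀ j : Fin k, i ⟨2 * j.val + 1, by have := j.isLt; omega⟩ -
        i ⟨2 * j.val, by have := j.isLt; omega⟩ = ℓ

/-- Membership in the family `F^{n,2k+1}_s`: `e = {i_1 < … < i_{2k+1}} ⊆ [n]`,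
`i_{2k+1} - i_{2k} ≤ s`, and there is `1 ≤ ℓ ≤ s` with `i_{2j} - i_{2j-1} = ℓ`
for all `1 ≤ j ≤ k`. (Indices are 0-based.) -/
def FamOdd (n k s : ℕ) (e : Finset ℕ) : Prop :=
  ∃ i : Fin (2 * k + 1) → ℕ, StrictMono i ∧ (∀ j, i j ∈ Finset.Icc 1 n) ∧
    e = Finset.image i Finset.univ ∧
    i ⟨2 * k, by omega⟩ - i ⟨2 * k - 1, by omega⟩ ≤ s ∧
    ∃ ℓ, 1 ≤ ℓ ∧ ℓ ≤ s ∧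
      ∀ j : Fin k, i ⟨2 * j.val + 1, by have := j.isLt; omega⟩ -
        i ⟨2 * j.val, by have := j.isLt; omega⟩ = ℓ

/-- Left endpoints of consecutive pairs of `C` at distance `l`. -/
def gapSet (C : Finset ℕ) (l : ℕ) : Finset ℕ :=
  C.filter (fun a => a + l ∈ C ∧ ∀ x ∈ C, a < x → a + l ≤ x)

lemma gapSet_card_le (k s n : ℕ) (hk : 1 ≤ k) (S : Finset ℕ)
    (hT : ∀ e : Finset ℕ, FamEven n k s e → (S ∩ e).Nonempty)
    (l : ℕ) (hl : 1 ≤ l) (hls : l ≤ s) :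
    (gapSet (Finset.Icc 1 n \ S) l).card ≤ 2 * (k - 1) := by
  by_contra hcon
  push Not at hcon
  set A := gapSet (Finset.Icc 1 n \ S) l with hA
  have hcard : 2 * k - 1 ≤ A.card := by omega
  let g : Fin (2 * k - 1) ↪o ℕ := A.orderEmbOfCardLe hcard
  have hg : ∀ t, g t ∈ A := fun t => A.orderEmbOfCardLe_mem hcard t
  have hmem : ∀ t, g t ∈ Finset.Icc 1 n \ S ∧ g t + l ∈ Finset.Icc 1 n \ S ∧
      ∀ x ∈ Finset.Icc 1 n \ S, g t < x → g t + l ≤ x := fun t => by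
    have := hg t
    rw [hA, gapSet, Finset.mem_filter] at this
    exact this
  let b : Fin (2 * k) → Fin (2 * k - 1) := fun t => ⟨2 * (t.val / 2), by omega⟩
  let i : Fin (2 * k) → ℕ := fun t => g (b t) + (t.val % 2) * l
  have hiC : ∀ t, i t ∈ Finset.Icc 1 n \ S := by
    intro t
    rcases Nat.mod_two_eq_zero_or_one t.val with h | h
    · simp only [i, h, zero_mul, add_zero]; exact (hmem _).1
    · simp only [i, h, one_mul]; exact (hmem _).2.1
  have hmono : StrictMono i := by
    intro p q hpq
    have hpq' : p.val < q.val := hpq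
    by_cases h : p.val / 2 = q.val / 2
    · have hb : b p = b q := by simp only [b, h]
      have h1 : p.val % 2 = 0 := by omega
      have h2 : q.val % 2 = 1 := by omega
      simp only [i, hb, h1, h2]
      omega
    · have h1 : i p ≤ g (b p) + l := by
        have : p.val % 2 * l ≤ 1 * l := Nat.mul_le_mul_right _ (by omega)
        simp only [i]; omega
      let m : Fin (2 * k - 1) := ⟨2 * (p.val / 2) + 1, by omega⟩
      have h2 : g (b p) < g m := g.strictMono (by simp [b, m, Fin.lt_def])
      have h3 : g m < g (b q) := g.strictMono (by
        simp only [b, m, Fin.lt_def]; omega)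
      have h4 := (hmem (b p)).2.2 (g m) (hmem m).1 h2
      have h5 : g (b q) ≤ i q := Nat.le_add_right _ _
      omega
  obtain ⟨x, hx⟩ := hT (Finset.image i Finset.univ) ⟨i, hmono,
    fun j => (Finset.mem_sdiff.1 (hiC j)).1, rfl, l, hl, hls, by
      intro j
      have h1 : (2 * j.val + 1) / 2 = j.val := by omega
      have h2 : (2 * j.val) / 2 = j.val := by omega
      have h3 : (2 * j.val + 1) % 2 = 1 := by omega
      have h4 : (2 * j.val) % 2 = 0 := by omega
      simp only [i, b, h1, h2, h3, h4]
      omega⟩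
  rw [Finset.mem_inter, Finset.mem_image] at hx
  obtain ⟨hxS, t, -, rfl⟩ := hx
  exact (Finset.mem_sdiff.1 (hiC t)).2 hxS

lemma cover_count (n s : ℕ) (C : Finset ℕ) (hC : C ⊆ Finset.Icc 1 n) :
    C.card * (s + 1) ≤ (n + s) + ∑ l ∈ Finset.Icc 1 s, (gapSet C l).card * (s + 1 - l) := by
  classical
  let P := C ×ˢ Finset.range (s + 1)
  let good : ℕ × ℕ → Prop := fun p => ∀ x ∈ C, p.1 < x → p.1 + p.2 < x
  have hP : P.card = C.card * (s + 1) := by simp [P]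
  rw [← hP, ← Finset.card_filter_add_card_filter_not (s := P) good]
  apply Nat.add_le_add
  · have : (P.filter good).card ≤ (Finset.Icc 1 (n + s)).card := by
      apply Finset.card_le_card_of_injOn (fun p => p.1 + p.2)
      · intro p hp
        simp only [P, Finset.coe_filter, Finset.mem_product, Finset.mem_range,
          Set.mem_setOf_eq] at hp
        have := Finset.mem_Icc.1 (hC hp.1.1)
        simp only [Finset.coe_Icc, Set.mem_Icc]
        omega
      · rintro ⟨a, d⟩ hp ⟨a', d'⟩ hp' h
        simp only [P, good, Finset.coe_filter, Finset.mem_product, Finset.mem_range,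
          Set.mem_setOf_eq] at hp hp' h
        have h1 := hp.2 a' hp'.1.1
        have h2 := hp'.2 a hp.1.1
        have : a = a' := by omega
        subst this
        have : d = d' := by omega
        rw [this]
    simpa using this
  · calc _ ≤ ((Finset.Icc 1 s).biUnion
          (fun l => gapSet C l ×ˢ Finset.Icc l s)).card := by
          apply Finset.card_le_card
          rintro ⟨a, d⟩ hp
          simp only [P, good, Finset.mem_filter, Finset.mem_product, Finset.mem_range] at hp
          obtain ⟨⟨ha, hd⟩, hx⟩ := hp
          push Not at hx
          have hex : ∃ x, x ∈ C ∧ a < x := by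
            obtain ⟨x, h1, h2, -⟩ := hx
            exact ⟨x, h1, h2⟩
          have hy := Nat.find_spec hex
          have hmin : ∀ x ∈ C, a < x → Nat.find hex ≤ x :=
            fun x h1 h2 => Nat.find_min' hex ⟨h1, h2⟩
          generalize Nat.find hex = y at hy hmin
          obtain ⟨x, h1, h2, h3⟩ := hx
          have h4 := hmin x h1 h2
          have hya : a + (y - a) = y := by omega
          simp only [Finset.mem_biUnion, Finset.mem_product, Finset.mem_Icc, gapSet,
            Finset.mem_filter]
          refine ⟨y - a, by omega, ⟨ha, ?_, ?_⟩, by omega⟩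
          · rw [hya]; exact hy.1
          · rw [hya]; exact hmin
      _ ≤ ∑ l ∈ Finset.Icc 1 s, (gapSet C l ×ˢ Finset.Icc l s).card :=
          Finset.card_biUnion_le
      _ = _ := by simp

lemma sum_gap (s : ℕ) : 2 * ∑ l ∈ Finset.Icc 1 s, (s + 1 - l) = s * (s + 1) := by
  induction s with
  | zero => simp
  | succ s ih =>
    rw [Finset.sum_Icc_succ_top (by omega)]
    have : ∑ l ∈ Finset.Icc 1 s, (s + 1 + 1 - l) = ∑ l ∈ Finset.Icc 1 s, ((s + 1 - l) + 1) := by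
      apply Finset.sum_congr rfl
      intro l hl
      have := Finset.mem_Icc.1 hl
      omega
    rw [this, Finset.sum_add_distrib]
    simp only [Finset.sum_const, Nat.card_Icc, smul_eq_mul]
    have h : s + 1 + 1 - (s + 1) = 1 := by omega
    rw [h, Nat.add_sub_cancel]
    nlinarith

theorem stmt_3 (k s n : ℕ) (hk : 1 ≤ k) (hs : 1 ≤ s) (hn : 0 < n)
    (S : Finset ℕ) (hS : S ⊆ Finset.Icc 1 n)
    (hT : ∀ e : Finset ℕ, FamEven n k s e → (S ∩ e).Nonempty) :
    (n : ℝ) * (1 - 1 / ((s : ℝ) + 1)) - (k : ℝ) * (s : ℝ) ≤ (S.card : ℝ) := by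
  obtain ⟨m, rfl⟩ : ∃ m, k = m + 1 := ⟨k - 1, by omega⟩
  have h1 := cover_count n s (Finset.Icc 1 n \ S) Finset.sdiff_subset
  have h2 : ∑ l ∈ Finset.Icc 1 s, (gapSet (Finset.Icc 1 n \ S) l).card * (s + 1 - l) ≤
      m * (s * (s + 1)) := by
    calc _ ≤ ∑ l ∈ Finset.Icc 1 s, (2 * m) * (s + 1 - l) := by
          apply Finset.sum_le_sum
          intro l hl
          have hl' := Finset.mem_Icc.1 hl
          have := gapSet_card_le (m + 1) s n hk S hT l hl'.1 hl'.2
          exact Nat.mul_le_mul_right _ (by simpa using this)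
      _ = m * (s * (s + 1)) := by rw [← Finset.mul_sum, ← sum_gap]; ring
  have h3 : (Finset.Icc 1 n \ S).card + S.card = n := by
    rw [Finset.card_sdiff_add_card_eq_card hS]; simp
  have h4 := h1.trans (Nat.add_le_add_left h2 _)
  generalize (Finset.Icc 1 n \ S).card = c at h3 h4
  have h3' : (c : ℝ) + S.card = n := by exact_mod_cast h3
  have h4' : (c : ℝ) * (s + 1) ≤ n + s + m * (s * (s + 1)) := by exact_mod_cast h4
  have hs0 : (0 : ℝ) ≤ s := Nat.cast_nonneg s
  have hpos : (0 : ℝ) < (s : ℝ) + 1 := by linarith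
  have key : (n : ℝ) * (1 - 1 / ((s : ℝ) + 1)) * (s + 1) = n * s := by
    field_simp
    ring
  refine le_of_mul_le_mul_right ?_ hpos
  rw [sub_mul, key]
  push_cast
  have hS' : (S.card : ℝ) = n - c := by linarith
  rw [hS']
  nlinarith [mul_nonneg hs0 hs0]
end

section
/- Let k ≥ 1 and s ≥ 1 be integers and let n be a positive integer. Then every transversal of the family F^{n,2k+1}_s has size at least n·(1 − 2/(s+2)) − 2·k·s. -/
theorem exists_enum (U : Finset ℕ) : ∃ u : ℕ → ℕ, (∀ i, i < U.card → u i ∈ U) ∧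
    ∀ i j, i < j → j < U.card → u i < u j := by
  refine ⟨fun i => if h : i < U.card then U.orderEmbOfFin rfl ⟨i, h⟩ else 0, ?_, ?_⟩
  · intro i hi
    simp only [hi, dite_true]
    exact Finset.orderEmbOfFin_mem U rfl _
  · intro i j hij hj
    have hi : i < U.card := by omega
    simp only [hi, hj, dite_true]
    exact (U.orderEmbOfFin rfl).strictMono (by simpa using hij)

theorem count_aux (u : ℕ → ℕ) (s m : ℕ) (hu : ∀ i j, i < j → j < m → u i < u j) (N : ℕ)
    (hN : N + 2 ≤ m) :
    (s + 2) * N ≤ u N + u (N + 1) + (s + 2) *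
      ((Finset.range N).filter (fun i => u (i + 1) - u i ≤ s ∧
        u (i + 2) - u (i + 1) ≤ s)).card := by
  suffices h : (s + 2) * N + u 0 + u 1 ≤ u N + u (N + 1) + (s + 2) *
      ((Finset.range N).filter (fun i => u (i + 1) - u i ≤ s ∧
        u (i + 2) - u (i + 1) ≤ s)).card by omega
  induction N with
  | zero => simp
  | succ N ih =>
    have ih := ih (by omega)
    have h1 := hu N (N + 1) (by omega) (by omega)
    have h2 := hu (N + 1) (N + 2) (by omega) (by omega)
    rw [Finset.range_add_one, Finset.filter_insert]
    split_ifs with h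
    · rw [Finset.card_insert_of_notMem (by simp), Nat.mul_add, Nat.mul_add]
      have : N + 1 + 1 = N + 2 := rfl
      rw [this]
      omega
    · have : N + 1 + 1 = N + 2 := rfl
      rw [Nat.mul_add, this]
      omega

theorem fiber_aux (k s n ℓ m : ℕ) (hk : 1 ≤ k) (hl : 1 ≤ ℓ) (hls : ℓ ≤ s) (S : Finset ℕ)
    (hT : ∀ e : Finset ℕ, FamOdd n k s e → (S ∩ e).Nonempty) (u : ℕ → ℕ)
    (huU : ∀ i, i < m → u i ∈ Finset.Icc 1 n \ S)
    (hu : ∀ i j, i < j → j < m → u i < u j) (B : Finset ℕ)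
    (hB : ∀ i ∈ B, i + 2 < m ∧ u (i + 1) - u i = ℓ ∧ u (i + 2) - u (i + 1) ≤ s) :
    B.card ≤ 2 * (k - 1) := by
  by_contra hcon
  obtain ⟨b, hb1, hb2⟩ := exists_enum B
  have hp : ∀ j, j < k → b (2 * j) ∈ B := fun j hj => hb1 _ (by omega)
  have hpp : ∀ j, j + 1 < k → b (2 * j) + 2 ≤ b (2 * (j + 1)) := by
    intro j hj
    have h1 := hb2 (2 * j) (2 * j + 1) (by omega) (by omega)
    have h2 := hb2 (2 * j + 1) (2 * (j + 1)) (by omega) (by omega)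
    omega
  obtain ⟨q, hq⟩ : ∃ q : ℕ → ℕ, ∀ t, q t =
      if t = 2 * k then b (2 * (k - 1)) + 2 else b (2 * (t / 2)) + t % 2 := ⟨_, fun _ => rfl⟩
  have hqe : ∀ j, j < k → q (2 * j) = b (2 * j) := by
    intro j hj
    rw [hq, if_neg (by omega)]
    have h1 : 2 * j / 2 = j := by omega
    have h2 : 2 * j % 2 = 0 := by omega
    rw [h1, h2]; rfl
  have hqo : ∀ j, j < k → q (2 * j + 1) = b (2 * j) + 1 := by
    intro j hj
    rw [hq, if_neg (by omega)]
    have h1 : (2 * j + 1) / 2 = j := by omega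
    have h2 : (2 * j + 1) % 2 = 1 := by omega
    rw [h1, h2]
  have hql : q (2 * k) = b (2 * (k - 1)) + 2 := by rw [hq, if_pos rfl]
  have hqm : ∀ t, t < 2 * k + 1 → q t < m := by
    intro t ht
    by_cases h : t = 2 * k
    · rw [h, hql]; exact (hB _ (hp (k - 1) (by omega))).1
    · have := (hB _ (hp (t / 2) (by omega))).1
      rw [hq, if_neg h]; omega
  have hqs : ∀ t, t < 2 * k → q t < q (t + 1) := by
    intro t ht
    obtain ⟨j, rfl | rfl⟩ : ∃ j, t = 2 * j ∨ t = 2 * j + 1 := ⟨t / 2, by omega⟩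
    · rw [hqe j (by omega), hqo j (by omega)]; omega
    · rw [hqo j (by omega)]
      by_cases h : j + 1 = k
      · have h1 : 2 * j + 1 + 1 = 2 * k := by omega
        have h2 : k - 1 = j := by omega
        rw [h1, hql, h2]; omega
      · have h1 : 2 * j + 1 + 1 = 2 * (j + 1) := by omega
        rw [h1, hqe (j + 1) (by omega)]
        have := hpp j (by omega)
        omega
  have hfam : FamOdd n k s (Finset.image (fun t : Fin (2 * k + 1) => u (q t.val)) Finset.univ) := by
    refine ⟨fun t => u (q t.val), ?_, ?_, rfl, ?_, ℓ, hl, hls, ?_⟩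
    · rw [Fin.strictMono_iff_lt_succ]
      intro t
      have ht := t.isLt
      exact hu _ _ (by simpa using hqs t.val ht) (hqm _ (by simp))
    · intro t
      exact (Finset.mem_sdiff.1 (huU _ (hqm _ t.isLt))).1
    · have h1 : 2 * k - 1 = 2 * (k - 1) + 1 := by omega
      simp only [h1]
      rw [hql, hqo (k - 1) (by omega)]
      exact (hB _ (hp (k - 1) (by omega))).2.2
    · intro j
      simp only
      rw [hqe j.val j.isLt, hqo j.val j.isLt]
      exact (hB _ (hp j.val j.isLt)).2.1
  obtain ⟨x, hx⟩ := hT _ hfam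
  rw [Finset.mem_inter, Finset.mem_image] at hx
  obtain ⟨hxS, t, -, rfl⟩ := hx
  exact (Finset.mem_sdiff.1 (huU _ (hqm _ t.isLt))).2 hxS

theorem stmt_4 (k s n : ℕ) (hk : 1 ≤ k) (hs : 1 ≤ s) (hn : 0 < n)
    (S : Finset ℕ) (hS : S ⊆ Finset.Icc 1 n)
    (hT : ∀ e : Finset ℕ, FamOdd n k s e → (S ∩ e).Nonempty) :
    (n : ℝ) * (1 - 2 / ((s : ℝ) + 2)) - 2 * (k : ℝ) * (s : ℝ) ≤ (S.card : ℝ) := by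
  obtain ⟨u, huU, hu⟩ := exists_enum (Finset.Icc 1 n \ S)
  have hcard : (Finset.Icc 1 n \ S).card + S.card = n := by
    have := Finset.card_sdiff_add_card_eq_card hS
    simpa using this
  generalize (Finset.Icc 1 n \ S).card = m at *
  have key : (s + 2) * m ≤ 2 * n + (s + 2) * (2 * k * s) := by
    obtain ⟨c, rfl⟩ : ∃ c, k = c + 1 := ⟨k - 1, by omega⟩
    by_cases hm : m < 2
    · exact le_trans (Nat.mul_le_mul_left _ (by nlinarith : m ≤ 2 * (c + 1) * s))
        (Nat.le_add_left _ _)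
    obtain ⟨N, rfl⟩ : ∃ N, m = N + 2 := ⟨m - 2, by omega⟩
    have h1 := count_aux u s (N + 2) hu N le_rfl
    have h2 : ((Finset.range N).filter (fun i => u (i + 1) - u i ≤ s ∧
        u (i + 2) - u (i + 1) ≤ s)).card ≤ 2 * c * (Finset.Icc 1 s).card := by
      refine Finset.card_le_mul_card_image_of_maps_to (f := fun i => u (i + 1) - u i) ?_ _ ?_
      · intro i hi
        have hi := Finset.mem_filter.1 hi
        have hr := Finset.mem_range.1 hi.1
        have := hu i (i + 1) (by omega) (by omega)
        simp only [Finset.coe_Icc, Set.mem_Icc, Finset.mem_Icc]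
        omega
      · intro ℓ hl
        have hl := Finset.mem_Icc.1 hl
        refine fiber_aux (c + 1) s n ℓ (N + 2) hk hl.1 hl.2 S hT u huU hu _ ?_
        intro i hi
        simp only [Finset.mem_filter, Finset.mem_range] at hi
        omega
    rw [Nat.card_Icc, Nat.add_sub_cancel] at h2
    have h3 := (Finset.mem_Icc.1 (Finset.mem_sdiff.1 (huU N (by omega))).1).2
    have h4 := (Finset.mem_Icc.1 (Finset.mem_sdiff.1 (huU (N + 1) (by omega))).1).2
    have h5 := Nat.mul_le_mul_left (s + 2) h2
    have h6 : (s + 2) * 2 ≤ (s + 2) * (2 * s) := Nat.mul_le_mul_left _ (by omega)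
    nlinarith
  have hkey : ((s : ℝ) + 2) * m ≤ 2 * n + (s + 2) * (2 * k * s) := by exact_mod_cast key
  have hc : (m : ℝ) + S.card = n := by exact_mod_cast hcard
  have hpos : (0 : ℝ) < (s : ℝ) + 2 := by positivity
  have : (m : ℝ) ≤ n * (2 / ((s : ℝ) + 2)) + 2 * k * s := by
    have e : (n : ℝ) * (2 / ((s : ℝ) + 2)) + 2 * k * s
        = (2 * n + (s + 2) * (2 * k * s)) / ((s : ℝ) + 2) := by field_simp
    rw [e, le_div_iff₀ hpos]
    linarith
  linarith
end

section
/- Let k ≥ 1 and s ≥ 1 be integers and let n be a positive integer. Then the set [n] \ {j ∈ [n] : (s+1) divides j} is a transversal of F^{n,2k}_s and also a transversal of F^{n,2k+1}_s; consequently T(F^{n,2k}_s) ≤ n − ⌊n/(s+1)⌋ and T(F^{n,2k+1}_s) ≤ n − ⌊n/(s+1)⌋. -/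
/-- The transversal number of `F^{n,2k}_s`. -/
noncomputable def famTransNumEven (n k s : ℕ) : ℕ :=
  sInf {c : ℕ | ∃ S : Finset ℕ, S ⊆ Finset.Icc 1 n ∧
    (∀ e, FamEven n k s e → (S ∩ e).Nonempty) ∧ S.card = c}

/-- The transversal number of `F^{n,2k+1}_s`. -/
noncomputable def famTransNumOdd (n k s : ℕ) : ℕ :=
  sInf {c : ℕ | ∃ S : Finset ℕ, S ⊆ Finset.Icc 1 n ∧
    (∀ e, FamOdd n k s e → (S ∩ e).Nonempty) ∧ S.card = c}

/-- Two numbers in `[n]` whose difference lies in `[1, s]` are not both multiples of `s + 1`. -/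
theorem pair_hits (n s a b l : ℕ) (e : Finset ℕ) (ha : a ∈ Finset.Icc 1 n)
    (hb : b ∈ Finset.Icc 1 n) (hae : a ∈ e) (hbe : b ∈ e) (hl : 1 ≤ l) (hls : l ≤ s)
    (h : b - a = l) :
    ((((Finset.Icc 1 n).filter fun j => ¬ (s + 1) ∣ j)) ∩ e).Nonempty := by
  by_cases h1 : (s + 1) ∣ a
  · by_cases h2 : (s + 1) ∣ b
    · have h3 : (s + 1) ∣ l := h ▸ Nat.dvd_sub h2 h1
      have := Nat.le_of_dvd (by omega) h3
      omega
    · exact ⟨b, Finset.mem_inter.2 ⟨Finset.mem_filter.2 ⟨hb, h2⟩, hbe⟩⟩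
  · exact ⟨a, Finset.mem_inter.2 ⟨Finset.mem_filter.2 ⟨ha, h1⟩, hae⟩⟩

theorem card_nonmultiples (n s : ℕ) :
    ((Finset.Icc 1 n).filter fun j => ¬ (s + 1) ∣ j).card = n - n / (s + 1) := by
  have h1 := Finset.card_filter_add_card_filter_not (s := Finset.Icc 1 n) (fun j => (s + 1) ∣ j)
  have h2 : ((Finset.Icc 1 n).filter fun j => (s + 1) ∣ j).card = n / (s + 1) :=
    Nat.Ioc_filter_dvd_card_eq_div n (s + 1)
  rw [Nat.card_Icc] at h1
  omega

theorem stmt_5 (k s n : ℕ) (hk : 1 ≤ k) (hs : 1 ≤ s) (hn : 0 < n) :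
    (∀ e, FamEven n k s e →
      ((((Finset.Icc 1 n).filter fun j => ¬ (s + 1) ∣ j)) ∩ e).Nonempty) ∧
    (∀ e, FamOdd n k s e →
      ((((Finset.Icc 1 n).filter fun j => ¬ (s + 1) ∣ j)) ∩ e).Nonempty) ∧
    famTransNumEven n k s ≤ n - n / (s + 1) ∧
    famTransNumOdd n k s ≤ n - n / (s + 1) := by
  have hE : ∀ e, FamEven n k s e →
      ((((Finset.Icc 1 n).filter fun j => ¬ (s + 1) ∣ j)) ∩ e).Nonempty := by
    rintro e ⟨i, -, hi, rfl, l, hl, hls, h⟩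
    exact pair_hits n s _ _ l _ (hi _) (hi _) (Finset.mem_image_of_mem _ (Finset.mem_univ _))
      (Finset.mem_image_of_mem _ (Finset.mem_univ _)) hl hls (h ⟨0, hk⟩)
  have hO : ∀ e, FamOdd n k s e →
      ((((Finset.Icc 1 n).filter fun j => ¬ (s + 1) ∣ j)) ∩ e).Nonempty := by
    rintro e ⟨i, -, hi, rfl, -, l, hl, hls, h⟩
    exact pair_hits n s _ _ l _ (hi _) (hi _) (Finset.mem_image_of_mem _ (Finset.mem_univ _))
      (Finset.mem_image_of_mem _ (Finset.mem_univ _)) hl hls (h ⟨0, hk⟩)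
  exact ⟨hE, hO, Nat.sInf_le ⟨_, Finset.filter_subset _ _, hE, card_nonmultiples n s⟩,
    Nat.sInf_le ⟨_, Finset.filter_subset _ _, hO, card_nonmultiples n s⟩⟩
end

section
/- For every integer d ≥ 2 there exist constants C_d, C'_d > 0 and N such that for all integers n ≥ N and all real m with n ≤ m ≤ n^{(d+1)/2}, there exists a family F of d-element subsets of [n] with |F| ≤ C_d·m such that every transversal of F has size at least n·(1 − C'_d·n^{1/(d−1)}·m^{−1/(d−1)}). -/
/-- Disjoint blocks of length `t`, all `d`-subsets of each block. -/
theorem block_family (d n t : ℕ) (hd : 2 ≤ d) (ht : 1 ≤ t) :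
    ∃ F : Finset (Finset ℕ),
      (∀ e ∈ F, e ⊆ Finset.Icc 1 n ∧ e.card = d) ∧
      F.card ≤ (n / t + 1) * t ^ d ∧
      ∀ S : Finset ℕ, S ⊆ Finset.Icc 1 n → (∀ e ∈ F, (S ∩ e).Nonempty) →
        n ≤ S.card + (n / t + 1) * d := by
  classical
  set B : ℕ → Finset ℕ := fun j => (Finset.Icc 1 n).filter (fun x => x / t = j) with hB
  have hBc : ∀ j, (B j).card ≤ t := by
    intro j
    have hsub : B j ⊆ Finset.Ico (j * t) (j * t + t) := by
      intro x hx
      simp only [hB, Finset.mem_filter] at hx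
      have h1 := Nat.div_add_mod x t
      have h2 := Nat.mod_lt x (show 0 < t by omega)
      rw [hx.2, mul_comm] at h1
      simp only [Finset.mem_Ico]
      omega
    have := Finset.card_le_card hsub
    simpa using this
  refine ⟨(Finset.range (n / t + 1)).biUnion (fun j => (B j).powersetCard d), ?_, ?_, ?_⟩
  · intro e he
    simp only [Finset.mem_biUnion, Finset.mem_powersetCard] at he
    obtain ⟨j, -, h1, h2⟩ := he
    exact ⟨h1.trans (Finset.filter_subset _ _), h2⟩
  · refine (Finset.card_biUnion_le_card_mul _ _ (t ^ d) ?_).trans (by simp)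
    intro j _
    rw [Finset.card_powersetCard]
    exact (Nat.choose_le_pow _ _).trans (Nat.pow_le_pow_left (hBc j) d)
  · intro S hS hF
    have hT : (Finset.Icc 1 n \ S).card ≤ d * (Finset.range (n / t + 1)).card := by
      refine Finset.card_le_mul_card_image_of_maps_to (f := fun x => x / t) ?_ d ?_
      · intro x hx
        simp only [Finset.mem_coe, Finset.mem_sdiff, Finset.mem_Icc, Finset.mem_range] at hx ⊢
        exact Nat.lt_succ_of_le (Nat.div_le_div_right hx.1.2)
      · intro j hj
        by_contra hlt
        obtain ⟨e, he, hec⟩ := Finset.exists_subset_card_eq (le_of_not_ge hlt)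
        obtain ⟨x, hx⟩ := hF e (by
          simp only [Finset.mem_biUnion, Finset.mem_powersetCard]
          refine ⟨j, hj, ?_, hec⟩
          intro x hx
          have := he hx
          simp only [Finset.mem_filter, Finset.mem_sdiff] at this
          simp only [hB, Finset.mem_filter]
          exact ⟨this.1.1, this.2⟩)
        rw [Finset.mem_inter] at hx
        have := he hx.2
        simp only [Finset.mem_filter, Finset.mem_sdiff] at this
        exact this.1.2 hx.1
    have h := Finset.card_sdiff_add_card_eq_card hS
    simp only [Nat.card_Icc, Finset.card_range] at h hT
    rw [mul_comm] at hT
    omega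

theorem stmt_6 (d : ℕ) (hd : 2 ≤ d) :
    ∃ C C' : ℝ, 0 < C ∧ 0 < C' ∧ ∃ N : ℕ, ∀ n : ℕ, N ≤ n → ∀ m : ℝ,
      (n : ℝ) ≤ m → m ≤ (n : ℝ) ^ (((d : ℝ) + 1) / 2) →
      ∃ F : Finset (Finset ℕ),
        (∀ e ∈ F, e ⊆ Finset.Icc 1 n ∧ e.card = d) ∧
        (F.card : ℝ) ≤ C * m ∧
        ∀ S : Finset ℕ, S ⊆ Finset.Icc 1 n → (∀ e ∈ F, (S ∩ e).Nonempty) →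
          (n : ℝ) * (1 - C' * (n : ℝ) ^ ((1 : ℝ) / ((d : ℝ) - 1)) *
            m ^ (-(1 : ℝ) / ((d : ℝ) - 1))) ≤ (S.card : ℝ) := by
  refine ⟨2 ^ d, 2 * d, by positivity, by positivity, 1, ?_⟩
  intro n hn m hnm hm
  have hn1 : (1 : ℝ) ≤ n := by exact_mod_cast hn
  have hn0 : (0 : ℝ) < n := by linarith
  have hm0 : 0 < m := by linarith
  have hd2 : (2 : ℝ) ≤ d := by exact_mod_cast hd
  have hd1 : (0 : ℝ) < (d : ℝ) - 1 := by linarith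
  set s : ℝ := (m / n) ^ ((1 : ℝ) / ((d : ℝ) - 1)) with hs
  have hmn : 1 ≤ m / n := by rwa [one_le_div hn0]
  have hs1 : 1 ≤ s := Real.one_le_rpow hmn (by positivity)
  have hs0 : 0 < s := by linarith
  have hspow : s ^ (d - 1) = m / n := by
    rw [hs, ← Real.rpow_natCast, ← Real.rpow_mul (by positivity)]
    rw [Nat.cast_sub (by omega), Nat.cast_one, one_div, inv_mul_cancel₀ hd1.ne', Real.rpow_one]
  have hsinv : (n : ℝ) ^ ((1 : ℝ) / ((d : ℝ) - 1)) * m ^ (-(1 : ℝ) / ((d : ℝ) - 1)) = s⁻¹ := by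
    rw [hs, Real.div_rpow hm0.le hn0.le, neg_div, Real.rpow_neg hm0.le, inv_div]
    rfl
  have hsn : s ≤ n := by
    have h1 : m / n ≤ (n : ℝ) ^ ((d : ℝ) - 1) := by
      rw [div_le_iff₀ hn0]
      calc m ≤ (n : ℝ) ^ (((d : ℝ) + 1) / 2) := hm
        _ ≤ (n : ℝ) ^ (((d : ℝ) - 1) + 1) := Real.rpow_le_rpow_of_exponent_le hn1 (by linarith)
        _ = _ := by rw [Real.rpow_add hn0, Real.rpow_one]
    calc s ≤ ((n : ℝ) ^ ((d : ℝ) - 1)) ^ ((1 : ℝ) / ((d : ℝ) - 1)) :=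
          Real.rpow_le_rpow (by positivity) h1 (by positivity)
      _ = n := by
          rw [← Real.rpow_mul hn0.le, mul_one_div_cancel hd1.ne', Real.rpow_one]
  set t : ℕ := ⌈s⌉₊ with htdef
  have hst : s ≤ t := Nat.le_ceil s
  have ht0 : (0 : ℝ) < t := by linarith
  have ht1 : 1 ≤ t := by exact_mod_cast ht0
  have htn : t ≤ n := Nat.ceil_le.2 hsn
  have ht2 : (t : ℝ) ≤ 2 * s := by
    have := Nat.ceil_lt_add_one hs0.le
    linarith
  have hk : ((n / t + 1 : ℕ) : ℝ) ≤ 2 * n / t := by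
    have h1 : ((n / t : ℕ) : ℝ) ≤ n / t := Nat.cast_div_le
    have h2 : (1 : ℝ) ≤ n / t := by
      rw [one_le_div ht0]; exact_mod_cast htn
    push_cast
    rw [mul_div_assoc]
    linarith
  obtain ⟨F, hF1, hF2, hF3⟩ := block_family d n t hd ht1
  refine ⟨F, hF1, ?_, ?_⟩
  · have hdd : d = (d - 1) + 1 := by omega
    calc (F.card : ℝ) ≤ ((n / t + 1 : ℕ) : ℝ) * (t : ℝ) ^ d := by exact_mod_cast hF2
      _ ≤ 2 * n / t * (t : ℝ) ^ d := by gcongr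
      _ = 2 * n * (t : ℝ) ^ (d - 1) := by
          rw [hdd, pow_succ]; simp only [Nat.add_sub_cancel]; field_simp
      _ ≤ 2 * n * (2 * s) ^ (d - 1) := by gcongr
      _ = 2 * 2 ^ (d - 1) * m := by rw [mul_pow, hspow]; field_simp
      _ = 2 ^ d * m := by rw [← pow_succ', ← hdd]
  · intro S hS hST
    have h := hF3 S hS hST
    have h' : (n : ℝ) ≤ S.card + ((n / t + 1 : ℕ) : ℝ) * d := by exact_mod_cast h
    have h2 : ((n / t + 1 : ℕ) : ℝ) * d ≤ 2 * n / s * d := by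
      refine mul_le_mul_of_nonneg_right (hk.trans ?_) (by positivity)
      gcongr
    rw [mul_assoc (2 * (d : ℝ)), hsinv]
    have h3 : (n : ℝ) * (1 - 2 * d * s⁻¹) = n - 2 * n / s * d := by
      field_simp
    rw [h3]
    linarith
end

section
/- Let k ≥ 2 and s ≥ 1 be integers, and let a, n be positive integers with a dividing n. Then every (2k−1)-element subset of [n] is contained in at most two members of the family H^n_{a,s}; in other words, the pure (2k−1)-dimensional complex generated by H^n_{a,s} is a pseudomanifold. -/
/-- Membership in the family `H^n_{a,s}` (with `k` pairs): `e` consists of `k` pairs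
`{i_j, i_j + ℓ}` with `1 ≤ ℓ ≤ s`, where the `j`-th pair lies in the interval
`I_{b_j} = {(b_j - 1)·(n/a) + 1, …, b_j·(n/a)}` and `b_1 < b_2 < … < b_k` in `[a]`. -/
def HFam (n a s k : ℕ) (e : Finset ℕ) : Prop :=
  ∃ ℓ, 1 ≤ ℓ ∧ ℓ ≤ s ∧
    ∃ i b : Fin k → ℕ,
      StrictMono b ∧ (∀ j, 1 ≤ b j ∧ b j ≤ a) ∧
      (∀ j, (b j - 1) * (n / a) + 1 ≤ i j ∧ i j + ℓ ≤ b j * (n / a)) ∧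
      e = Finset.univ.biUnion fun j => {i j, i j + ℓ}

theorem blk_aux (m b x : ℕ) (hb : 1 ≤ b) (h1 : (b - 1) * m + 1 ≤ x) (h2 : x ≤ b * m) :
    (x - 1) / m = b - 1 := by
  obtain ⟨c, rfl⟩ : ∃ c, b = c + 1 := ⟨b - 1, by omega⟩
  simp only [Nat.add_sub_cancel] at *
  apply Nat.div_eq_of_lt_le
  · omega
  · omega

theorem HFam_props (n a s k : ℕ) (hk : 2 ≤ k) (e : Finset ℕ) (h : HFam n a s k e) :
    ∃ f : ℕ → ℕ, f = (fun x => (x - 1) / (n / a)) ∧ ∃ ℓ, 1 ≤ ℓ ∧ e.card = 2 * k ∧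
      (∀ x ∈ e, ∃ y ∈ e, y ≠ x ∧ f y = f x) ∧
      (∀ x ∈ e, ∀ y ∈ e, f x = f y → x < y → y = x + ℓ) ∧
      (∀ v, ∃ p ∈ e, p + ℓ ∈ e ∧ f p = f (p + ℓ) ∧ f p ≠ f v) := by
  obtain ⟨ℓ, hl, -, i, b, hb, hba, hi, rfl⟩ := h
  obtain ⟨f, hf⟩ : ∃ f : ℕ → ℕ, (fun x => (x - 1) / (n / a)) = f := ⟨_, rfl⟩
  refine ⟨f, hf.symm, ℓ, hl, ?_⟩
  have f1 : ∀ j, f (i j) = b j - 1 := fun j => by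
    rw [← hf]; exact blk_aux _ _ _ (hba j).1 (hi j).1 (by have := (hi j).2; omega)
  have f2 : ∀ j, f (i j + ℓ) = b j - 1 := fun j => by
    rw [← hf]; exact blk_aux _ _ _ (hba j).1 (by have := (hi j).1; omega) (hi j).2
  have hinj : ∀ j j', b j - 1 = b j' - 1 → j = j' := fun j j' h => by
    apply hb.injective
    have := hba j; have := hba j'; omega
  have mem : ∀ x, x ∈ (Finset.univ.biUnion fun j => ({i j, i j + ℓ} : Finset ℕ)) ↔
      ∃ j, x = i j ∨ x = i j + ℓ := by intro x; simp
  refine ⟨?_, ?_, ?_, ?_⟩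
  · rw [Finset.card_biUnion]
    · rw [Finset.sum_congr rfl (fun j _ => Finset.card_pair (by omega : i j ≠ i j + ℓ))]
      simp [mul_comm]
    · intro j _ j' _ hne
      rw [Function.onFun, Finset.disjoint_left]
      intro x hx hx'
      apply hne; apply hinj
      simp only [Finset.mem_insert, Finset.mem_singleton] at hx hx'
      have e1 : f x = b j - 1 := by rcases hx with rfl | rfl <;> simp [f1, f2]
      have e2 : f x = b j' - 1 := by
        rcases hx' with h | h <;> rw [h] <;> simp [f1, f2]
      omega
  · intro x hx
    rw [mem] at hx
    obtain ⟨j, rfl | rfl⟩ := hx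
    · exact ⟨i j + ℓ, (mem _).2 ⟨j, Or.inr rfl⟩, by omega, by rw [f1, f2]⟩
    · exact ⟨i j, (mem _).2 ⟨j, Or.inl rfl⟩, by omega, by rw [f1, f2]⟩
  · intro x hx y hy hxy hlt
    rw [mem] at hx hy
    obtain ⟨j, hx⟩ := hx
    obtain ⟨j', hy⟩ := hy
    have e1 : f x = b j - 1 := by rcases hx with h | h <;> rw [h] <;> simp [f1, f2]
    have e2 : f y = b j' - 1 := by rcases hy with h | h <;> rw [h] <;> simp [f1, f2]
    obtain rfl := hinj j j' (by omega)
    omega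
  · intro v
    have key : ∃ j, b j - 1 ≠ f v := by
      by_contra! hc
      have := hinj ⟨0, by omega⟩ ⟨1, by omega⟩ (by rw [hc, hc])
      simp at this
    obtain ⟨j, hj⟩ := key
    exact ⟨i j, (mem _).2 ⟨j, Or.inl rfl⟩, (mem _).2 ⟨j, Or.inr rfl⟩, by rw [f1, f2],
      by rw [f1]; exact hj⟩

theorem HFam_ext (n a s k : ℕ) (hk : 2 ≤ k) (e G : Finset ℕ) (h : HFam n a s k e)
    (hG : G.card = 2 * k - 1) (hGe : G ⊆ e) :
    ∃ f : ℕ → ℕ, f = (fun x => (x - 1) / (n / a)) ∧ ∃ ℓ x, 1 ≤ ℓ ∧ x ∈ G ∧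
      (∀ y ∈ G, f y = f x → y = x) ∧
      (∀ y ∈ G, y ≠ x → ∃ z ∈ G, z ≠ y ∧ f z = f y) ∧
      (∀ p ∈ G, ∀ q ∈ G, f p = f q → p < q → q = p + ℓ) ∧
      (∃ p ∈ G, p + ℓ ∈ G ∧ f p = f (p + ℓ)) ∧
      (e = insert (x + ℓ) G ∨ ∃ v, v + ℓ = x ∧ e = insert v G) := by
  obtain ⟨f, hf, ℓ, hl, hc, hA, hB, hC⟩ := HFam_props n a s k hk e h
  refine ⟨f, hf, ℓ, ?_⟩
  have h1 : (e \ G).card = 1 := by rw [Finset.card_sdiff_of_subset hGe]; omega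
  obtain ⟨v, hv⟩ := Finset.card_eq_one.1 h1
  have hve : v ∈ e ∧ v ∉ G := by
    have : v ∈ e \ G := by rw [hv]; simp
    simpa using this
  have hmem : ∀ y ∈ e, y ≠ v → y ∈ G := by
    intro y hy hyv
    by_contra hn
    have : y ∈ e \ G := by simp [hy, hn]
    rw [hv] at this
    simp at this; exact hyv this
  have he : e = insert v G := by
    ext y
    simp only [Finset.mem_insert]
    constructor
    · intro hy
      by_cases hyv : y = v
      · exact Or.inl hyv
      · exact Or.inr (hmem y hy hyv)
    · rintro (rfl | hy)
      · exact hve.1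
      · exact hGe hy
  obtain ⟨x, hx, hxv, hfx⟩ := hA v hve.1
  have hxG := hmem x hx hxv
  have uniq : ∀ y ∈ G, f y = f x → y = x := by
    intro y hy hyx
    have hye := hGe hy
    have hyv : y ≠ v := fun h => hve.2 (h ▸ hy)
    have a1 := hB x hx y hye hyx.symm
    have a2 := hB y hye x hx hyx
    have a3 := hB x hx v hve.1 hfx
    have a4 := hB v hve.1 x hx hfx.symm
    have a5 := hB y hye v hve.1 (hyx.trans hfx)
    have a6 := hB v hve.1 y hye (hyx.trans hfx).symm
    omega
  refine ⟨x, hl, hxG, uniq, ?_, ?_, ?_, ?_⟩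
  · intro y hy hyx
    obtain ⟨z, hz, hzy, hfz⟩ := hA y (hGe hy)
    refine ⟨z, hmem z hz ?_, hzy, hfz⟩
    rintro rfl
    exact hyx (uniq y hy (by rw [← hfz, hfx]))
  · exact fun p hp q hq => hB p (hGe hp) q (hGe hq)
  · obtain ⟨p, hp, hp', hpp, hpv⟩ := hC v
    exact ⟨p, hmem p hp (by rintro rfl; exact hpv rfl),
      hmem _ hp' (fun h => hpv (by rw [hpp, h])), hpp⟩
  · rcases lt_or_gt_of_ne hxv with h | h
    · left; rw [← hB x hx v hve.1 hfx h]; exact he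
    · right; exact ⟨v, (hB v hve.1 x hx hfx.symm h).symm, he⟩

theorem stmt_7 (k s a n : ℕ) (hk : 2 ≤ k) (hs : 1 ≤ s) (ha : 0 < a) (hn : 0 < n)
    (hdvd : a ∣ n) (G : Finset ℕ) (hG : G ⊆ Finset.Icc 1 n)
    (hGcard : G.card = 2 * k - 1) :
    ∀ e₁ e₂ e₃ : Finset ℕ, HFam n a s k e₁ → HFam n a s k e₂ → HFam n a s k e₃ →
      G ⊆ e₁ → G ⊆ e₂ → G ⊆ e₃ → e₁ = e₂ ∨ e₁ = e₃ ∨ e₂ = e₃ := by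
  intro e₁ e₂ e₃ h₁ h₂ h₃ g₁ g₂ g₃
  obtain ⟨f, hf, ℓ, x, hl, hx, hu, hp, hB, ⟨p, hpG, hpG', hpp⟩, hE⟩ :=
    HFam_ext n a s k hk e₁ G h₁ hGcard g₁
  have gen : ∀ e, HFam n a s k e → G ⊆ e →
      (e = insert (x + ℓ) G ∨ ∃ v, v + ℓ = x ∧ e = insert v G) := by
    intro e h g
    obtain ⟨f', hf', ℓ', x', hl', hx', hu', hp', hB', -, hE'⟩ :=
      HFam_ext n a s k hk e G h hGcard g
    obtain rfl : f' = f := hf'.trans hf.symm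
    have hll : ℓ' = ℓ := by
      have := hB' p hpG (p + ℓ) hpG' hpp (by omega)
      omega
    have hxx : x' = x := by
      by_contra hne
      obtain ⟨z, hz, hzx, hfz⟩ := hp x' hx' hne
      exact hzx (hu' z hz hfz)
    rw [hll, hxx] at hE'
    exact hE'
  have E2 := gen e₂ h₂ g₂
  have E3 := gen e₃ h₃ g₃
  rcases hE with A | ⟨v, hv, A⟩ <;> rcases E2 with B | ⟨w, hw, B⟩ <;>
    rcases E3 with C | ⟨u, hu, C⟩
  · left; rw [A, B]
  · left; rw [A, B]
  · right; left; rw [A, C]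
  · right; right; rw [B, C, show w = u by omega]
  · right; right; rw [B, C]
  · right; left; rw [A, C, show v = u by omega]
  · left; rw [A, B, show v = w by omega]
  · left; rw [A, B, show v = w by omega]
end

section
/- Let k ≥ 2 and s ≥ 1 be integers, and let a, n be positive integers with a dividing n and a ≥ (k−1)s. Then: (i) the set [n] \ {j ∈ [n] : (s+1) divides j} is a transversal of H^n_{a,s}, so T(H^n_{a,s}) ≤ n − ⌊n/(s+1)⌋; and (ii) every transversal T of H^n_{a,s} satisfies |T| ≥ n·(1 − 1/(s+1)) − (k−1)·(n/a)·(H_s − s/(s+1)) − a, where H_s = Σ_{t=1}^{s} 1/t is the s-th harmonic number. -/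
/-- The transversal number of `H^n_{a,s}`. -/
noncomputable def HTransNum (n a s k : ℕ) : ℕ :=
  sInf {c : ℕ | ∃ S : Finset ℕ, S ⊆ Finset.Icc 1 n ∧
    (∀ e, HFam n a s k e → (S ∩ e).Nonempty) ∧ S.card = c}

def HPair (m : ℕ) (T : Finset ℕ) (b l : ℕ) : Prop :=
  ∃ i, (b - 1) * m + 1 ≤ i ∧ i + l ≤ b * m ∧ i ∉ T ∧ i + l ∉ T

lemma sparse_card (V : Finset ℕ) (c m d : ℕ) (hd : 1 ≤ d)
    (hV : ∀ x ∈ V, c + 1 ≤ x ∧ x ≤ c + m)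
    (hsp : ∀ x ∈ V, ∀ y ∈ V, x < y → x + d ≤ y) : V.card ≤ m / d + 1 := by
  have h : V.card ≤ (Finset.range (m / d + 1)).card := by
    apply Finset.card_le_card_of_injOn (fun x => (x - c - 1) / d)
    · intro x hx
      have := hV x hx
      simp only [Finset.coe_range, Set.mem_Iio]
      have : (x - c - 1) / d ≤ m / d := Nat.div_le_div_right (by omega)
      omega
    · intro x hx y hy hxy
      have h1 := hV x hx
      have h2 := hV y hy
      simp only at hxy
      have e1 := Nat.div_add_mod (x - c - 1) d
      have e2 := Nat.div_add_mod (y - c - 1) d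
      have l1 := Nat.mod_lt (x - c - 1) hd
      have l2 := Nat.mod_lt (y - c - 1) hd
      rw [hxy] at e1
      rcases lt_trichotomy x y with h | h | h
      · have := hsp x hx y hy h
        omega
      · exact h
      · have := hsp y hy x hx h
        omega
  simpa using h

lemma exists_min (s : ℕ) (P : ℕ → Prop) :
    ∃ d, 1 ≤ d ∧ d ≤ s + 1 ∧ (d ≤ s → P d) ∧ ∀ l, 1 ≤ l → l < d → ¬ P l := by
  classical
  have hex : ∃ d, 1 ≤ d ∧ (d ≤ s → P d) := ⟨s + 1, by omega, by omega⟩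
  refine ⟨Nat.find hex, (Nat.find_spec hex).1, Nat.find_min' hex ⟨by omega, by omega⟩,
    (Nat.find_spec hex).2, ?_⟩
  intro l hl hlt hP
  exact Nat.find_min hex hlt ⟨hl, fun _ => hP⟩

lemma few_blocks (n a s k : ℕ) (T : Finset ℕ)
    (hT : ∀ e, HFam n a s k e → (T ∩ e).Nonempty) (l : ℕ) (hl : 1 ≤ l) (hls : l ≤ s)
    (B : Finset ℕ) (hB : ∀ b ∈ B, 1 ≤ b ∧ b ≤ a ∧ HPair (n / a) T b l) : B.card < k := by
  by_contra hcon
  obtain ⟨C, hCB, hC⟩ := Finset.exists_subset_card_eq (not_lt.mp hcon)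
  let b : Fin k → ℕ := C.orderEmbOfFin hC
  have hb : ∀ j, b j ∈ B := fun j => hCB (Finset.orderEmbOfFin_mem C hC j)
  choose i hi using fun j => (hB (b j) (hb j)).2.2
  obtain ⟨x, hx⟩ := hT (Finset.univ.biUnion fun j => {i j, i j + l})
    ⟨l, hl, hls, i, b, (C.orderEmbOfFin hC).strictMono,
      fun j => ⟨(hB _ (hb j)).1, (hB _ (hb j)).2.1⟩, fun j => ⟨(hi j).1, (hi j).2.1⟩, rfl⟩
  simp only [Finset.mem_inter, Finset.mem_biUnion, Finset.mem_univ, true_and,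
    Finset.mem_insert, Finset.mem_singleton] at hx
  obtain ⟨hxT, j, rfl | rfl⟩ := hx
  · exact (hi j).2.2.1 hxT
  · exact (hi j).2.2.2 hxT

lemma block_sum (a s k : ℕ) (d : ℕ → ℕ)
    (hd : ∀ b ∈ Finset.Icc 1 a, 1 ≤ d b ∧ d b ≤ s + 1)
    (hfew : ∀ t, 1 ≤ t → t ≤ s → ((Finset.Icc 1 a).filter fun b => d b = t).card < k) :
    ∑ b ∈ Finset.Icc 1 a, ((1 : ℝ) / (d b : ℝ) - 1 / ((s : ℝ) + 1)) ≤
      ((k : ℝ) - 1) * ((∑ t ∈ Finset.Icc 1 s, (1 : ℝ) / (t : ℝ)) - (s : ℝ) / ((s : ℝ) + 1)) := by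
  have hmaps : ∀ b ∈ Finset.Icc 1 a, d b ∈ Finset.Icc 1 (s + 1) := fun b hb =>
    Finset.mem_Icc.mpr (hd b hb)
  rw [← Finset.sum_fiberwise_of_maps_to hmaps, Finset.sum_Icc_succ_top (by omega)]
  have h0 : ∑ b ∈ (Finset.Icc 1 a).filter (fun b => d b = s + 1),
      ((1 : ℝ) / (d b : ℝ) - 1 / ((s : ℝ) + 1)) = 0 := by
    apply Finset.sum_eq_zero
    intro b hb
    rw [(Finset.mem_filter.mp hb).2]
    push_cast
    ring
  rw [h0, add_zero]
  have h1 : (∑ t ∈ Finset.Icc 1 s, (1 : ℝ) / (t : ℝ)) - (s : ℝ) / ((s : ℝ) + 1) =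
      ∑ t ∈ Finset.Icc 1 s, ((1 : ℝ) / (t : ℝ) - 1 / ((s : ℝ) + 1)) := by
    rw [Finset.sum_sub_distrib]
    simp
    ring
  rw [h1, Finset.mul_sum]
  apply Finset.sum_le_sum
  intro t ht
  obtain ⟨ht1, ht2⟩ := Finset.mem_Icc.mp ht
  have h2 : ∑ b ∈ (Finset.Icc 1 a).filter (fun b => d b = t),
      ((1 : ℝ) / (d b : ℝ) - 1 / ((s : ℝ) + 1)) =
      ((Finset.Icc 1 a).filter (fun b => d b = t)).card *
        ((1 : ℝ) / (t : ℝ) - 1 / ((s : ℝ) + 1)) := by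
    rw [← nsmul_eq_mul]
    apply Finset.sum_eq_card_nsmul
    intro b hb
    rw [(Finset.mem_filter.mp hb).2]
  rw [h2]
  apply mul_le_mul_of_nonneg_right
  · have := hfew t ht1 ht2
    have h3 : ((((Finset.Icc 1 a).filter (fun b => d b = t)).card + 1 : ℕ) : ℝ) ≤ (k : ℝ) := by
      exact_mod_cast this
    push_cast at h3
    linarith
  · rw [sub_nonneg]
    apply one_div_le_one_div_of_le
    · exact_mod_cast ht1
    · exact_mod_cast (by omega : t ≤ s + 1)

lemma card_compl_le (n a m : ℕ) (hn : n = a * m) (hm : 0 < m) (T : Finset ℕ) :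
    (Finset.Icc 1 n \ T).card ≤
      ∑ b ∈ Finset.Icc 1 a, ((Finset.Icc ((b - 1) * m + 1) (b * m)) \ T).card := by
  refine le_trans (Finset.card_le_card ?_) Finset.card_biUnion_le
  intro x hx
  simp only [Finset.mem_sdiff, Finset.mem_Icc, Finset.mem_biUnion] at hx ⊢
  have e := Nat.div_add_mod (x - 1) m
  have l := Nat.mod_lt (x - 1) hm
  refine ⟨(x - 1) / m + 1, ⟨Nat.le_add_left _ _, ?_⟩, ⟨?_, ?_⟩, hx.2⟩
  · have : (x - 1) / m < a := by
      rw [Nat.div_lt_iff_lt_mul hm]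
      omega
    omega
  · rw [Nat.add_sub_cancel, mul_comm]
    omega
  · rw [add_mul, mul_comm]
    omega

lemma part_one (k s a n : ℕ) (hk : 2 ≤ k) (e : Finset ℕ) (he : HFam n a s k e) :
      ((((Finset.Icc 1 n).filter fun j => ¬ (s + 1) ∣ j)) ∩ e).Nonempty := by
  obtain ⟨l, hl, hls, i, b, -, hb, hi, rfl⟩ := he
  let j : Fin k := ⟨0, by omega⟩
  have hbn : b j * (n / a) ≤ n :=
    le_trans (Nat.mul_le_mul_right _ (hb j).2) (Nat.mul_div_le n a)
  have hij := hi j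
  have hi1 : 1 ≤ i j := by omega
  by_cases h : (s + 1) ∣ i j
  · refine ⟨i j + l, ?_⟩
    simp only [Finset.mem_inter, Finset.mem_filter, Finset.mem_Icc, Finset.mem_biUnion,
      Finset.mem_univ, true_and, Finset.mem_insert, Finset.mem_singleton]
    refine ⟨⟨⟨by omega, by omega⟩, fun h2 => ?_⟩, j, Or.inr rfl⟩
    have := Nat.le_of_dvd hl ((Nat.dvd_add_right h).mp h2)
    omega
  · refine ⟨i j, ?_⟩
    simp only [Finset.mem_inter, Finset.mem_filter, Finset.mem_Icc, Finset.mem_biUnion,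
      Finset.mem_univ, true_and, Finset.mem_insert, Finset.mem_singleton]
    exact ⟨⟨⟨by omega, by omega⟩, h⟩, j, Or.inl rfl⟩

theorem stmt_8 (k s a n : ℕ) (hk : 2 ≤ k) (hs : 1 ≤ s) (ha : 0 < a) (hn : 0 < n)
    (hdvd : a ∣ n) (haks : (k - 1) * s ≤ a) :
    (∀ e, HFam n a s k e →
      ((((Finset.Icc 1 n).filter fun j => ¬ (s + 1) ∣ j)) ∩ e).Nonempty) ∧
    HTransNum n a s k ≤ n - n / (s + 1) ∧
    (∀ T : Finset ℕ, T ⊆ Finset.Icc 1 n →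
      (∀ e, HFam n a s k e → (T ∩ e).Nonempty) →
      (n : ℝ) * (1 - 1 / ((s : ℝ) + 1)) -
        ((k : ℝ) - 1) * ((n : ℝ) / (a : ℝ)) *
          ((∑ t ∈ Finset.Icc 1 s, (1 : ℝ) / (t : ℝ)) - (s : ℝ) / ((s : ℝ) + 1)) -
        (a : ℝ) ≤ (T.card : ℝ)) := by
  refine ⟨part_one k s a n hk, ?_, ?_⟩
  · apply Nat.sInf_le
    refine ⟨_, Finset.filter_subset _ _, part_one k s a n hk, ?_⟩
    have h1 := Finset.card_filter_add_card_filter_not (s := Finset.Icc 1 n)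
      (fun j => (s + 1) ∣ j)
    have h2 : ((Finset.Icc 1 n).filter fun j => (s + 1) ∣ j).card = n / (s + 1) :=
      Nat.Ioc_filter_dvd_card_eq_div n (s + 1)
    rw [Nat.card_Icc] at h1
    omega
  · intro T hTn hT
    obtain ⟨m, hm⟩ := hdvd
    have hma : n / a = m := by rw [hm, Nat.mul_div_cancel_left _ ha]
    have hm0 : 0 < m := Nat.pos_of_ne_zero (by rintro rfl; omega)
    choose d hd1 hd2 hd3 hd4 using fun b => exists_min s (HPair m T b)
    have hsum := block_sum a s k d (fun b _ => ⟨hd1 b, hd2 b⟩) (by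
      intro t ht1 ht2
      apply few_blocks n a s k T hT t ht1 ht2
      intro b hb
      obtain ⟨hb1, hb2⟩ := Finset.mem_filter.mp hb
      obtain ⟨hb3, hb4⟩ := Finset.mem_Icc.mp hb1
      refine ⟨hb3, hb4, ?_⟩
      rw [hma, ← hb2]
      exact hd3 b (by omega))
    have hblock : ∀ b ∈ Finset.Icc 1 a,
        (((Finset.Icc ((b - 1) * m + 1) (b * m)) \ T).card : ℝ) ≤ (m : ℝ) * (1 / (d b : ℝ)) + 1 := by
      intro b hb
      obtain ⟨hb1, hb2⟩ := Finset.mem_Icc.mp hb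
      have hbm : b * m = (b - 1) * m + m := by
        obtain ⟨c, rfl⟩ := Nat.exists_eq_add_of_le' hb1
        rw [Nat.add_sub_cancel]
        ring
      have h := sparse_card ((Finset.Icc ((b - 1) * m + 1) (b * m)) \ T) ((b - 1) * m) m (d b)
        (hd1 b) (by
          intro x hx
          simp only [Finset.mem_sdiff, Finset.mem_Icc] at hx
          omega) (by
          intro x hx y hy hxy
          simp only [Finset.mem_sdiff, Finset.mem_Icc] at hx hy
          by_contra hlt
          apply hd4 b (y - x) (by omega) (by omega)
          have hyx : x + (y - x) = y := by omega
          exact ⟨x, hx.1.1, by rw [hyx]; exact hy.1.2, hx.2, by rw [hyx]; exact hy.2⟩)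
      have h' : (((Finset.Icc ((b - 1) * m + 1) (b * m)) \ T).card : ℝ) ≤
          ((m / d b : ℕ) : ℝ) + 1 := by exact_mod_cast h
      have h2 : ((m / d b : ℕ) : ℝ) ≤ (m : ℝ) / (d b : ℝ) := Nat.cast_div_le
      rw [mul_one_div]
      linarith
    have hU : ((Finset.Icc 1 n \ T).card : ℝ) ≤
        ∑ b ∈ Finset.Icc 1 a, ((m : ℝ) * (1 / (d b : ℝ)) + 1) := by
      refine le_trans ?_ (Finset.sum_le_sum hblock)
      exact_mod_cast card_compl_le n a m hm hm0 T
    have hcard : ((Finset.Icc 1 n \ T).card : ℝ) + (T.card : ℝ) = (n : ℝ) := by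
      have := Finset.card_sdiff_add_card_eq_card hTn
      rw [Nat.card_Icc, Nat.add_sub_cancel] at this
      exact_mod_cast this
    rw [Finset.sum_add_distrib, ← Finset.mul_sum] at hU
    rw [Finset.sum_sub_distrib] at hsum
    simp only [Finset.sum_const, Nat.card_Icc, Nat.add_sub_cancel, nsmul_eq_mul, mul_one] at hU hsum
    have hnm : (n : ℝ) / (a : ℝ) = m := by
      rw [hm]
      push_cast
      field_simp
    have hnr : (n : ℝ) = a * m := by exact_mod_cast hm
    have hmul := mul_le_mul_of_nonneg_left hsum (Nat.cast_nonneg (α := ℝ) m)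
    rw [hnm]
    generalize (∑ t ∈ Finset.Icc 1 s, (1 : ℝ) / (t : ℝ)) - (s : ℝ) / ((s : ℝ) + 1) = Q at *
    generalize (1 : ℝ) / ((s : ℝ) + 1) = R at *
    rw [hnr] at hcard ⊢
    linarith
end

section
/- For every integer k ≥ 2 there exist constants c, C > 0 and N such that for every n ≥ N there exists a family Π of 2k-element subsets of [n] with the following properties: (i) every (2k−1)-element subset of [n] is contained in at most two members of Π (so Π generates a (2k−1)-dimensional pseudomanifold); (ii) c·n^{k+1/2}/ln n ≤ |Π| ≤ C·n^{k+1/2}/ln n; and (iii) n − C·√n·ln n ≤ T(Π) ≤ n − c·√n·ln n. -/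
section
open Finset

theorem near_eq (r : ℕ) (hr : 1 ≤ r) (e f : Finset ℕ) (he : e.card = r) (hf : f.card = r)
    (h : r - 1 ≤ (e ∩ f).card) : ∃ a ∈ f, ∃ b ∈ e, insert b (f.erase a) = e := by
  have h1 := Finset.card_sdiff_add_card_inter e f
  have h2 := Finset.card_sdiff_add_card_inter f e
  rw [Finset.inter_comm f e] at h2
  rcases Nat.eq_zero_or_pos (e \ f).card with h0 | h0
  · have hs : e ⊆ f := by
      rw [Finset.card_eq_zero, Finset.sdiff_eq_empty_iff_subset] at h0
      exact h0
    have hef : e = f := Finset.eq_of_subset_of_card_le hs (by omega)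
    obtain ⟨a, ha⟩ : f.Nonempty := by
      rw [← Finset.card_pos]; omega
    exact ⟨a, ha, a, hef ▸ ha, by rw [Finset.insert_erase ha, hef]⟩
  · obtain ⟨b, hb⟩ := Finset.card_eq_one.1 (show (e \ f).card = 1 by omega)
    obtain ⟨a, ha⟩ := Finset.card_eq_one.1 (show (f \ e).card = 1 by omega)
    have hb' : ∀ x, (x ∈ e ∧ x ∉ f) ↔ x = b := fun x => by
      rw [← Finset.mem_sdiff, hb, Finset.mem_singleton]
    have ha' : ∀ x, (x ∈ f ∧ x ∉ e) ↔ x = a := fun x => by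
      rw [← Finset.mem_sdiff, ha, Finset.mem_singleton]
    refine ⟨a, ((ha' a).2 rfl).1, b, ((hb' b).2 rfl).1, ?_⟩
    ext x
    have := ha' x
    have := hb' x
    simp only [Finset.mem_insert, Finset.mem_erase]
    tauto

theorem conflict_card (r : ℕ) (hr : 1 ≤ r) (V f : Finset ℕ) (hf : f.card = r) :
    ((powersetCard r V).filter (fun e => r - 1 ≤ (e ∩ f).card)).card ≤ r * V.card := by
  calc _ ≤ ((f ×ˢ V).image (fun p => insert p.2 (f.erase p.1))).card := by
        apply Finset.card_le_card
        intro e he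
        simp only [mem_filter, mem_powersetCard] at he
        obtain ⟨a, ha, b, hb, h⟩ := near_eq r hr e f he.1.2 hf he.2
        exact Finset.mem_image.2 ⟨(a, b), Finset.mem_product.2 ⟨ha, he.1.1 hb⟩, h⟩
    _ ≤ (f ×ˢ V).card := Finset.card_image_le
    _ = r * V.card := by rw [Finset.card_product, hf]

/-- number of members of `F` meeting `S` in exactly `r-1` points. -/
def nearCount (r : ℕ) (F : Finset (Finset ℕ)) (S : Finset ℕ) : ℕ :=
  (F.filter (fun f => (f ∩ S).card = r - 1)).card

/-- `S` is not hit yet and has few near members. -/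
def Alive (r t : ℕ) (F : Finset (Finset ℕ)) (S : Finset ℕ) : Prop :=
  (∀ f ∈ F, ¬ f ⊆ S) ∧ nearCount r F S < t

/-- edges that can be added. -/
def allowed (r : ℕ) (V : Finset ℕ) (F : Finset (Finset ℕ)) : Finset (Finset ℕ) :=
  (powersetCard r V).filter (fun e => ∀ f ∈ F, (e ∩ f).card < r - 1)

theorem near_card (r : ℕ) (hr : 1 ≤ r) (V S : Finset ℕ) :
    ((powersetCard r V).filter (fun e => (e ∩ S).card = r - 1)).card
      ≤ S.card.choose (r - 1) * V.card := by
  calc _ ≤ ((powersetCard (r - 1) S ×ˢ V).image (fun p => insert p.2 p.1)).card := by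
        apply Finset.card_le_card
        intro e he
        simp only [mem_filter, mem_powersetCard] at he
        have h1 := Finset.card_sdiff_add_card_inter e S
        obtain ⟨b, hb⟩ := Finset.card_eq_one.1 (show (e \ S).card = 1 by omega)
        have hb' : b ∈ e \ S := by rw [hb]; simp
        refine Finset.mem_image.2 ⟨(e ∩ S, b), Finset.mem_product.2
          ⟨Finset.mem_powersetCard.2 ⟨Finset.inter_subset_right, he.2⟩,
            he.1.1 (Finset.mem_sdiff.1 hb').1⟩, ?_⟩
        ext x
        have hx : (x ∈ e ∧ x ∉ S) ↔ x = b := by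
          rw [← Finset.mem_sdiff, hb, Finset.mem_singleton]
        simp only [Finset.mem_insert, Finset.mem_inter]
        tauto
    _ ≤ (powersetCard (r - 1) S ×ˢ V).card := Finset.card_image_le
    _ = _ := by rw [Finset.card_product, Finset.card_powersetCard]

theorem allowed_card (r : ℕ) (hr : 1 ≤ r) (V : Finset ℕ) (F : Finset (Finset ℕ))
    (hF : ∀ f ∈ F, f.card = r) :
    (powersetCard r V).card ≤ (allowed r V F).card + F.card * (r * V.card) := by
  have hsub : powersetCard r V ⊆ allowed r V F ∪
      F.biUnion (fun f => (powersetCard r V).filter (fun e => r - 1 ≤ (e ∩ f).card)) := by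
    intro e he
    by_cases h : ∀ f ∈ F, (e ∩ f).card < r - 1
    · exact mem_union_left _ (mem_filter.2 ⟨he, h⟩)
    · push Not at h
      obtain ⟨f, hf, h⟩ := h
      exact mem_union_right _ (mem_biUnion.2 ⟨f, hf, mem_filter.2 ⟨he, h⟩⟩)
  refine (card_le_card hsub).trans ((card_union_le _ _).trans ?_)
  gcongr
  exact Finset.card_biUnion_le_card_mul _ _ _ (fun f hf => conflict_card r hr V f (hF f hf))

theorem allowed_in (r t : ℕ) (hr : 1 ≤ r) (V S : Finset ℕ) (hS : S ⊆ V) (F : Finset (Finset ℕ))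
    (hF : ∀ f ∈ F, f.card = r) (hA : Alive r t F S) :
    S.card.choose r ≤ ((allowed r V F).filter (fun e => e ⊆ S)).card + t * S.card := by
  have hsub : powersetCard r S ⊆ (allowed r V F).filter (fun e => e ⊆ S) ∪
      (F.filter (fun f => (f ∩ S).card = r - 1)).biUnion
        (fun f => S.image (fun b => insert b (f ∩ S))) := by
    intro e he
    have he' := mem_powersetCard.1 he
    by_cases h : ∀ f ∈ F, (e ∩ f).card < r - 1
    · exact mem_union_left _ (mem_filter.2 ⟨mem_filter.2
        ⟨mem_powersetCard.2 ⟨he'.1.trans hS, he'.2⟩, h⟩, he'.1⟩)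
    · push Not at h
      obtain ⟨f, hf, h⟩ := h
      have h1 : e ∩ f ⊆ f ∩ S := by
        intro x hx
        rw [mem_inter] at hx ⊢
        exact ⟨hx.2, he'.1 hx.1⟩
      have h2 : (f ∩ S).card < r := by
        rw [← hF f hf]
        apply Finset.card_lt_card
        refine ⟨inter_subset_left, fun hh => hA.1 f hf (hh.trans inter_subset_right)⟩
      have h3 := card_le_card h1
      have h4 : e ∩ f = f ∩ S := Finset.eq_of_subset_of_card_le h1 (by omega)
      have h5 := Finset.card_sdiff_add_card_inter e f
      have h6 : (e ∩ f).card = r - 1 := by rw [h4]; omega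
      obtain ⟨b, hb⟩ := Finset.card_eq_one.1 (show (e \ f).card = 1 by omega)
      have hb' : b ∈ e \ f := by rw [hb]; simp
      refine mem_union_right _ (mem_biUnion.2 ⟨f, mem_filter.2 ⟨hf, by omega⟩, ?_⟩)
      refine mem_image.2 ⟨b, he'.1 (mem_sdiff.1 hb').1, ?_⟩
      rw [← h4]
      ext x
      have hx : (x ∈ e ∧ x ∉ f) ↔ x = b := by
        rw [← Finset.mem_sdiff, hb, Finset.mem_singleton]
      simp only [Finset.mem_insert, Finset.mem_inter]
      tauto
  have := (card_le_card hsub).trans (card_union_le _ _)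
  rw [card_powersetCard] at this
  refine this.trans ?_
  gcongr
  refine (Finset.card_biUnion_le_card_mul _ _ S.card (fun f _ => Finset.card_image_le)).trans ?_
  exact Nat.mul_le_mul_right _ hA.2.le

theorem nearCount_insert (r : ℕ) (F : Finset (Finset ℕ)) (S e : Finset ℕ) :
    nearCount r (insert e F) S ≤ nearCount r F S + if (e ∩ S).card = r - 1 then 1 else 0 := by
  unfold nearCount
  rw [filter_insert]
  split_ifs
  · exact card_insert_le _ _
  · simp

theorem nearCount_mono (r : ℕ) (F : Finset (Finset ℕ)) (S e : Finset ℕ) :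
    nearCount r F S ≤ nearCount r (insert e F) S :=
  card_le_card (filter_subset_filter _ (subset_insert _ _))

open Classical in
theorem sum_alive (r t K : ℕ) (hr : 1 ≤ r) (V S : Finset ℕ) (hS : S ⊆ V)
    (F : Finset (Finset ℕ)) (hF : ∀ f ∈ F, f.card = r)
    (hK : K + t * S.card ≤ S.card.choose r) :
    ∑ e ∈ allowed r V F, (if Alive r t (insert e F) S then (1 : ℝ) else 0) ≤
      ((allowed r V F).card - K) * (if Alive r t F S then (1 : ℝ) else 0) := by
  by_cases hA : Alive r t F S
  · have h1 := allowed_in r t hr V S hS F hF hA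
    have h2 : ∑ e ∈ allowed r V F, (if Alive r t (insert e F) S then (1 : ℝ) else 0) ≤
        ∑ e ∈ allowed r V F, (1 - if e ⊆ S then (1 : ℝ) else 0) := by
      apply sum_le_sum
      intro e he
      by_cases h : e ⊆ S
      · have : ¬ Alive r t (insert e F) S := fun h' => h'.1 e (mem_insert_self _ _) h
        simp [h, this]
      · simp only [h, if_false]
        split_ifs <;> norm_num
    refine h2.trans ?_
    rw [sum_sub_distrib, sum_boole]
    simp only [sum_const, nsmul_eq_mul, mul_one, hA, if_true]
    have : (K : ℝ) ≤ ((allowed r V F).filter (fun e => e ⊆ S)).card := by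
      exact_mod_cast (by omega : K ≤ _)
    linarith
  · have : ∀ e, ¬ Alive r t (insert e F) S := fun e h' => hA
      ⟨fun f hf => h'.1 f (mem_insert_of_mem hf), (nearCount_mono r F S e).trans_lt h'.2⟩
    simp [this, hA]

theorem sum_near (r : ℕ) (hr : 1 ≤ r) (V S : Finset ℕ) (F : Finset (Finset ℕ)) :
    ∑ e ∈ allowed r V F, (2 : ℝ) ^ nearCount r (insert e F) S ≤
      ((allowed r V F).card + (S.card.choose (r - 1) * V.card : ℕ)) * 2 ^ nearCount r F S := by
  have h2 : ∑ e ∈ allowed r V F, (2 : ℝ) ^ nearCount r (insert e F) S ≤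
      ∑ e ∈ allowed r V F, (1 + if (e ∩ S).card = r - 1 then (1 : ℝ) else 0) *
        2 ^ nearCount r F S := by
    apply sum_le_sum
    intro e he
    refine (pow_le_pow_right₀ (by norm_num) (nearCount_insert r F S e)).trans ?_
    rw [pow_add, mul_comm]
    gcongr
    split_ifs <;> norm_num
  refine h2.trans ?_
  rw [← sum_mul, sum_add_distrib, sum_boole]
  simp only [sum_const, nsmul_eq_mul, mul_one]
  gcongr
  refine le_trans (card_le_card ?_) (near_card r hr V S)
  exact filter_subset_filter _ (filter_subset _ _)

open Classical in
/-- the potential -/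
noncomputable def potential (r s t : ℕ) (V : Finset ℕ) (a b : ℝ) (j : ℕ)
    (F : Finset (Finset ℕ)) : ℝ :=
  ∑ S ∈ powersetCard s V, ((if Alive r t F S then (1 : ℝ) else 0) * a ^ j +
    2 ^ nearCount r F S * (b ^ j / 2 ^ t))

theorem step (r s t K : ℕ) (hr : 1 ≤ r) (V : Finset ℕ) (a b : ℝ) (j : ℕ)
    (F : Finset (Finset ℕ)) (hF : ∀ f ∈ F, f.card = r)
    (hK : K + t * s ≤ s.choose r)
    (hE : 0 < V.card.choose r)
    (h2 : 2 * (F.card * (r * V.card)) ≤ V.card.choose r)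
    (ha : 1 - (K : ℝ) / (V.card.choose r : ℕ) ≤ a) (ha0 : 0 ≤ a)
    (hb : 1 + 2 * ((s.choose (r - 1) * V.card : ℕ) : ℝ) / (V.card.choose r : ℕ) ≤ b) :
    ∃ e ∈ allowed r V F, potential r s t V a b j (insert e F) ≤
      potential r s t V a b (j + 1) F := by
  classical
  have hb0 : 0 ≤ b := le_trans (by positivity) hb
  have hAc := allowed_card r hr V F hF
  rw [card_powersetCard] at hAc
  have hAE : (allowed r V F).card ≤ V.card.choose r := by
    rw [← card_powersetCard]; exact card_le_card (filter_subset _ _)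
  have hApos : 0 < (allowed r V F).card := by omega
  apply Finset.exists_le_of_sum_le (Finset.card_pos.1 hApos)
  rw [sum_const, nsmul_eq_mul]
  unfold potential
  rw [sum_comm, mul_sum]
  apply sum_le_sum
  intro S hS
  rw [mem_powersetCard] at hS
  obtain ⟨hSV, hSc⟩ := hS
  rw [sum_add_distrib, ← sum_mul, ← sum_mul, mul_add]
  have hEr : (0 : ℝ) < (V.card.choose r : ℕ) := by exact_mod_cast hE
  have hAr : (0 : ℝ) < (allowed r V F).card := by exact_mod_cast hApos
  have hAEr : ((allowed r V F).card : ℝ) ≤ (V.card.choose r : ℕ) := by exact_mod_cast hAE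
  have hEAr : ((V.card.choose r : ℕ) : ℝ) ≤ 2 * (allowed r V F).card := by
    exact_mod_cast (by omega : _ ≤ 2 * (allowed r V F).card)
  apply add_le_add
  · have h := sum_alive r t K hr V S hSV F hF (by rw [hSc]; exact hK)
    have h3 : ((allowed r V F).card : ℝ) - K ≤ (allowed r V F).card * a := by
      have : ((allowed r V F).card : ℝ) * (1 - (K : ℝ) / (V.card.choose r : ℕ)) ≤
        (allowed r V F).card * a := by gcongr
      refine le_trans ?_ this
      rw [mul_sub, mul_one]
      apply sub_le_sub_left
      rw [mul_div_assoc', div_le_iff₀ hEr, mul_comm]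
      gcongr
    calc _ ≤ (((allowed r V F).card - K) * (if Alive r t F S then (1 : ℝ) else 0)) * a ^ j := by
          gcongr
      _ ≤ (((allowed r V F).card * a) * (if Alive r t F S then (1 : ℝ) else 0)) * a ^ j := by
          gcongr
      _ = _ := by ring
  · have h := sum_near r hr V S F
    rw [hSc] at h
    set D : ℝ := ((s.choose (r - 1) * V.card : ℕ) : ℝ) with hD
    have hD0 : 0 ≤ D := by positivity
    have h3 : ((allowed r V F).card : ℝ) + D ≤ (allowed r V F).card * b := by
      have : ((allowed r V F).card : ℝ) * (1 + 2 * D / (V.card.choose r : ℕ)) ≤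
        (allowed r V F).card * b := by gcongr
      refine le_trans ?_ this
      rw [mul_add, mul_one]
      gcongr
      rw [mul_div_assoc', le_div_iff₀ hEr]
      nlinarith
    calc _ ≤ (((allowed r V F).card + D) * 2 ^ nearCount r F S) * (b ^ j / 2 ^ t) := by
          gcongr
      _ ≤ (((allowed r V F).card * b) * 2 ^ nearCount r F S) * (b ^ j / 2 ^ t) := by
          gcongr
      _ = _ := by ring

theorem build (r s t K M : ℕ) (hr : 2 ≤ r) (V : Finset ℕ) (a b : ℝ)
    (hK : K + t * s ≤ s.choose r)
    (hE : 0 < V.card.choose r)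
    (h2 : 2 * (M * (r * V.card)) ≤ V.card.choose r)
    (ha : 1 - (K : ℝ) / (V.card.choose r : ℕ) ≤ a) (ha0 : 0 ≤ a)
    (hb : 1 + 2 * ((s.choose (r - 1) * V.card : ℕ) : ℝ) / (V.card.choose r : ℕ) ≤ b) (i : ℕ)
    (hi : i ≤ M) :
    ∃ F ⊆ powersetCard r V, F.card = i ∧
      (∀ e ∈ F, ∀ f ∈ F, e ≠ f → (e ∩ f).card < r - 1) ∧
      potential r s t V a b (M - i) F ≤ potential r s t V a b M ∅ := by
  induction i with
  | zero => exact ⟨∅, by simp, by simp, by simp, by simp⟩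
  | succ i ih =>
    obtain ⟨F, hFE, hFc, hFp, hpot⟩ := ih (by omega)
    have hF : ∀ f ∈ F, f.card = r := fun f hf => (mem_powersetCard.1 (hFE hf)).2
    obtain ⟨e, he, hpe⟩ := step r s t K (by omega) V a b (M - (i + 1)) F hF hK hE
      (le_trans (by rw [hFc]; gcongr; omega) h2) ha ha0 hb
    have he' := mem_filter.1 he
    have heF : e ∉ F := fun h => by
      have h1 := he'.2 e h
      rw [inter_self, hF e h] at h1
      omega
    refine ⟨insert e F, insert_subset he'.1 hFE, by rw [card_insert_of_notMem heF, hFc], ?_, ?_⟩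
    · intro x hx y hy hxy
      rcases mem_insert.1 hx with hx1 | hx1 <;> rcases mem_insert.1 hy with hy1 | hy1
      · exact absurd (hx1.trans hy1.symm) hxy
      · rw [hx1]; exact he'.2 y hy1
      · rw [inter_comm, hy1]; exact he'.2 x hx1
      · exact hFp x hx1 y hy1 hxy
    · rw [show M - i = M - (i + 1) + 1 by omega] at hpot
      exact hpe.trans hpot

theorem exists_family (r s t K M : ℕ) (hr : 2 ≤ r) (V : Finset ℕ) (a b : ℝ)
    (hK : K + t * s ≤ s.choose r)
    (hE : 0 < V.card.choose r)
    (h2 : 2 * (M * (r * V.card)) ≤ V.card.choose r) (ht : 0 < t)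
    (ha : 1 - (K : ℝ) / (V.card.choose r : ℕ) ≤ a) (ha0 : 0 ≤ a)
    (hb : 1 + 2 * ((s.choose (r - 1) * V.card : ℕ) : ℝ) / (V.card.choose r : ℕ) ≤ b)
    (hlt : (V.card.choose s : ℝ) * (a ^ M + b ^ M / 2 ^ t) < 1) :
    ∃ F ⊆ powersetCard r V, F.card = M ∧
      (∀ e ∈ F, ∀ f ∈ F, e ≠ f → (e ∩ f).card < r - 1) ∧
      ∀ S ∈ powersetCard s V, ∃ e ∈ F, e ⊆ S := by
  classical
  obtain ⟨F, hFE, hFc, hFp, hpot⟩ := build r s t K M hr V a b hK hE h2 ha ha0 hb M le_rfl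
  refine ⟨F, hFE, hFc, hFp, ?_⟩
  by_contra! hcon
  obtain ⟨S, hS, hcon⟩ := hcon
  have h0 : potential r s t V a b M ∅ = (V.card.choose s : ℝ) * (a ^ M + b ^ M / 2 ^ t) := by
    unfold potential
    have : ∀ S, Alive r t ∅ S := fun S => ⟨by simp, by simpa [nearCount] using ht⟩
    simp [this, nearCount]
    ring
  rw [h0] at hpot
  have h1 : 1 ≤ potential r s t V a b (M - M) F := by
    unfold potential
    refine le_trans ?_ (single_le_sum (fun S _ => ?_) hS)
    · simp only [Nat.sub_self, pow_zero, mul_one]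
      by_cases hA : Alive r t F S
      · simp only [hA, if_true]
        have : (0 : ℝ) ≤ 2 ^ nearCount r F S * (1 / 2 ^ t) := by positivity
        linarith
      · have : t ≤ nearCount r F S := by
          by_contra hh
          exact hA ⟨hcon, by omega⟩
        simp only [hA, if_false, zero_add]
        rw [mul_one_div, le_div_iff₀ (by positivity), one_mul]
        exact pow_le_pow_right₀ (by norm_num) this
    · simp only [Nat.sub_self, pow_zero, mul_one]
      have : (0 : ℝ) ≤ 2 ^ nearCount r F S * (1 / 2 ^ t) := by positivity
      split_ifs <;> linarith
  linarith

theorem choose_lower (N r : ℕ) (y : ℝ) (hy : 0 ≤ y) (h : y + r ≤ N) :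
    y ^ r / (r.factorial : ℝ) ≤ (N.choose r : ℝ) := by
  refine le_trans ?_ (Nat.pow_le_choose (α := ℝ) r N)
  gcongr
  have : r ≤ N := by
    have : (r : ℝ) ≤ N := by linarith
    exact_mod_cast this
  rw [Nat.cast_sub (by omega)]
  push_cast
  linarith

theorem numI (k : ℕ) (hk : 2 ≤ k) (x M N E B : ℝ) (hx1 : 1 ≤ x)
    (hM : M ≤ x ^ (2 * k + 1)) (hN0 : 0 ≤ N) (hN : N ≤ x ^ 2) (hB : 0 < B)
    (hE : x ^ (4 * k) / B ≤ E) (hx : 2 * (2 * k) * B ≤ x) :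
    2 * (M * (2 * k * N)) ≤ E := by
  refine le_trans ?_ hE
  rw [le_div_iff₀ hB]
  calc 2 * (M * (2 * k * N)) * B ≤ 2 * (x ^ (2 * k + 1) * (2 * k * x ^ 2)) * B := by gcongr
    _ = x ^ (2 * k + 3) * (2 * (2 * k) * B) := by ring
    _ ≤ x ^ (2 * k + 3) * x := by gcongr
    _ = x ^ (2 * k + 4) := by ring
    _ ≤ x ^ (4 * k) := pow_le_pow_right₀ hx1 (by omega)

theorem numII (k : ℕ) (hk : 2 ≤ k) (x L s M K E c : ℝ) (hx1 : 1 ≤ x) (hL1 : 1 ≤ L)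
    (hs1 : 1 ≤ s) (hs : x * L / 2 ≤ s) (hc : 0 < c)
    (hK : c / 2 * s ^ (2 * k) ≤ K) (hM : x ^ (2 * k + 1) / (2 * L) ≤ M)
    (hE0 : 0 < E) (hE : E ≤ x ^ (4 * k)) (hL : 4 * 2 ^ (2 * k) ≤ c * L) :
    s * L + 1 ≤ K * M / E := by
  rw [le_div_iff₀ hE0]
  have hL0 : 0 < L := by linarith
  have hx0 : 0 < x := by linarith
  have h1 : (x * L / 2) ^ (2 * k - 1) ≤ s ^ (2 * k - 1) := by gcongr
  have hk1 : 2 * k = (2 * k - 1) + 1 := by omega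
  have h2 : s * (x * L / 2) ^ (2 * k - 1) ≤ s ^ (2 * k) := by
    conv_rhs => rw [hk1, pow_succ, mul_comm]
    gcongr
  have hL2 : L ^ 2 ≤ L ^ (2 * k - 2) := pow_le_pow_right₀ hL1 (by omega)
  have e1 : c / 2 * (s * (x * L / 2) ^ (2 * k - 1)) * (x ^ (2 * k + 1) / (2 * L))
      = s * c / (2 * 2 ^ (2 * k)) * (x ^ (4 * k) * L ^ (2 * k - 2)) := by
    have a1 : (2:ℝ) ^ (2 * k) = 2 ^ (2 * k - 1) * 2 := by rw [← pow_succ, ← hk1]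
    have a2 : L ^ (2 * k - 1) = L ^ (2 * k - 2) * L := by
      rw [← pow_succ]; congr 1; omega
    have a3 : x ^ (4 * k) = x ^ (2 * k - 1) * x ^ (2 * k + 1) := by
      rw [← pow_add]; congr 1; omega
    rw [div_pow, mul_pow, a1, a2, a3]
    field_simp
    try ring
  calc (s * L + 1) * E ≤ (2 * (s * L)) * x ^ (4 * k) := by
        gcongr
        nlinarith
    _ = s * x ^ (4 * k) * L * (4 * 2 ^ (2 * k)) / (2 * 2 ^ (2 * k)) := by field_simp; try ring
    _ ≤ s * x ^ (4 * k) * L * (c * L) / (2 * 2 ^ (2 * k)) := by gcongr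
    _ = s * c / (2 * 2 ^ (2 * k)) * (x ^ (4 * k) * L ^ 2) := by ring
    _ ≤ s * c / (2 * 2 ^ (2 * k)) * (x ^ (4 * k) * L ^ (2 * k - 2)) := by gcongr
    _ = _ := e1.symm
    _ ≤ K * M := by
        have : c / 2 * (s * (x * L / 2) ^ (2 * k - 1)) ≤ K :=
          le_trans (mul_le_mul_of_nonneg_left h2 (by positivity)) hK
        have hK0 : 0 ≤ K := le_trans (by positivity) this
        gcongr

theorem numIII (k : ℕ) (hk : 2 ≤ k) (x L s M D E t c B : ℝ) (hx1 : 1 ≤ x) (hL1 : 1 ≤ L)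
    (hs1 : 1 ≤ s) (hs : x * L / 2 ≤ s) (hc : 0 < c) (hB : 0 < B)
    (ht : c / 2 * s ^ (2 * k - 1) - 1 ≤ t) (hM0 : 0 ≤ M) (hM : M ≤ x ^ (2 * k + 1))
    (hD0 : 0 ≤ D) (hD : D ≤ s ^ (2 * k - 1) * x ^ 2)
    (hE : x ^ (4 * k) / B ≤ E) (hx2 : 32 * B ≤ c * x) (hx3 : 96 ≤ c * x) :
    2 * D * M / E + s * L + 1 ≤ t / 2 := by
  have hx0 : 0 < x := by linarith
  have h1 : 2 * D * M / E ≤ c / 16 * s ^ (2 * k - 1) := by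
    have hE0 : 0 < E := lt_of_lt_of_le (by positivity) hE
    rw [div_le_iff₀ hE0]
    calc 2 * D * M ≤ 2 * (s ^ (2 * k - 1) * x ^ 2) * x ^ (2 * k + 1) := by gcongr
      _ = s ^ (2 * k - 1) * x ^ (2 * k + 3) * (32 * B) / (16 * B) := by field_simp; try ring
      _ ≤ s ^ (2 * k - 1) * x ^ (2 * k + 3) * (c * x) / (16 * B) := by gcongr
      _ = c / 16 * s ^ (2 * k - 1) * (x ^ (2 * k + 4) / B) := by field_simp; try ring
      _ ≤ c / 16 * s ^ (2 * k - 1) * (x ^ (4 * k) / B) := by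
          have := pow_le_pow_right₀ hx1 (show 2 * k + 4 ≤ 4 * k by omega)
          gcongr
      _ ≤ _ := by gcongr
  have h2 : s ^ 2 ≤ s ^ (2 * k - 1) := pow_le_pow_right₀ hs1 (by omega)
  have h3 : 3 * L ≤ c / 16 * s := by
    have : c / 16 * (x * L / 2) ≤ c / 16 * s := by gcongr
    nlinarith
  have h4 : 3 * (s * L) ≤ c / 16 * s ^ (2 * k - 1) := by
    have : c / 16 * s ^ 2 ≤ c / 16 * s ^ (2 * k - 1) := by gcongr
    nlinarith
  have h5 : 1 ≤ s * L := by nlinarith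
  have h6 : 0 ≤ c * s ^ (2 * k - 1) := by positivity
  linarith

theorem ev_big (A : ℝ) : ∃ N : ℕ, ∀ n : ℕ, N ≤ n →
    A ≤ Real.log n ∧ A * Real.log n ≤ Real.sqrt n := by
  have h1 : ∀ᶠ n : ℕ in Filter.atTop, A ≤ Real.log n :=
    (Real.tendsto_log_atTop.comp tendsto_natCast_atTop_atTop).eventually_ge_atTop A
  have h0 : ∀ᶠ n : ℕ in Filter.atTop, 0 ≤ Real.log n :=
    (Real.tendsto_log_atTop.comp tendsto_natCast_atTop_atTop).eventually_ge_atTop 0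
  have h2 := (isLittleO_log_rpow_atTop (r := 1 / 2) (by norm_num)).comp_tendsto
    tendsto_natCast_atTop_atTop (k := fun n : ℕ => (n : ℝ))
  have h3 := h2.bound (c := 1 / (|A| + 1)) (by positivity)
  obtain ⟨N, hN⟩ := Filter.eventually_atTop.1 (h1.and (h0.and h3))
  refine ⟨N, fun n hn => ?_⟩
  obtain ⟨a, b, c⟩ := hN n hn
  refine ⟨a, ?_⟩
  simp only [Function.comp, ← Real.sqrt_eq_rpow, Real.norm_eq_abs, abs_of_nonneg b,
    abs_of_nonneg (Real.sqrt_nonneg _)] at c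
  rw [one_div, inv_mul_eq_div, le_div_iff₀ (by positivity)] at c
  nlinarith [le_abs_self A]

set_option maxHeartbeats 1000000 in
theorem core (k : ℕ) (hk : 2 ≤ k) : ∃ n₀ : ℕ, ∀ n : ℕ, n₀ ≤ n → ∃ s M : ℕ,
    (s : ℝ) ≤ Real.sqrt n * Real.log n ∧ Real.sqrt n * Real.log n / 2 ≤ s ∧ s ≤ n ∧
    (M : ℝ) ≤ Real.sqrt n ^ (2 * k + 1) / Real.log n ∧
    Real.sqrt n ^ (2 * k + 1) / (2 * Real.log n) ≤ M ∧
    ∀ V : Finset ℕ, V.card = n - s → ∃ F ⊆ powersetCard (2 * k) V, F.card = M ∧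
      (∀ e ∈ F, ∀ f ∈ F, e ≠ f → (e ∩ f).card < 2 * k - 1) ∧
      ∀ S ∈ powersetCard s V, ∃ e ∈ F, e ⊆ S := by
  set Q : ℝ := 2 ^ (2 * k) * ((2 * k).factorial : ℝ) with hQ
  have hfac : (0 : ℝ) < ((2 * k).factorial : ℝ) := by exact_mod_cast Nat.factorial_pos _
  have hQ0 : 0 < Q := by positivity
  set B : ℝ := 4 ^ (2 * k) * ((2 * k).factorial : ℝ) with hB
  have hB0 : 0 < B := by positivity
  obtain ⟨n₀, hn₀⟩ := ev_big (100 + 2 * (2 * k) * B + 4 * 2 ^ (2 * k) * Q + 32 * B * Q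
    + 96 * Q + 8 * k)
  refine ⟨n₀, fun n hn => ?_⟩
  obtain ⟨hLA, hxA⟩ := hn₀ n hn
  set A : ℝ := 100 + 2 * (2 * k) * B + 4 * 2 ^ (2 * k) * Q + 32 * B * Q
    + 96 * Q + 8 * k with hA
  set L := Real.log n with hL
  set x := Real.sqrt n with hx
  have p1 : 0 ≤ 2 * (2 * k) * B := by positivity
  have p2 : 0 ≤ 4 * 2 ^ (2 * k) * Q := by positivity
  have p3 : 0 ≤ 32 * B * Q := by positivity
  have p4 : 0 ≤ 96 * Q := by positivity
  have p5 : (0 : ℝ) ≤ 8 * k := by positivity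
  have hA100 : 100 ≤ A := by linarith
  have hL1 : 1 ≤ L := by linarith
  have hxA' : A ≤ x := le_trans (by nlinarith) hxA
  have hx1 : 1 ≤ x := by linarith
  have hx0 : 0 < x := by linarith
  have hL0 : 0 < L := by linarith
  have hxL : 100 * L ≤ x := le_trans (by nlinarith) hxA
  have hxx : x ^ 2 = n := Real.sq_sqrt (Nat.cast_nonneg n)
  have hxLk : 100 + 8 * k ≤ x * L := by nlinarith
  set s := ⌊x * L⌋₊ with hs
  have hs1 : (s : ℝ) ≤ x * L := Nat.floor_le (by positivity)
  have hs2 : x * L < s + 1 := Nat.lt_floor_add_one _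
  have hs3 : x * L / 2 ≤ s := by linarith
  have hsone : (1 : ℝ) ≤ s := by linarith
  have hsn' : (s : ℝ) ≤ x ^ 2 / 2 := by nlinarith
  have hsn : s ≤ n := by
    have : (s : ℝ) ≤ n := by rw [← hxx]; nlinarith
    exact_mod_cast this
  set M := ⌊x ^ (2 * k + 1) / L⌋₊ with hM
  have hM1 : (M : ℝ) ≤ x ^ (2 * k + 1) / L := Nat.floor_le (by positivity)
  have hM2 : x ^ (2 * k + 1) / L < M + 1 := Nat.lt_floor_add_one _
  have hbig : 2 ≤ x ^ (2 * k + 1) / L := by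
    rw [le_div_iff₀ hL0]
    have : x ^ 1 ≤ x ^ (2 * k + 1) := pow_le_pow_right₀ hx1 (by omega)
    rw [pow_one] at this
    linarith
  have hM3 : x ^ (2 * k + 1) / (2 * L) ≤ M := by
    have : x ^ (2 * k + 1) / (2 * L) = x ^ (2 * k + 1) / L / 2 := by
      rw [div_div, mul_comm L 2]
    linarith
  have hM4 : (M : ℝ) ≤ x ^ (2 * k + 1) := hM1.trans (div_le_self (by positivity) hL1)
  clear_value s M x L A
  refine ⟨s, M, hs1, hs3, hsn, hM1, hM3, fun V hV => ?_⟩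
  have hVr : (V.card : ℝ) = x ^ 2 - s := by rw [hV, Nat.cast_sub hsn, hxx]
  have hV0 : (0 : ℝ) ≤ V.card := Nat.cast_nonneg _
  have hV1 : (V.card : ℝ) ≤ x ^ 2 := by rw [hVr]; linarith
  have hxk : 8 * (k : ℝ) ≤ x ^ 2 := by
    have h1 : 8 * (k : ℝ) ≤ x := by linarith
    have h2 : x ≤ x ^ 2 := by nlinarith only [hx1]
    linarith
  have hE1 : x ^ (4 * k) / B ≤ (V.card.choose (2 * k) : ℕ) := by
    have := choose_lower V.card (2 * k) (x ^ 2 / 4) (by positivity) (by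
      rw [hVr]; push_cast; linarith)
    refine le_trans (le_of_eq ?_) this
    rw [div_pow, ← pow_mul, hB, div_div, show 2 * (2 * k) = 4 * k by ring]
  have hE2 : ((V.card.choose (2 * k) : ℕ) : ℝ) ≤ x ^ (4 * k) := by
    have : ((V.card.choose (2 * k) : ℕ) : ℝ) ≤ (V.card : ℝ) ^ (2 * k) := by
      exact_mod_cast Nat.choose_le_pow V.card (2 * k)
    refine this.trans ?_
    calc (V.card : ℝ) ^ (2 * k) ≤ (x ^ 2) ^ (2 * k) := by gcongr
      _ = x ^ (4 * k) := by rw [← pow_mul]; congr 1; ring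
  have hE0 : (0 : ℝ) < (V.card.choose (2 * k) : ℕ) := lt_of_lt_of_le (by positivity) hE1
  set c : ℝ := 1 / Q with hc
  have hc0 : 0 < c := by positivity
  have hCs : c * (s : ℝ) ^ (2 * k) ≤ (s.choose (2 * k) : ℕ) := by
    have := choose_lower s (2 * k) (s / 2) (by positivity) (by push_cast; linarith)
    refine le_trans (le_of_eq ?_) this
    rw [div_pow, div_div, hc, ← hQ, one_div, inv_mul_eq_div]
  set t := s.choose (2 * k) / (2 * s) with ht
  have hspos : 0 < s := by
    have : (0 : ℝ) < s := by linarith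
    exact_mod_cast this
  have ht1 : t * (2 * s) ≤ s.choose (2 * k) := Nat.div_mul_le_self _ _
  have ht2 : s.choose (2 * k) < (t + 1) * (2 * s) := by
    have h0 : 0 < 2 * s := by omega
    have h1 := Nat.lt_mul_div_succ (s.choose (2 * k)) h0
    rw [mul_comm (t + 1)]
    exact h1
  clear_value t c
  have ht1r : (t : ℝ) * (2 * s) ≤ (s.choose (2 * k) : ℕ) := by exact_mod_cast ht1
  have ht2r : ((s.choose (2 * k) : ℕ) : ℝ) ≤ (t + 1) * (2 * s) := by exact_mod_cast ht2.le
  have hts : t * s ≤ s.choose (2 * k) := by nlinarith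
  obtain ⟨K, hK⟩ := Nat.exists_eq_add_of_le' hts
  have hKr : ((s.choose (2 * k) : ℕ) : ℝ) = K + t * s := by exact_mod_cast hK
  have hK2 : c / 2 * (s : ℝ) ^ (2 * k) ≤ K := by linarith
  have ht3 : c / 2 * (s : ℝ) ^ (2 * k - 1) - 1 ≤ t := by
    have h1 : (s : ℝ) ^ (2 * k) = (s : ℝ) ^ (2 * k - 1) * s := by
      rw [← pow_succ]; congr 1; omega
    rw [h1] at hCs
    have h2 : (c / 2 * (s : ℝ) ^ (2 * k - 1)) * (2 * s) ≤ (t + 1) * (2 * s) := by linarith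
    have := le_of_mul_le_mul_right h2 (by linarith)
    linarith
  have hD : ((s.choose (2 * k - 1) * V.card : ℕ) : ℝ) ≤ (s : ℝ) ^ (2 * k - 1) * x ^ 2 := by
    push_cast
    have : ((s.choose (2 * k - 1) : ℕ) : ℝ) ≤ (s : ℝ) ^ (2 * k - 1) := by
      exact_mod_cast Nat.choose_le_pow s (2 * k - 1)
    exact mul_le_mul this hV1 hV0 (pow_nonneg (Nat.cast_nonneg s) _)
  have nI := numI k hk x M V.card _ B hx1 hM4 hV0 hV1 hB0 hE1 (by linarith)
  have nII := numII k hk x L s M K _ c hx1 hL1 hsone hs3 hc0 hK2 hM3 hE0 hE2 (by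
    rw [hc, one_div, inv_mul_eq_div, le_div_iff₀ hQ0]; linarith)
  have nIII := numIII k hk x L s M _ _ t c B hx1 hL1 hsone hs3 hc0 hB0 ht3 (Nat.cast_nonneg _)
    hM4 (Nat.cast_nonneg _) hD hE1
    (by rw [hc, one_div, inv_mul_eq_div, le_div_iff₀ hQ0]; linarith)
    (by rw [hc, one_div, inv_mul_eq_div, le_div_iff₀ hQ0]; linarith)
  set E : ℝ := ((V.card.choose (2 * k) : ℕ) : ℝ) with hE
  set D : ℝ := ((s.choose (2 * k - 1) * V.card : ℕ) : ℝ) with hDd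
  have hD0 : 0 ≤ D := Nat.cast_nonneg _
  have htpos : 0 < t := by
    have h9 : 0 < (s : ℝ) * L := by positivity
    have h0 : 0 ≤ 2 * D * M / E :=
      div_nonneg (mul_nonneg (mul_nonneg zero_le_two hD0) (Nat.cast_nonneg M)) hE0.le
    have : (0 : ℝ) < t := by linarith
    exact_mod_cast this
  refine exists_family (2 * k) s t K M (by omega) V (Real.exp (-(K / E))) (Real.exp (2 * D / E))
    hK.ge (Nat.cast_pos.1 hE0) ?_ htpos ?_ (Real.exp_pos _).le ?_ ?_
  · have : ((2 * (M * (2 * k * V.card)) : ℕ) : ℝ) ≤ (V.card.choose (2 * k) : ℕ) := by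
      push_cast
      exact nI
    exact_mod_cast this
  · have := Real.add_one_le_exp (-(K / E))
    linarith
  · have := Real.add_one_le_exp (2 * D / E)
    linarith
  · have g1 : (V.card.choose s : ℝ) ≤ Real.exp (s * L) := by
      have h1 : (V.card.choose s : ℝ) ≤ (n : ℝ) ^ s := by
        have h2 : V.card.choose s ≤ n ^ s :=
          (Nat.choose_le_pow V.card s).trans (Nat.pow_le_pow_left (by omega) _)
        exact_mod_cast h2
      rw [Real.exp_nat_mul, hL, Real.exp_log (by rw [← hxx]; positivity)]
      exact h1
    have g2 : (1 : ℝ) / 2 ^ t ≤ Real.exp (-(t / 2)) := by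
      rw [Real.exp_neg, one_div]
      apply inv_anti₀ (Real.exp_pos _)
      have h1 : Real.exp (1 / 2) ≤ 2 := by
        have : (1 : ℝ) / 2 ≤ Real.log 2 := by linarith [Real.log_two_gt_d9]
        calc Real.exp (1 / 2) ≤ Real.exp (Real.log 2) := Real.exp_le_exp.2 this
          _ = 2 := Real.exp_log (by norm_num)
      calc Real.exp (t / 2) = Real.exp (1 / 2) ^ t := by rw [← Real.exp_nat_mul]; congr 1; ring
        _ ≤ 2 ^ t := by gcongr
    rw [← Real.exp_nat_mul, ← Real.exp_nat_mul, div_eq_mul_one_div (Real.exp _) (2 ^ t)]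
    calc _ ≤ Real.exp (s * L) * (Real.exp (M * -(K / E)) +
          Real.exp (M * (2 * D / E)) * Real.exp (-(t / 2))) := by gcongr
      _ = Real.exp (s * L - K * M / E) + Real.exp (2 * D * M / E + s * L - t / 2) := by
          rw [mul_add, ← Real.exp_add, ← Real.exp_add, ← Real.exp_add]
          congr 2 <;> ring
      _ ≤ Real.exp (-1) + Real.exp (-1) := by
          gcongr <;> linarith
      _ < 1 := by
          have h1 : (2 : ℝ) < Real.exp 1 := by linarith [Real.exp_one_gt_d9]
          rw [Real.exp_neg]
          have : (Real.exp 1)⁻¹ < 2⁻¹ := inv_strictAnti₀ (by norm_num) h1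
          linarith

end

theorem stmt_9 (k : ℕ) (hk : 2 ≤ k) :
    ∃ c C : ℝ, 0 < c ∧ 0 < C ∧ ∃ N : ℕ, ∀ n : ℕ, N ≤ n →
      ∃ P : Finset (Finset ℕ),
        (∀ e ∈ P, e ⊆ Finset.Icc 1 n ∧ e.card = 2 * k) ∧
        (∀ G : Finset ℕ, G.card = 2 * k - 1 →
          ∀ e₁ ∈ P, ∀ e₂ ∈ P, ∀ e₃ ∈ P, G ⊆ e₁ → G ⊆ e₂ → G ⊆ e₃ →
            e₁ = e₂ ∨ e₁ = e₃ ∨ e₂ = e₃) ∧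
        c * (n : ℝ) ^ ((k : ℝ) + 1 / 2) / Real.log n ≤ (P.card : ℝ) ∧
        (P.card : ℝ) ≤ C * (n : ℝ) ^ ((k : ℝ) + 1 / 2) / Real.log n ∧
        (n : ℝ) - C * Real.sqrt n * Real.log n ≤ (transversalNumber n P : ℝ) ∧
        (transversalNumber n P : ℝ) ≤ (n : ℝ) - c * Real.sqrt n * Real.log n := by
  obtain ⟨n₀, hcore⟩ := core k hk
  refine ⟨1 / 2, 2, by norm_num, by norm_num, max n₀ 3, fun n hn => ?_⟩
  obtain ⟨s, M, hs1, hs2, hsn, hM1, hM2, hV⟩ := hcore n (le_trans (le_max_left _ _) hn)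
  have hn3 : 3 ≤ n := le_trans (le_max_right _ _) hn
  have hn3r : (3 : ℝ) ≤ n := by exact_mod_cast hn3
  have hL0 : 0 < Real.log n := Real.log_pos (by linarith)
  have hVsub : Finset.Icc (s + 1) n ⊆ Finset.Icc 1 n :=
    Finset.Icc_subset_Icc (by omega) le_rfl
  obtain ⟨F, hFE, hFc, hFp, hFS⟩ := hV (Finset.Icc (s + 1) n) (by rw [Nat.card_Icc]; omega)
  have hpow : (n : ℝ) ^ ((k : ℝ) + 1 / 2) = Real.sqrt n ^ (2 * k + 1) := by
    rw [Real.sqrt_eq_rpow, ← Real.rpow_natCast, ← Real.rpow_mul (by linarith)]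
    congr 1
    push_cast
    ring
  have hpos : 0 ≤ Real.sqrt n ^ (2 * k + 1) / Real.log n := by positivity
  have hTle : transversalNumber n F ≤ n - s := by
    refine Nat.sInf_le ⟨Finset.Icc (s + 1) n, ⟨hVsub, fun e he => ?_⟩, by rw [Nat.card_Icc]; omega⟩
    have h1 := Finset.mem_powersetCard.1 (hFE he)
    rw [Finset.inter_eq_right.2 h1.1, ← Finset.card_pos]
    omega
  have hTge : n ≤ transversalNumber n F + 2 * s := by
    have hne : {c : ℕ | ∃ S : Finset ℕ, IsTransversal n F S ∧ S.card = c}.Nonempty := by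
      refine ⟨_, Finset.Icc (s + 1) n, ⟨hVsub, fun e he => ?_⟩, rfl⟩
      have h1 := Finset.mem_powersetCard.1 (hFE he)
      rw [Finset.inter_eq_right.2 h1.1, ← Finset.card_pos]
      omega
    obtain ⟨S, hS, hSc⟩ := Nat.sInf_mem hne
    change S.card = transversalNumber n F at hSc
    by_contra! hlt
    have h1 : s ≤ (Finset.Icc (s + 1) n \ S).card := by
      have := Finset.le_card_sdiff S (Finset.Icc (s + 1) n)
      rw [Nat.card_Icc] at this
      omega
    obtain ⟨U, hU, hUc⟩ := Finset.exists_subset_card_eq h1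
    obtain ⟨e, he, heU⟩ := hFS U (Finset.mem_powersetCard.2
      ⟨hU.trans Finset.sdiff_subset, hUc⟩)
    obtain ⟨y, hy⟩ := hS.2 e he
    rw [Finset.mem_inter] at hy
    exact (Finset.mem_sdiff.1 (hU (heU hy.2))).2 hy.1
  refine ⟨F, fun e he => ?_, ?_, ?_, ?_, ?_, ?_⟩
  · have h1 := Finset.mem_powersetCard.1 (hFE he)
    exact ⟨h1.1.trans hVsub, h1.2⟩
  · intro G hG e₁ h₁ e₂ h₂ e₃ h₃ g₁ g₂ g₃
    left
    by_contra hne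
    have h1 := hFp e₁ h₁ e₂ h₂ hne
    have h2 := Finset.card_le_card (Finset.subset_inter g₁ g₂)
    omega
  · rw [hpow, hFc]
    refine le_trans (le_of_eq ?_) hM2
    field_simp
  · rw [hpow, hFc, mul_div_assoc]
    linarith
  · have : (n : ℝ) ≤ transversalNumber n F + 2 * s := by exact_mod_cast hTge
    rw [mul_assoc]
    linarith
  · have : (transversalNumber n F : ℝ) ≤ n - s := by
      rw [← Nat.cast_sub hsn]
      exact_mod_cast hTle
    rw [mul_assoc]
    linarith
end

section
/- Let J = (j_1, …, j_m) be a tuple of integers with each j_t ≥ 2 and j_1 + ⋯ + j_m = d+1, and let n > d. Then Γ^J_n is m-neighborly: every m-element subset of [n] is contained in some facet of Γ^J_n. -/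
/-- `F` is a facet of `Γ^J_n`: `F = I_1 ∪ … ∪ I_m ⊆ [n]`, where `I_t` is the interval
of `J t` consecutive integers starting at `st t`, and `max I_t < min I_{t'}` for `t < t'`. -/
def GammaFacet (n m : ℕ) (J : Fin m → ℕ) (F : Finset ℕ) : Prop :=
  ∃ st : Fin m → ℕ,
    (∀ t, 1 ≤ st t ∧ st t + J t ≤ n + 1) ∧
    (∀ t t' : Fin m, t < t' → st t + J t ≤ st t') ∧
    F = Finset.univ.biUnion fun t => Finset.Ico (st t) (st t + J t)

theorem place_aux (m : ℕ) : ∀ (J : Fin m → ℕ) (_ : ∀ t, 2 ≤ J t) (a N : ℕ)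
    (_ : a + ∑ t, J t ≤ N) (W : Finset ℕ) (_ : ∀ w ∈ W, a ≤ w ∧ w < N)
    (_ : W.card ≤ m ∨ a + ∑ t, J t = N),
    ∃ st : Fin m → ℕ, (∀ t, a ≤ st t ∧ st t + J t ≤ N) ∧
      (∀ t t' : Fin m, t < t' → st t + J t ≤ st t') ∧
      ∀ w ∈ W, ∃ t, st t ≤ w ∧ w < st t + J t := by
  induction m with
  | zero =>
    intro J hJ a N h W hW hc
    refine ⟨fun _ => 0, fun t => t.elim0, fun t => t.elim0, fun w hw => ?_⟩
    have h1 := hW w hw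
    have h2 := Finset.card_pos.2 ⟨w, hw⟩
    simp at hc
    rcases hc with hc | hc
    · simp [hc] at hw
    · omega
  | succ m ih =>
    intro J hJ a N h W hW hc
    rw [Fin.sum_univ_succ] at h hc
    have hJ0 := hJ 0
    obtain ⟨s, has, hsN, hsW, hs⟩ : ∃ s, a ≤ s ∧ s + (J 0 + ∑ t : Fin m, J t.succ) ≤ N ∧
        (∀ w ∈ W, s ≤ w) ∧
        ((s ∈ W ∧ W.card ≤ m + 1) ∨ W = ∅ ∨ s + (J 0 + ∑ t : Fin m, J t.succ) = N) := by
      rcases hc with hc | hc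
      · rcases W.eq_empty_or_nonempty with rfl | hne
        · exact ⟨a, le_rfl, h, by simp, by simp⟩
        · have hm := W.min'_mem hne
          have hl : ∀ w ∈ W, W.min' hne ≤ w := fun w hw => W.min'_le w hw
          have := hW _ hm
          by_cases hcase : W.min' hne + (J 0 + ∑ t : Fin m, J t.succ) ≤ N
          · exact ⟨_, this.1, hcase, hl, Or.inl ⟨hm, hc⟩⟩
          · refine ⟨N - (J 0 + ∑ t : Fin m, J t.succ), by omega, by omega, fun w hw => ?_, ?_⟩
            · have := hl w hw
              omega
            · right; right; omega
      · exact ⟨a, le_rfl, h, fun w hw => (hW w hw).1, Or.inr (Or.inr hc)⟩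
    obtain ⟨st, h1, h2, h3⟩ := ih (fun t => J t.succ) (fun t => hJ _) (s + J 0) N (by omega)
      (W.filter (fun w => s + J 0 ≤ w))
      (fun w hw => by
        rw [Finset.mem_filter] at hw
        exact ⟨hw.2, (hW w hw.1).2⟩)
      (by
        rcases hs with ⟨hs, hc⟩ | rfl | hs
        · left
          have : (W.filter (fun w => s + J 0 ≤ w)).card < W.card := by
            apply Finset.card_lt_card
            rw [Finset.filter_ssubset]
            exact ⟨s, hs, by omega⟩
          omega
        · simp
        · right; omega)
    refine ⟨Fin.cons s st, ?_, ?_, ?_⟩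
    · intro t
      refine Fin.cases ?_ (fun t => ?_) t
      · simp only [Fin.cons_zero]; omega
      · have := h1 t
        simp only [Fin.cons_succ]; omega
    · intro t t'
      refine Fin.cases ?_ (fun t => ?_) t <;> refine Fin.cases ?_ (fun t' => ?_) t'
      · simp
      · intro _
        simpa using (h1 t').1
      · simp
      · intro hlt
        simpa using h2 t t' (by simpa using hlt)
    · intro w hw
      by_cases hlt : w < s + J 0
      · exact ⟨0, by simpa using hsW w hw, by simpa using hlt⟩
      · obtain ⟨t, ht⟩ := h3 w (Finset.mem_filter.2 ⟨hw, by omega⟩)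
        exact ⟨t.succ, by simpa using ht⟩

theorem stmt_10 (d m n : ℕ) (J : Fin m → ℕ) (hJ : ∀ t, 2 ≤ J t)
    (hsum : ∑ t, J t = d + 1) (hn : d < n)
    (W : Finset ℕ) (hW : W ⊆ Finset.Icc 1 n) (hWcard : W.card = m) :
    ∃ F : Finset ℕ, GammaFacet n m J F ∧ W ⊆ F := by
  obtain ⟨st, h1, h2, h3⟩ := place_aux m J hJ 1 (n + 1) (by omega) W
    (fun w hw => by
      have := Finset.mem_Icc.1 (hW hw)
      omega) (Or.inl hWcard.le)
  refine ⟨_, ⟨st, h1, h2, rfl⟩, fun w hw => ?_⟩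
  obtain ⟨t, ht⟩ := h3 w hw
  exact Finset.mem_biUnion.2 ⟨t, Finset.mem_univ _, Finset.mem_Ico.2 ht⟩
end

section
/- Let k ≥ 2 and n ≥ 2k+1, and let J = (2, …, 2, 3) have k−1 entries equal to 2 followed by one entry 3 (entries summing to 2k+1). Then a 2k-element subset F of [n] is contained in exactly one facet of Γ^J_n (i.e., F is a facet of D(n,2k−1)) if and only if F has one of the following forms: (1) F = τ ∪ {i, i+2} for some i with i+2 ≤ n and some facet τ of B([1, i−1], 2k−3); (2) F = τ ∪ {n−1, n} for some facet τ of B([1, n−2], 2k−3); (3) F = τ ∪ {1, i, i+1, i+2} for some i with 2 ≤ i ≤ n−2 and some facet τ of B([2, i−1], 2k−5). -/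
/-- `F` is a facet of `B([a,b], 2k-1)`: `F = {i_1, i_1+1, …, i_k, i_k+1}` with
`a ≤ i_j`, `i_j + 1 < i_{j'}` for `j < j'`, and `i_j + 1 ≤ b`. For `k = 0` the unique
facet is `∅` (the convention `B([a,b],-1) = {∅}`). -/
def BFacet (a b k : ℕ) (F : Finset ℕ) : Prop :=
  ∃ i : Fin k → ℕ,
    (∀ j, a ≤ i j ∧ i j + 1 ≤ b) ∧
    (∀ j j' : Fin k, j < j' → i j + 1 < i j') ∧
    F = Finset.univ.biUnion fun j => {i j, i j + 1}

/-- `f` is strictly increasing on `{0, …, m-1}`. -/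
def SM (m : ℕ) (f : ℕ → ℕ) : Prop := ∀ i j, i < j → j < m → f i < f j

lemma SM_of_step {m : ℕ} {f : ℕ → ℕ} (h : ∀ i, i + 1 < m → f i < f (i + 1)) : SM m f := by
  intro i j hij
  induction j, hij using Nat.le_induction with
  | base => exact fun hj => h i hj
  | succ j hj ih => exact fun hm => (ih (by omega)).trans (h j hm)

lemma SM_unique {m : ℕ} {f g : ℕ → ℕ} (hf : SM m f) (hg : SM m g)
    (h : (Finset.range m).image f = (Finset.range m).image g) : ∀ i < m, f i = g i := by
  have hc : ((Finset.range m).image f).card = m := by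
    rw [Finset.card_image_of_injOn, Finset.card_range]
    intro i hi j hj hij
    simp at hi hj
    rcases lt_trichotomy i j with h1 | h1 | h1
    · have := hf i j h1 hj; omega
    · exact h1
    · have := hf j i h1 hi; omega
  have h1 := Finset.orderEmbOfFin_unique hc (f := fun i : Fin m => f i)
    (fun x => by simp; exact ⟨x, x.2, rfl⟩) (fun a b hab => hf _ _ hab b.2)
  have h2 := Finset.orderEmbOfFin_unique hc (f := fun i : Fin m => g i)
    (fun x => by rw [h]; simp; exact ⟨x, x.2, rfl⟩) (fun a b hab => hg _ _ hab b.2)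
  intro i hi
  exact congrFun (h1.trans h2.symm) ⟨i, hi⟩

lemma SM_exists {m : ℕ} {F : Finset ℕ} (hc : F.card = m) :
    ∃ f, SM m f ∧ F = (Finset.range m).image f := by
  refine ⟨fun i => if h : i < m then F.orderEmbOfFin hc ⟨i, h⟩ else 0, ?_, ?_⟩
  · intro i j hij hj
    simp [hj, hij.trans hj, hij]
  · ext y
    have := Finset.range_orderEmbOfFin F hc
    rw [← Finset.mem_coe, ← this]
    simp only [Set.mem_range, Finset.mem_image, Finset.mem_range]
    constructor
    · rintro ⟨a, rfl⟩
      exact ⟨a, a.2, by simp⟩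
    · rintro ⟨a, ha, rfl⟩
      exact ⟨⟨a, ha⟩, by simp [ha]⟩

lemma SM_card {m : ℕ} {f : ℕ → ℕ} (hf : SM m f) : ((Finset.range m).image f).card = m := by
  rw [Finset.card_image_of_injOn, Finset.card_range]
  intro i hi j hj hij
  simp at hi hj
  rcases lt_trichotomy i j with h1 | h1 | h1
  · have := hf i j h1 hj; omega
  · exact h1
  · have := hf j i h1 hi; omega

/-- sorted description of a Gamma facet -/
def GS (n k : ℕ) (g : ℕ → ℕ) : Prop :=
  SM (2 * k + 1) g ∧ 1 ≤ g 0 ∧ g (2 * k) ≤ n ∧ (∀ j < k, g (2 * j + 1) = g (2 * j) + 1) ∧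
    g (2 * k) = g (2 * k - 1) + 1

lemma gamma_iff (k n : ℕ) (hk : 2 ≤ k) (G : Finset ℕ) :
    GammaFacet n k (fun t => if t.val = k - 1 then 3 else 2) G ↔
      ∃ g, GS n k g ∧ G = (Finset.range (2 * k + 1)).image g := by
  constructor
  · rintro ⟨st, h1, h2, rfl⟩
    let s : ℕ → ℕ := fun t => if h : t < k then st ⟨t, h⟩ else 0
    have hs : ∀ t : Fin k, st t = s t := fun t => by simp [s]
    have h1' : ∀ t < k, 1 ≤ s t ∧ s t + (if t = k - 1 then 3 else 2) ≤ n + 1 := by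
      intro t ht
      have := h1 ⟨t, ht⟩
      rw [hs] at this; exact this
    have h2' : ∀ t, t + 1 < k → s t + 2 ≤ s (t + 1) := by
      intro t ht
      have := h2 ⟨t, by omega⟩ ⟨t + 1, ht⟩ (by simp)
      rw [hs, hs] at this
      simp only [] at this
      rw [if_neg (by omega)] at this
      exact this
    refine ⟨fun i => if i < 2 * k then s (i / 2) + i % 2 else s (k - 1) + 2, ⟨?_, ?_, ?_, ?_, ?_⟩, ?_⟩
    · apply SM_of_step
      intro i hi
      have h3 := h2' (i / 2)
      rcases Nat.even_or_odd' i with ⟨c, rfl | rfl⟩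
      · have e1 : 2 * c / 2 = c := by omega
        have e2 : (2 * c + 1) / 2 = c := by omega
        rw [if_pos (by omega), if_pos (by omega), e1, e2]; omega
      · have e1 : (2 * c + 1) / 2 = c := by omega
        have e2 : (2 * c + 1 + 1) / 2 = c + 1 := by omega
        rw [if_pos (by omega), e1, e2]
        rw [e1] at h3
        split_ifs with h4
        · have := h3 (by omega); omega
        · have : c = k - 1 := by omega
          subst this; omega
    · have := h1' 0 (by omega)
      simp; rw [if_pos (by omega)]; omega
    · have := h1' (k - 1) (by omega)
      simp at this ⊢; omega
    · intro j hj
      have e1 : 2 * j / 2 = j := by omega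
      have e2 : (2 * j + 1) / 2 = j := by omega
      simp only []
      rw [if_pos (by omega), if_pos (by omega), e1, e2]; omega
    · have e2 : (2 * k - 1) / 2 = k - 1 := by omega
      simp only []
      rw [if_neg (by omega), if_pos (by omega), e2]; omega
    · ext y
      simp only [Finset.mem_biUnion, Finset.mem_univ, true_and, Finset.mem_Ico, Finset.mem_image,
        Finset.mem_range]
      constructor
      · rintro ⟨t, ht1, ht2⟩
        rw [hs] at ht1 ht2
        have := t.2
        have e : ((2 * t.val + (y - s t)) / 2 = t.val) ∨ y - s t = 2 ∧ t.val = k - 1 := by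
          split_ifs at ht2 <;> omega
        rcases e with e | e
        · refine ⟨2 * t + (y - s t), by omega, ?_⟩
          rw [if_pos (by omega), e]; omega
        · refine ⟨2 * k, by omega, ?_⟩
          rw [if_neg (by omega), ← e.2]; omega
      · rintro ⟨i, hi, rfl⟩
        by_cases h : i < 2 * k
        · refine ⟨⟨i / 2, by omega⟩, ?_⟩
          rw [if_pos h, hs]; simp only []
          split_ifs <;> omega
        · refine ⟨⟨k - 1, by omega⟩, ?_⟩
          rw [if_neg h, hs]; simp
  · rintro ⟨g, ⟨h1, h2, h3, h4, h5⟩, rfl⟩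
    have e0 : 2 * (k - 1) + 1 = 2 * k - 1 := by omega
    have h4' := h4 (k - 1) (by omega)
    rw [e0] at h4'
    have hm : ∀ i j, i ≤ j → j < 2 * k + 1 → g i ≤ g j := by
      intro i j hij hj
      rcases hij.eq_or_lt with rfl | h
      · exact le_rfl
      · exact (h1 i j h hj).le
    refine ⟨fun t => g (2 * t), ?_, ?_, ?_⟩
    · intro t
      have := t.2
      have a1 := hm 0 (2 * t) (by omega) (by omega)
      dsimp only
      refine ⟨by omega, ?_⟩
      split_ifs with h
      · rw [h]; omega
      · have := h4 t t.2
        have := hm (2 * t + 1) (2 * k) (by omega) (by omega)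
        omega
    · intro t t' htt
      have : t.val < t'.val := htt
      have := t'.2
      dsimp only
      rw [if_neg (by omega)]
      have := h4 t t.2
      have := h1 (2 * t + 1) (2 * t') (by omega) (by omega)
      omega
    · ext y
      simp only [Finset.mem_biUnion, Finset.mem_univ, true_and, Finset.mem_Ico, Finset.mem_image,
        Finset.mem_range]
      constructor
      · rintro ⟨i, hi, rfl⟩
        by_cases h : i < 2 * k
        · rcases Nat.even_or_odd' i with ⟨c, rfl | rfl⟩
          · refine ⟨⟨c, by omega⟩, ?_⟩
            dsimp only
            split_ifs <;> omega
          · refine ⟨⟨c, by omega⟩, ?_⟩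
            have := h4 c (by omega)
            dsimp only
            split_ifs <;> omega
        · refine ⟨⟨k - 1, by omega⟩, ?_⟩
          have : i = 2 * k := by omega
          subst this
          simp; omega
      · rintro ⟨t, ht1, ht2⟩
        have := t.2
        have := h4 t t.2
        have e : y = g (2 * t) ∨ y = g (2 * t + 1) ∨ y = g (2 * t) + 2 ∧ t.val = k - 1 := by
          split_ifs at ht2 <;> omega
        rcases e with e | e | e
        · exact ⟨_, by omega, e.symm⟩
        · exact ⟨_, by omega, e.symm⟩
        · refine ⟨2 * k, by omega, ?_⟩
          rw [e.2] at e; omega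

lemma bfacet_iff (a b m : ℕ) (T : Finset ℕ) :
    BFacet a b m T ↔ ∃ h : ℕ → ℕ, SM (2 * m) h ∧ (∀ i < 2 * m, a ≤ h i ∧ h i ≤ b) ∧
      (∀ j < m, h (2 * j + 1) = h (2 * j) + 1) ∧ T = (Finset.range (2 * m)).image h := by
  constructor
  · rintro ⟨st, h1, h2, rfl⟩
    let s : ℕ → ℕ := fun t => if h : t < m then st ⟨t, h⟩ else 0
    have hs : ∀ t : Fin m, st t = s t := fun t => by simp [s]
    have h1' : ∀ t < m, a ≤ s t ∧ s t + 1 ≤ b := by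
      intro t ht
      have := h1 ⟨t, ht⟩
      rw [hs] at this; exact this
    have h2' : ∀ t, t + 1 < m → s t + 1 < s (t + 1) := by
      intro t ht
      have := h2 ⟨t, by omega⟩ ⟨t + 1, ht⟩ (by simp)
      rw [hs, hs] at this
      exact this
    refine ⟨fun i => s (i / 2) + i % 2, ?_, ?_, ?_, ?_⟩
    · apply SM_of_step
      intro i hi
      have h3 := h2' (i / 2)
      rcases Nat.even_or_odd' i with ⟨c, rfl | rfl⟩
      · have e1 : 2 * c / 2 = c := by omega
        have e2 : (2 * c + 1) / 2 = c := by omega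
        rw [e1, e2]; omega
      · have e1 : (2 * c + 1) / 2 = c := by omega
        have e2 : (2 * c + 1 + 1) / 2 = c + 1 := by omega
        rw [e1, e2]
        rw [e1] at h3
        have := h3 (by omega); omega
    · intro i hi
      have := h1' (i / 2) (by omega)
      simp only []; omega
    · intro j hj
      have e1 : 2 * j / 2 = j := by omega
      have e2 : (2 * j + 1) / 2 = j := by omega
      simp only []
      rw [e1, e2]; omega
    · ext y
      simp only [Finset.mem_biUnion, Finset.mem_univ, true_and, Finset.mem_insert,
        Finset.mem_singleton, Finset.mem_image, Finset.mem_range]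
      constructor
      · rintro ⟨t, ht⟩
        rw [hs] at ht
        have := t.2
        have e1 : 2 * t.val / 2 = t := by omega
        have e2 : (2 * t.val + 1) / 2 = t := by omega
        rcases ht with ht | ht
        · refine ⟨2 * t, by omega, ?_⟩
          rw [e1]; omega
        · refine ⟨2 * t + 1, by omega, ?_⟩
          rw [e2]; omega
      · rintro ⟨i, hi, rfl⟩
        refine ⟨⟨i / 2, by omega⟩, ?_⟩
        rw [hs]; simp only []
        omega
  · rintro ⟨h, h1, h2, h3, rfl⟩
    refine ⟨fun t => h (2 * t), ?_, ?_, ?_⟩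
    · intro t
      have := t.2
      have a1 := h2 (2 * t) (by omega)
      have a2 := h2 (2 * t + 1) (by omega)
      have := h3 t t.2
      dsimp only
      omega
    · intro t t' htt
      have : t.val < t'.val := htt
      have := t'.2
      have := h3 t t.2
      have := h1 (2 * t + 1) (2 * t') (by omega) (by omega)
      dsimp only
      omega
    · ext y
      simp only [Finset.mem_biUnion, Finset.mem_univ, true_and, Finset.mem_insert,
        Finset.mem_singleton, Finset.mem_image, Finset.mem_range]
      constructor
      · rintro ⟨i, hi, rfl⟩
        refine ⟨⟨i / 2, by omega⟩, ?_⟩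
        have := h3 (i / 2) (by omega)
        simp only []
        rcases Nat.even_or_odd' i with ⟨c, rfl | rfl⟩
        · have e1 : 2 * c / 2 = c := by omega
          rw [e1]; omega
        · have e1 : (2 * c + 1) / 2 = c := by omega
          rw [e1] at this ⊢; omega
      · rintro ⟨t, ht⟩
        have := t.2
        have := h3 t t.2
        rcases ht with ht | ht
        · exact ⟨_, by omega, ht.symm⟩
        · exact ⟨2 * t + 1, by omega, by omega⟩

/-- even pairs below `q`, odd pairs strictly above `q`. -/
def Ev (f : ℕ → ℕ) (q : ℕ) : Prop := ∀ j < q, f (2 * j + 1) = f (2 * j) + 1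
def Od (f : ℕ → ℕ) (q k : ℕ) : Prop := ∀ j, q < j → j < k → f (2 * j) = f (2 * j - 1) + 1

/-- `x` can be added to the set enumerated by `f`. -/
def Sol (k n : ℕ) (f : ℕ → ℕ) (x : ℕ) : Prop :=
  (∃ q < k, x + 1 = f (2 * q) ∧ (0 < q → f (2 * q - 1) < x) ∧ 1 ≤ x ∧ Ev f q ∧ Od f q k ∧
    f (2 * k - 1) = f (2 * k - 2) + 1) ∨
  (x = f (2 * k - 1) + 1 ∧ x ≤ n ∧ Ev f k) ∨
  (∃ q < k, x = f (2 * q) + 1 ∧ x < f (2 * q + 1) ∧ Ev f q ∧ Od f q k ∧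
    ((q + 1 < k ∧ f (2 * k - 1) = f (2 * k - 2) + 1) ∨ (q + 1 = k ∧ f (2 * k - 1) = x + 1)))

/-- If `f` has even pairs below `q0`, then either it is the run `1,2,…` up to `2 q0`
or there is room before the run that ends at `2 q0`. -/
lemma run_start {k : ℕ} {f : ℕ → ℕ} (hf : SM (2 * k) f) (h0 : 1 ≤ f 0) (q0 : ℕ) (hq : q0 < k) :
    (f 0 = 1 ∧ Od f 0 (q0 + 1)) ∨
    ∃ q ≤ q0, 2 ≤ f (2 * q) ∧ (0 < q → f (2 * q - 1) + 1 < f (2 * q)) ∧ Od f q (q0 + 1) := by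
  induction q0 with
  | zero =>
    by_cases h : f 0 = 1
    · left; exact ⟨h, fun j h1 h2 => by omega⟩
    · right; exact ⟨0, le_rfl, by simp; omega, by simp, fun j h1 h2 => by omega⟩
  | succ q0 ih =>
    have h1 := hf (2 * (q0 + 1) - 1) (2 * (q0 + 1)) (by omega) (by omega)
    by_cases h : f (2 * (q0 + 1)) = f (2 * (q0 + 1) - 1) + 1
    · have key : ∀ q, Od f q (q0 + 1) → Od f q (q0 + 1 + 1) := by
        intro q hq j h1 h2
        rcases Nat.lt_succ_iff_lt_or_eq.mp h2 with h3 | rfl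
        · exact hq j h1 h3
        · exact h
      rcases ih (by omega) with ⟨a, b⟩ | ⟨q, a, b, c, d⟩
      · left; exact ⟨a, key _ b⟩
      · right; exact ⟨q, by omega, b, c, key _ d⟩
    · right
      exact ⟨q0 + 1, le_rfl, by omega, fun _ => by omega, fun j h1 h2 => by omega⟩

lemma break_or (f : ℕ → ℕ) (k : ℕ) :
    Ev f k ∨ ∃ q < k, Ev f q ∧ f (2 * q + 1) ≠ f (2 * q) + 1 := by
  induction k with
  | zero => left; intro j hj; omega
  | succ k ih =>
    rcases ih with h | ⟨q, a, b⟩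
    · by_cases h' : f (2 * k + 1) = f (2 * k) + 1
      · left
        intro j hj
        rcases Nat.lt_succ_iff_lt_or_eq.mp hj with h3 | rfl
        · exact h j h3
        · exact h'
      · right; exact ⟨k, by omega, h, h'⟩
    · right; exact ⟨q, by omega, b⟩

lemma full_run {k : ℕ} {f : ℕ → ℕ} (h0 : f 0 = 1) (he : Ev f k) (ho : Od f 0 k) :
    ∀ j < k, f (2 * j + 1) = 2 * j + 2 := by
  intro j
  induction j with
  | zero => intro hj; have := he 0 hj; simp at this ⊢; omega
  | succ j ih =>
    intro hj
    have h1 := he (j + 1) hj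
    have h2 := ho (j + 1) (by omega) hj
    have h3 := ih (by omega)
    have e : 2 * (j + 1) - 1 = 2 * j + 1 := by omega
    rw [e] at h2
    omega

def C1 (k : ℕ) (f : ℕ → ℕ) : Prop := Ev f (k - 1) ∧ f (2 * k - 1) = f (2 * k - 2) + 2
def C2 (k n : ℕ) (f : ℕ → ℕ) : Prop := Ev f k ∧ f (2 * k - 1) = n
def C3 (k : ℕ) (f : ℕ → ℕ) : Prop := f 0 = 1 ∧ Od f 0 k ∧ f (2 * k - 1) = f (2 * k - 2) + 1

lemma core_s11 (k n : ℕ) (hk : 2 ≤ k) (hn : 2 * k + 1 ≤ n) (f : ℕ → ℕ) (hf : SM (2 * k) f)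
    (h0 : 1 ≤ f 0) (hfn : f (2 * k - 1) ≤ n) :
    (∃! x, Sol k n f x) ↔ (C1 k f ∨ C2 k n f ∨ C3 k f) := by
  have e1 : 2 * (k - 1) + 1 = 2 * k - 1 := by omega
  have e2 : 2 * (k - 1) = 2 * k - 2 := by omega
  have e3 : k - 1 + 1 = k := by omega
  have hle : ∀ i j, i ≤ j → j < 2 * k → f i ≤ f j := by
    intro i j hij hj
    rcases hij.eq_or_lt with rfl | h
    · exact le_rfl
    · exact (hf i j h hj).le
  constructor
  · rintro ⟨x, hx, hu⟩
    rcases hx with ⟨q, hq, x1, x2, x3, he, ho, hl⟩ | ⟨x1, x2, he⟩ | ⟨q, hq, x1, x2, he, ho, hl⟩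
    · rcases break_or f k with hb | ⟨q0, hq0, hb, hb'⟩
      · by_cases hfn' : f (2 * k - 1) = n
        · exact Or.inr (Or.inl ⟨hb, hfn'⟩)
        · have := hu (f (2 * k - 1) + 1) (Or.inr (Or.inl ⟨rfl, by omega, hb⟩))
          have := hle (2 * q) (2 * k - 1) (by omega) (by omega)
          omega
      · have hqq : q ≤ q0 := by
          by_contra h
          exact hb' (he q0 (by omega))
        have hq0k : q0 + 1 < k := by
          by_contra h
          have : q0 = k - 1 := by omega
          subst this
          rw [e1, e2] at hb'
          exact hb' hl
        have := hf (2 * q0) (2 * q0 + 1) (by omega) (by omega)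
        have := hu (f (2 * q0) + 1) (Or.inr (Or.inr ⟨q0, hq0, rfl, by omega, hb,
          fun j h1 h2 => ho j (by omega) h2, Or.inl ⟨hq0k, hl⟩⟩))
        have := hle (2 * q) (2 * q0) (by omega) (by omega)
        omega
    · have hl := he (k - 1) (by omega)
      rw [e1, e2] at hl
      rcases run_start hf h0 (k - 1) (by omega) with ⟨a, b⟩ | ⟨q, a, b, c, d⟩
      · rw [e3] at b
        exact Or.inr (Or.inr ⟨a, b, hl⟩)
      · rw [e3] at d
        have := hu (f (2 * q) - 1) (Or.inl ⟨q, by omega, by omega, fun h => by have := c h; omega,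
          by omega, fun j hj => he j (by omega), d, hl⟩)
        have := hle (2 * q) (2 * k - 1) (by omega) (by omega)
        omega
    · rcases hl with ⟨hqk, hl⟩ | ⟨hqk, hl⟩
      · rcases run_start hf h0 q hq with ⟨a, b⟩ | ⟨q', a, b, c, d⟩
        · refine Or.inr (Or.inr ⟨a, ?_, hl⟩)
          intro j h1 h2
          by_cases h : j < q + 1
          · exact b j h1 h
          · exact ho j (by omega) h2
        · have := hu (f (2 * q') - 1) (Or.inl ⟨q', by omega, by omega,
            fun h => by have := c h; omega, by omega, fun j hj => he j (by omega), ?_, hl⟩)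
          · have := hle (2 * q') (2 * q) (by omega) (by omega)
            omega
          · intro j h1 h2
            by_cases h : j < q + 1
            · exact d j h1 h
            · exact ho j (by omega) h2
      · have : q = k - 1 := by omega
        subst this
        rw [e2] at x1
        exact Or.inl ⟨he, by omega⟩
  · rintro (⟨he, hl⟩ | ⟨he, hl⟩ | ⟨h1, ho, hl⟩)
    · refine ⟨f (2 * k - 2) + 1, Or.inr (Or.inr ⟨k - 1, by omega, by rw [e2],
        by rw [e1]; omega, he, fun j h1 h2 => by omega, Or.inr ⟨by omega, by omega⟩⟩), ?_⟩
      rintro y (⟨q, hq, x1, x2, x3, he, ho, hl⟩ | ⟨x1, x2, he⟩ | ⟨q, hq, x1, x2, he, ho, hl⟩)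
      · omega
      · have := he (k - 1) (by omega)
        rw [e1, e2] at this; omega
      · rcases hl with ⟨hqk, hl⟩ | ⟨hqk, hl⟩
        · omega
        · omega
    · have hl' := he (k - 1) (by omega)
      rw [e1, e2] at hl'
      rcases run_start hf h0 (k - 1) (by omega) with ⟨a, b⟩ | ⟨q, a, b, c, d⟩
      · rw [e3] at b
        have := full_run a he b (k - 1) (by omega)
        rw [e1] at this
        omega
      · rw [e3] at d
        refine ⟨f (2 * q) - 1, Or.inl ⟨q, by omega, by omega, fun h => by have := c h; omega,
          by omega, fun j hj => he j (by omega), d, hl'⟩, ?_⟩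
        rintro y (⟨q', hq', x1, x2, x3, he', ho', -⟩ | ⟨x1, x2, -⟩ | ⟨q', hq', x1, x2, -⟩)
        · have : q = q' := by
            rcases lt_trichotomy q q' with h | h | h
            · have := d q' h hq'
              have := x2 (by omega)
              omega
            · exact h
            · have := ho' q h (by omega)
              have := c (by omega)
              omega
          subst this
          omega
        · omega
        · have := he q' hq'
          omega
    · have hA : ∀ y, ¬ ∃ q < k, y + 1 = f (2 * q) ∧ (0 < q → f (2 * q - 1) < y) ∧ 1 ≤ y ∧
          Ev f q ∧ Od f q k ∧ f (2 * k - 1) = f (2 * k - 2) + 1 := by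
        rintro y ⟨q, hq, x1, x2, x3, -⟩
        rcases Nat.eq_zero_or_pos q with rfl | h
        · simp at x1; omega
        · have := ho q h hq
          have := x2 h
          omega
      rcases break_or f k with hb | ⟨q, hq, hb, hb'⟩
      · have := full_run h1 hb ho (k - 1) (by omega)
        rw [e1] at this
        refine ⟨f (2 * k - 1) + 1, Or.inr (Or.inl ⟨rfl, by omega, hb⟩), ?_⟩
        rintro y (h | ⟨x1, x2, -⟩ | ⟨q', hq', x1, x2, -⟩)
        · exact absurd h (hA y)
        · exact x1
        · have := hb q' hq'
          omega
      · have hqk : q + 1 < k := by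
          by_contra h
          have : q = k - 1 := by omega
          subst this
          rw [e1, e2] at hb'
          exact hb' hl
        have := hf (2 * q) (2 * q + 1) (by omega) (by omega)
        refine ⟨f (2 * q) + 1, Or.inr (Or.inr ⟨q, hq, rfl, by omega, hb,
          fun j a b => ho j (by omega) b, Or.inl ⟨hqk, hl⟩⟩), ?_⟩
        rintro y (h | ⟨x1, x2, h⟩ | ⟨q', hq', x1, x2, h, -⟩)
        · exact absurd h (hA y)
        · exact absurd (h q hq) hb'
        · have : q = q' := by
            rcases lt_trichotomy q q' with h' | h' | h'
            · exact absurd (h q h') hb'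
            · exact h'
            · have := hb q' h'
              omega
          subst this
          exact x1

/-- insert `x` at position `p`. -/
def ins (f : ℕ → ℕ) (p x : ℕ) (i : ℕ) : ℕ := if i < p then f i else if i = p then x else f (i - 1)

lemma ins_lt {f : ℕ → ℕ} {p x i : ℕ} (h : i < p) : ins f p x i = f i := by simp [ins, h]
lemma ins_eq {f : ℕ → ℕ} {p x i : ℕ} (h : i = p) : ins f p x i = x := by simp [ins, h]
lemma ins_gt {f : ℕ → ℕ} {p x i : ℕ} (h : p < i) : ins f p x i = f (i - 1) := by
  rw [ins, if_neg (by omega), if_neg (by omega)]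

lemma ins_lemma {m : ℕ} {f : ℕ → ℕ} (hf : SM m f) (p x : ℕ) (hp : p ≤ m)
    (h1 : 0 < p → f (p - 1) < x) (h2 : p < m → x < f p) :
    SM (m + 1) (ins f p x) ∧ (Finset.range (m + 1)).image (ins f p x) =
      insert x ((Finset.range m).image f) ∧ x ∉ (Finset.range m).image f := by
  have hs : SM (m + 1) (ins f p x) := by
    apply SM_of_step
    intro i hi
    rcases lt_trichotomy (i + 1) p with h | h | h
    · rw [ins_lt h, ins_lt (by omega)]; exact hf _ _ (by omega) (by omega)
    · rw [ins_eq h, ins_lt (by omega)]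
      have := h1 (by omega)
      rwa [← h] at this
    · rw [ins_gt h]
      by_cases h' : i = p
      · rw [ins_eq h']; subst h'; exact h2 (by omega)
      · rw [ins_gt (by omega)]; exact hf _ _ (by omega) (by omega)
  have hi : (Finset.range (m + 1)).image (ins f p x) = insert x ((Finset.range m).image f) := by
    ext y
    simp only [Finset.mem_insert, Finset.mem_image, Finset.mem_range]
    constructor
    · rintro ⟨i, hi, rfl⟩
      rcases lt_trichotomy i p with h | h | h
      · right; exact ⟨i, by omega, (ins_lt h).symm⟩
      · left; exact ins_eq h
      · right; exact ⟨i - 1, by omega, (ins_gt h).symm⟩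
    · rintro (rfl | ⟨i, hi, rfl⟩)
      · exact ⟨p, by omega, ins_eq rfl⟩
      · by_cases h : i < p
        · exact ⟨i, by omega, ins_lt h⟩
        · exact ⟨i + 1, by omega, ins_gt (by omega)⟩
  refine ⟨hs, hi, fun hx => ?_⟩
  have c1 := SM_card hs
  rw [hi, Finset.insert_eq_of_mem hx, SM_card hf] at c1
  omega

lemma skip_lemma {m : ℕ} {f g : ℕ → ℕ} (hf : SM m f) (hg : SM (m + 1) g)
    (h : (Finset.range m).image f ⊆ (Finset.range (m + 1)).image g) :
    ∃ p ≤ m, g p ∉ (Finset.range m).image f ∧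
      (Finset.range (m + 1)).image g = insert (g p) ((Finset.range m).image f) ∧
      (∀ i < p, f i = g i) ∧ (∀ i, p ≤ i → i < m → f i = g (i + 1)) := by
  have hc1 := SM_card hf
  have hc2 := SM_card hg
  obtain ⟨y, hy, hy'⟩ := Finset.exists_mem_notMem_of_card_lt_card
    (show ((Finset.range m).image f).card < ((Finset.range (m + 1)).image g).card by omega)
  obtain ⟨p, hp, rfl⟩ := Finset.mem_image.mp hy
  have hp' : p < m + 1 := Finset.mem_range.mp hp
  have hins : insert (g p) ((Finset.range m).image f) = (Finset.range (m + 1)).image g := by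
    apply Finset.eq_of_subset_of_card_le
    · exact Finset.insert_subset hy h
    · rw [Finset.card_insert_of_notMem hy']; omega
  have hsk : SM m (fun i => if i < p then g i else g (i + 1)) := by
    intro i j hij hj
    dsimp only
    split_ifs with a b b
    · exact hg _ _ hij (by omega)
    · exact hg _ _ (by omega) (by omega)
    · omega
    · exact hg _ _ (by omega) (by omega)
  have key := SM_unique hsk hf (by
    apply Finset.eq_of_subset_of_card_le
    · intro z hz
      obtain ⟨i, hi, rfl⟩ := Finset.mem_image.mp hz
      have hi := Finset.mem_range.mp hi
      have hz' : (if i < p then g i else g (i + 1)) ∈ insert (g p) ((Finset.range m).image f) := by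
        rw [hins, Finset.mem_image]
        split_ifs
        · exact ⟨i, Finset.mem_range.mpr (by omega), rfl⟩
        · exact ⟨i + 1, Finset.mem_range.mpr (by omega), rfl⟩
      rcases Finset.mem_insert.mp hz' with h' | h'
      · exfalso
        split_ifs at h' with a
        · have := hg _ _ a hp'; omega
        · have := hg p (i + 1) (by omega) (by omega); omega
      · exact h'
    · rw [SM_card hsk, hc1])
  refine ⟨p, by omega, hy', hins.symm, ?_, ?_⟩
  · intro i hi
    rw [← key i (by omega), if_pos hi]
  · intro i hi hi'
    rw [← key i (by omega), if_neg (by omega)]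

lemma sol_iff (k n : ℕ) (hk : 2 ≤ k) (f : ℕ → ℕ) (hf : SM (2 * k) f)
    (h0 : 1 ≤ f 0) (hfn : f (2 * k - 1) ≤ n) (G : Finset ℕ) :
    (GammaFacet n k (fun t => if t.val = k - 1 then 3 else 2) G ∧
      (Finset.range (2 * k)).image f ⊆ G) ↔
    ∃ x, x ∉ (Finset.range (2 * k)).image f ∧ Sol k n f x ∧
      G = insert x ((Finset.range (2 * k)).image f) := by
  rw [gamma_iff k n hk]
  constructor
  · rintro ⟨⟨g, ⟨hg, g0, gn, gp, gl⟩, rfl⟩, hsub⟩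
    obtain ⟨p, hp, hx, hG, hlt, hge⟩ := skip_lemma hf hg hsub
    refine ⟨g p, hx, ?_, hG⟩
    have hgl : p < 2 * k - 1 → f (2 * k - 1) = f (2 * k - 2) + 1 := by
      intro h
      rw [hge _ (by omega) (by omega), hge (2 * k - 2) (by omega) (by omega)]
      have a1 : 2 * k - 1 + 1 = 2 * k := by omega
      have a2 : 2 * k - 2 + 1 = 2 * k - 1 := by omega
      rw [a1, a2, gl]
    have hE : ∀ q, 2 * q ≤ p → q ≤ k → Ev f q := by
      intro q hq hqk j hj
      rw [hlt _ (by omega), hlt _ (by omega)]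
      exact gp j (by omega)
    have hO : ∀ q, p ≤ 2 * q + 1 → Od f q k := by
      intro q hq j h1 h2
      rw [hge _ (by omega) (by omega), hge (2 * j - 1) (by omega) (by omega)]
      have a1 : 2 * j - 1 + 1 = 2 * j := by omega
      rw [a1]
      exact gp j h2
    have g0p : g 0 ≤ g p := by
      rcases Nat.eq_zero_or_pos p with rfl | h
      · exact le_rfl
      · exact (hg 0 p h (by omega)).le
    by_cases hpk : p = 2 * k
    · right; left
      subst hpk
      refine ⟨?_, gn, hE k le_rfl le_rfl⟩
      rw [hlt _ (by omega), gl]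
    rcases Nat.even_or_odd' p with ⟨q, rfl | rfl⟩
    · left
      refine ⟨q, by omega, ?_, ?_, by omega, hE q le_rfl (by omega), hO q (by omega),
        hgl (by omega)⟩
      · rw [hge _ le_rfl (by omega), gp q (by omega)]
      · intro h
        rw [hlt _ (by omega)]
        exact hg _ _ (by omega) (by omega)
    · right; right
      refine ⟨q, by omega, ?_, ?_, hE q (by omega) (by omega), hO q le_rfl, ?_⟩
      · rw [hlt _ (by omega), gp q (by omega)]
      · rw [hge _ (by omega) (by omega)]
        exact hg _ _ (by omega) (by omega)
      · by_cases h : q + 1 < k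
        · left; exact ⟨h, hgl (by omega)⟩
        · right
          refine ⟨by omega, ?_⟩
          have a1 : 2 * k - 1 = 2 * q + 1 := by omega
          have a2 : 2 * q + 1 + 1 = 2 * k := by omega
          rw [a1, hge _ le_rfl (by omega), a2, gl, a1]
  · rintro ⟨x, hx, hs, rfl⟩
    refine ⟨?_, Finset.subset_insert _ _⟩
    have hle : ∀ i j, i ≤ j → j < 2 * k → f i ≤ f j := by
      intro i j hij hj
      rcases hij.eq_or_lt with rfl | h
      · exact le_rfl
      · exact (hf i j h hj).le
    have e1 : ∀ q, 2 * (q + 1) - 1 = 2 * q + 1 := by intro q; omega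
    rcases hs with ⟨q, hq, x1, x2, x3, he, ho, hl⟩ | ⟨x1, x2, he⟩ | ⟨q, hq, x1, x2, he, ho, hl⟩
    · obtain ⟨a, b, -⟩ := ins_lemma hf (2 * q) x (by omega) (fun h => x2 (by omega))
        (fun h => by omega)
      refine ⟨ins f (2 * q) x, ⟨a, ?_, ?_, ?_, ?_⟩, b.symm⟩
      · by_cases h : 0 < 2 * q
        · rw [ins_lt h]; exact h0
        · rw [ins_eq (by omega)]; exact x3
      · rw [ins_gt (by omega)]; exact hfn
      · intro j hj
        rcases lt_trichotomy j q with h | h | h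
        · rw [ins_lt (by omega), ins_lt (by omega)]; exact he j h
        · subst h
          rw [ins_eq rfl, ins_gt (by omega)]; simp; omega
        · rw [ins_gt (by omega), ins_gt (by omega)]; exact ho j h hj
      · rw [ins_gt (by omega)]
        by_cases h : 2 * k - 1 = 2 * q
        · omega
        · rw [ins_gt (by omega)]; exact hl
    · obtain ⟨a, b, -⟩ := ins_lemma hf (2 * k) x le_rfl (fun h => by omega) (fun h => by omega)
      refine ⟨ins f (2 * k) x, ⟨a, ?_, ?_, ?_, ?_⟩, b.symm⟩
      · rw [ins_lt (by omega)]; exact h0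
      · rw [ins_eq rfl]; exact x2
      · intro j hj
        rw [ins_lt (by omega), ins_lt (by omega)]; exact he j hj
      · rw [ins_eq rfl, ins_lt (by omega)]; exact x1
    · obtain ⟨a, b, -⟩ := ins_lemma hf (2 * q + 1) x (by omega)
        (fun h => by simp; omega) (fun h => by omega)
      refine ⟨ins f (2 * q + 1) x, ⟨a, ?_, ?_, ?_, ?_⟩, b.symm⟩
      · rw [ins_lt (by omega)]; exact h0
      · rw [ins_gt (by omega)]; exact hfn
      · intro j hj
        rcases lt_trichotomy j q with h | h | h
        · rw [ins_lt (by omega), ins_lt (by omega)]; exact he j h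
        · subst h
          rw [ins_eq rfl, ins_lt (by omega)]; exact x1
        · rw [ins_gt (by omega), ins_gt (by omega)]; exact ho j h hj
      · rw [ins_gt (by omega)]
        rcases hl with ⟨h, hl⟩ | ⟨h, hl⟩
        · rw [ins_gt (by omega)]; exact hl
        · rw [ins_eq (by omega)]; exact hl

/-- pairs followed by two elements. -/
lemma form_two (k : ℕ) (hk : 2 ≤ k) (f : ℕ → ℕ) (hf : SM (2 * k) f) (h0 : 1 ≤ f 0)
    (u v c : ℕ) (huv : u < v) (hc : c + 1 = u ∨ (u = 0 ∧ c = 0)) :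
    (∃ τ, BFacet 1 c (k - 1) τ ∧ (Finset.range (2 * k)).image f = τ ∪ {u, v}) ↔
    (Ev f (k - 1) ∧ f (2 * k - 2) = u ∧ f (2 * k - 1) = v) := by
  have e2 : 2 * (k - 1) = 2 * k - 2 := by omega
  constructor
  · rintro ⟨τ, hτ, hF⟩
    obtain ⟨h, h1, h2, h3, rfl⟩ := (bfacet_iff _ _ _ _).mp hτ
    let f' : ℕ → ℕ := fun i => if i < 2 * k - 2 then h i else if i = 2 * k - 2 then u else v
    have f1 : ∀ i < 2 * k - 2, f' i = h i := fun i hi => by simp [f', hi]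
    have f2 : f' (2 * k - 2) = u := by simp [f']
    have f3 : f' (2 * k - 1) = v := by
      simp only [f']; rw [if_neg (by omega), if_neg (by omega)]
    have hs : SM (2 * k) f' := by
      apply SM_of_step
      intro i hi
      by_cases a : i + 1 < 2 * k - 2
      · rw [f1 _ a, f1 _ (by omega)]; exact h1 _ _ (by omega) (by omega)
      by_cases b : i + 1 = 2 * k - 2
      · rw [b, f2, f1 _ (by omega)]
        have := h2 i (by omega)
        omega
      · have : i = 2 * k - 2 := by omega
        have a2 : i + 1 = 2 * k - 1 := by omega
        rw [a2, this, f2, f3]; exact huv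
    have key := SM_unique hf hs (by
      rw [hF]
      ext y
      simp only [Finset.mem_union, Finset.mem_insert, Finset.mem_singleton, Finset.mem_image,
        Finset.mem_range]
      constructor
      · rintro (⟨i, hi, rfl⟩ | rfl | rfl)
        · exact ⟨i, by omega, f1 i (by omega)⟩
        · exact ⟨_, by omega, f2⟩
        · exact ⟨_, by omega, f3⟩
      · rintro ⟨i, hi, rfl⟩
        by_cases a : i < 2 * k - 2
        · left; exact ⟨i, by omega, (f1 i a).symm⟩
        by_cases b : i = 2 * k - 2
        · right; left; rw [b, f2]
        · have a2 : i = 2 * k - 1 := by omega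
          right; right; rw [a2, f3])
    refine ⟨?_, ?_, ?_⟩
    · intro j hj
      rw [key _ (by omega), key _ (by omega), f1 _ (by omega), f1 _ (by omega)]
      exact h3 j hj
    · rw [key _ (by omega), f2]
    · rw [key _ (by omega), f3]
  · rintro ⟨he, hu, hv⟩
    refine ⟨(Finset.range (2 * (k - 1))).image f, (bfacet_iff _ _ _ _).mpr
      ⟨f, fun i j hij hj => hf i j hij (by omega), ?_, he, rfl⟩, ?_⟩
    · intro i hi
      have a1 := hf i (2 * k - 2) (by omega) (by omega)
      refine ⟨?_, by omega⟩
      rcases Nat.eq_zero_or_pos i with rfl | h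
      · exact h0
      · have := hf 0 i h (by omega); omega
    · have e : 2 * k = 2 * (k - 1) + 1 + 1 := by omega
      have e' : 2 * (k - 1) + 1 = 2 * k - 1 := by omega
      conv_lhs => rw [e]
      rw [Finset.range_add_one, Finset.range_add_one, Finset.image_insert, Finset.image_insert,
        e', e2, hu, hv]
      ext y
      simp only [Finset.mem_union, Finset.mem_insert, Finset.mem_singleton]
      tauto

lemma form_three (k : ℕ) (hk : 2 ≤ k) (f : ℕ → ℕ) (hf : SM (2 * k) f)
    (u : ℕ) (hu2 : 2 ≤ u) :
    (∃ τ, BFacet 2 (u - 1) (k - 2) τ ∧ (Finset.range (2 * k)).image f = τ ∪ {1, u, u + 1, u + 2}) ↔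
    (f 0 = 1 ∧ Od f 0 (k - 1) ∧ f (2 * k - 3) = u ∧ f (2 * k - 2) = u + 1 ∧
      f (2 * k - 1) = u + 2) := by
  constructor
  · rintro ⟨τ, hτ, hF⟩
    obtain ⟨h, h1, h2, h3, rfl⟩ := (bfacet_iff _ _ _ _).mp hτ
    let f' : ℕ → ℕ := fun i => if i = 0 then 1 else if i < 2 * k - 3 then h (i - 1)
      else u + (i - (2 * k - 3))
    have f0 : f' 0 = 1 := by simp [f']
    have f1 : ∀ i, 0 < i → i < 2 * k - 3 → f' i = h (i - 1) := fun i hi hi' => by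
      simp only [f']; rw [if_neg (by omega), if_pos hi']
    have f2 : ∀ i, 2 * k - 3 ≤ i → f' i = u + (i - (2 * k - 3)) := fun i hi => by
      simp only [f']; rw [if_neg (by omega), if_neg (by omega)]
    have hs : SM (2 * k) f' := by
      apply SM_of_step
      intro i hi
      by_cases a : i + 1 < 2 * k - 3
      · rw [f1 _ (by omega) a]
        by_cases b : i = 0
        · subst b
          rw [f0]
          have := h2 0 (by omega)
          simp; omega
        · rw [f1 _ (by omega) (by omega)]; exact h1 _ _ (by omega) (by omega)
      · rw [f2 (i + 1) (by omega)]
        by_cases b : i = 0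
        · subst b; rw [f0]; omega
        by_cases c : i < 2 * k - 3
        · rw [f1 _ (by omega) c]
          have := h2 (i - 1) (by omega)
          omega
        · rw [f2 _ (by omega)]; omega
    have key := SM_unique hf hs (by
      rw [hF]
      ext y
      simp only [Finset.mem_union, Finset.mem_insert, Finset.mem_singleton, Finset.mem_image,
        Finset.mem_range]
      constructor
      · rintro (⟨i, hi, rfl⟩ | rfl | rfl | rfl | rfl)
        · exact ⟨i + 1, by omega, f1 _ (by omega) (by omega)⟩
        · exact ⟨_, by omega, f0⟩
        · exact ⟨2 * k - 3, by omega, by rw [f2 _ (by omega)]; omega⟩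
        · exact ⟨2 * k - 2, by omega, by rw [f2 _ (by omega)]; omega⟩
        · exact ⟨2 * k - 1, by omega, by rw [f2 _ (by omega)]; omega⟩
      · rintro ⟨i, hi, rfl⟩
        by_cases b : i = 0
        · subst b; right; left; exact f0
        by_cases a : i < 2 * k - 3
        · left; exact ⟨i - 1, by omega, (f1 i (by omega) a).symm⟩
        · right; right; rw [f2 _ (by omega)]; omega)
    refine ⟨?_, ?_, ?_, ?_, ?_⟩
    · rw [key _ (by omega), f0]
    · intro j hj hj'
      rw [key _ (by omega), key _ (by omega), f1 _ (by omega) (by omega),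
        f1 _ (by omega) (by omega)]
      have := h3 (j - 1) (by omega)
      have a1 : 2 * (j - 1) + 1 = 2 * j - 1 := by omega
      have a2 : 2 * (j - 1) = 2 * j - 1 - 1 := by omega
      rw [a1, a2] at this
      exact this
    · rw [key _ (by omega), f2 _ (by omega)]; omega
    · rw [key _ (by omega), f2 _ (by omega)]; omega
    · rw [key _ (by omega), f2 _ (by omega)]; omega
  · rintro ⟨hz, ho, hu, hv, hw⟩
    refine ⟨(Finset.range (2 * (k - 2))).image (fun i => f (i + 1)), (bfacet_iff _ _ _ _).mpr
      ⟨fun i => f (i + 1), fun i j hij hj => hf _ _ (by omega) (by omega), ?_, ?_, rfl⟩, ?_⟩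
    · intro i hi
      have a1 := hf (i + 1) (2 * k - 3) (by omega) (by omega)
      have a2 := hf 0 (i + 1) (by omega) (by omega)
      dsimp only
      omega
    · intro j hj
      exact ho (j + 1) (by omega) (by omega)
    · ext y
      simp only [Finset.mem_union, Finset.mem_insert, Finset.mem_singleton, Finset.mem_image,
        Finset.mem_range]
      constructor
      · rintro ⟨i, hi, rfl⟩
        by_cases b : i = 0
        · subst b; right; left; exact hz
        by_cases a : i < 2 * k - 3
        · left; exact ⟨i - 1, by omega, by congr 1; omega⟩
        · right; right
          have : i = 2 * k - 3 ∨ i = 2 * k - 2 ∨ i = 2 * k - 1 := by omega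
          rcases this with rfl | rfl | rfl <;> omega
      · rintro (⟨i, hi, rfl⟩ | rfl | rfl | rfl | rfl)
        · exact ⟨i + 1, by omega, rfl⟩
        · exact ⟨_, by omega, hz⟩
        · exact ⟨_, by omega, hu⟩
        · exact ⟨_, by omega, hv⟩
        · exact ⟨_, by omega, hw⟩

theorem stmt_11 (k n : ℕ) (hk : 2 ≤ k) (hn : 2 * k + 1 ≤ n)
    (F : Finset ℕ) (hF : F ⊆ Finset.Icc 1 n) (hcard : F.card = 2 * k) :
    (∃! G : Finset ℕ,
        GammaFacet n k (fun t => if t.val = k - 1 then 3 else 2) G ∧ F ⊆ G) ↔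
      ((∃ i : ℕ, i + 2 ≤ n ∧
          ∃ τ : Finset ℕ, BFacet 1 (i - 1) (k - 1) τ ∧ F = τ ∪ {i, i + 2}) ∨
       (∃ τ : Finset ℕ, BFacet 1 (n - 2) (k - 1) τ ∧ F = τ ∪ {n - 1, n}) ∨
       (∃ i : ℕ, 2 ≤ i ∧ i ≤ n - 2 ∧
          ∃ τ : Finset ℕ, BFacet 2 (i - 1) (k - 2) τ ∧
            F = τ ∪ {1, i, i + 1, i + 2})) := by
  obtain ⟨f, hf, rfl⟩ := SM_exists hcard
  have hb : ∀ i < 2 * k, 1 ≤ f i ∧ f i ≤ n := fun i hi => by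
    have := hF (Finset.mem_image_of_mem f (Finset.mem_range.mpr hi))
    simpa using this
  have h0 := (hb 0 (by omega)).1
  have hfn := (hb (2 * k - 1) (by omega)).2
  have e1 : 2 * (k - 1) + 1 = 2 * k - 1 := by omega
  have e2 : 2 * (k - 1) = 2 * k - 2 := by omega
  have e4 : 2 * (k - 1) - 1 = 2 * k - 3 := by omega
  have hcore := core_s11 k n hk hn f hf h0 hfn
  have hL : (∃! G : Finset ℕ, GammaFacet n k (fun t => if t.val = k - 1 then 3 else 2) G ∧
      (Finset.range (2 * k)).image f ⊆ G) ↔ ∃! x, Sol k n f x := by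
    have hnm : ∀ x, Sol k n f x → x ∉ (Finset.range (2 * k)).image f := by
      intro x hs
      rcases hs with ⟨q, hq, x1, x2, x3, -⟩ | ⟨x1, x2, he⟩ | ⟨q, hq, x1, x2, -⟩
      · exact (ins_lemma hf (2 * q) x (by omega) (fun h => x2 (by omega)) (fun h => by omega)).2.2
      · exact (ins_lemma hf (2 * k) x le_rfl (fun h => by omega) (fun h => by omega)).2.2
      · exact (ins_lemma hf (2 * q + 1) x (by omega) (fun h => by simp; omega)
          (fun h => by omega)).2.2
    constructor
    · rintro ⟨G, hG, hu⟩
      obtain ⟨x, hx, hs, rfl⟩ := (sol_iff k n hk f hf h0 hfn G).mp hG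
      refine ⟨x, hs, fun y hy => ?_⟩
      have := hu _ ((sol_iff k n hk f hf h0 hfn _).mpr ⟨y, hnm y hy, hy, rfl⟩)
      have hm : y ∈ insert x ((Finset.range (2 * k)).image f) := by
        rw [← this]; exact Finset.mem_insert_self _ _
      rcases Finset.mem_insert.mp hm with h | h
      · exact h
      · exact absurd h (hnm y hy)
    · rintro ⟨x, hs, hu⟩
      refine ⟨_, (sol_iff k n hk f hf h0 hfn _).mpr ⟨x, hnm x hs, hs, rfl⟩, ?_⟩
      intro G hG
      obtain ⟨y, hy, hs', rfl⟩ := (sol_iff k n hk f hf h0 hfn G).mp hG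
      rw [hu y hs']
  rw [hL, hcore]
  have q1 : C1 k f ↔ ∃ i : ℕ, i + 2 ≤ n ∧ ∃ τ : Finset ℕ, BFacet 1 (i - 1) (k - 1) τ ∧
      (Finset.range (2 * k)).image f = τ ∪ {i, i + 2} := by
    constructor
    · rintro ⟨a, b⟩
      exact ⟨f (2 * k - 2), by omega,
        (form_two k hk f hf h0 _ _ _ (by omega) (by omega)).mpr ⟨a, rfl, b⟩⟩
    · rintro ⟨i, hi, h⟩
      obtain ⟨a, b, c⟩ := (form_two k hk f hf h0 _ _ _ (by omega) (by omega)).mp h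
      exact ⟨a, by omega⟩
  have q2 : C2 k n f ↔ ∃ τ : Finset ℕ, BFacet 1 (n - 2) (k - 1) τ ∧
      (Finset.range (2 * k)).image f = τ ∪ {n - 1, n} := by
    rw [form_two k hk f hf h0 (n - 1) n (n - 2) (by omega) (by omega)]
    constructor
    · rintro ⟨a, b⟩
      have := a (k - 1) (by omega)
      rw [e1, e2] at this
      exact ⟨fun j hj => a j (by omega), by omega, b⟩
    · rintro ⟨a, b, c⟩
      refine ⟨fun j hj => ?_, c⟩
      by_cases h : j < k - 1
      · exact a j h
      · have : j = k - 1 := by omega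
        subst this
        rw [e1, e2]; omega
  have q3 : C3 k f ↔ ∃ i : ℕ, 2 ≤ i ∧ i ≤ n - 2 ∧
          ∃ τ : Finset ℕ, BFacet 2 (i - 1) (k - 2) τ ∧
            (Finset.range (2 * k)).image f = τ ∪ {1, i, i + 1, i + 2} := by
    constructor
    · rintro ⟨a, b, c⟩
      have h1 := b (k - 1) (by omega) (by omega)
      rw [e4, e2] at h1
      have h2 := hf 0 (2 * k - 3) (by omega) (by omega)
      exact ⟨f (2 * k - 3), by omega, by omega, (form_three k hk f hf _ (by omega)).mpr
        ⟨a, fun j hj hj' => b j hj (by omega), rfl, by omega, by omega⟩⟩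
    · rintro ⟨i, hi, hi', h⟩
      obtain ⟨a, b, c, d, e⟩ := (form_three k hk f hf _ hi).mp h
      refine ⟨a, fun j hj hj' => ?_, by omega⟩
      by_cases h : j < k - 1
      · exact b j hj h
      · have : j = k - 1 := by omega
        subst this
        rw [e4, e2]; omega
  rw [q1, q2, q3]
end
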